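/- arXiv:1103.6102 — 4 statements merged into one kernel-verified Lean document; each statement's English description precedes it below -/
import Mathlib

section
/- Let I > 1 be an integer and let U ⊆ ℝ^{N×n} be open. For 1 ≤ i ≤ I, let ξ_i ∈ ℝ^{N×n} and λ_i > 0 satisfy Σ_{i=1}^I λ_i = 1 and assume (λ_i, ξ_i)_{1≤i≤I} satisfy (H_I(U)). Set ξ = Σ_{i=1}^I λ_i ξ_i and let u_ξ be an affine map with Du_ξ ≡ ξ. Then for every ε > 0 and every bounded open set Ω ⊂ ℝ^n there exist a piecewise affine map u_ε ∈ u_ξ + W_0^{1,∞}(Ω; ℝ^N) and pairwise disjoint open sets Ω_ε^i ⊂ Ω, i = 1,…,I, such that Du_ε(x) ∈ U ∪ B_ε(ξ) a.e. in Ω, Du_ε(x) = ξ_i a.e. in Ω_ε^i for each i, ‖u_ε − u_ξ‖_{L^∞} ≤ ε, and |meas(Ω_ε^i) − λ_i meas(Ω)| ≤ ε for each i = 1,…,I. -/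
open MeasureTheory Filter

attribute [local instance] Classical.propDecidable
attribute [local instance] Matrix.frobeniusNormedAddCommGroup Matrix.frobeniusNormedSpace

noncomputable section

/-- The space of real `N × n` matrices. -/
abbrev Mat (N n : ℕ) : Type := Matrix (Fin N) (Fin n) ℝ

/-- A function `f : ℝ^{N×n} → ℝ` is rank one convex. -/
def RankOneConvexFun {N n : ℕ} (f : Mat N n → ℝ) : Prop :=
  ∀ lam ∈ Set.Icc (0:ℝ) 1, ∀ ξ η : Mat N n, (ξ - η).rank = 1 →
    f (lam • ξ + (1 - lam) • η) ≤ lam * f ξ + (1 - lam) * f η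

/-- The hull `Rco_f E`. -/
def RcoF {N n : ℕ} (E : Set (Mat N n)) : Set (Mat N n) :=
  {ξ | ∀ f : Mat N n → ℝ, RankOneConvexFun f → (∀ η ∈ E, f η ≤ 0) → f ξ ≤ 0}

/-- A set of matrices is rank one convex. -/
def RankOneConvexSet {N n : ℕ} (S : Set (Mat N n)) : Prop :=
  ∀ A ∈ S, ∀ B ∈ S, (A - B).rank = 1 → ∀ t ∈ Set.Icc (0:ℝ) 1, t • A + (1 - t) • B ∈ S

/-- The property `(H_I(U))`, phrased on lists of (weight, matrix) pairs. -/
inductive HIProp {N n : ℕ} (U : Set (Mat N n)) : List (ℝ × Mat N n) → Prop where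
  | single (l : ℝ) (ξ : Mat N n) (hξ : ξ ∈ U) : HIProp U [(l, ξ)]
  | pair (l₁ l₂ : ℝ) (ξ₁ ξ₂ : Mat N n) (h₁ : ξ₁ ∈ U) (h₂ : ξ₂ ∈ U)
      (hrank : (ξ₁ - ξ₂).rank = 1) : HIProp U [(l₁, ξ₁), (l₂, ξ₂)]
  | step (L rest : List (ℝ × Mat N n)) (l₁ l₂ : ℝ) (ξ₁ ξ₂ : Mat N n)
      (hperm : L.Perm ((l₁, ξ₁) :: (l₂, ξ₂) :: rest)) (hrest : rest ≠ [])
      (h₁ : ξ₁ ∈ U) (h₂ : ξ₂ ∈ U) (hrank : (ξ₁ - ξ₂).rank = 1)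
      (hrec : HIProp U ((l₁ + l₂, ((l₁ + l₂)⁻¹) • (l₁ • ξ₁ + l₂ • ξ₂)) :: rest)) :
      HIProp U L

/-- The family `(λ_i, ξ_i)_{1 ≤ i ≤ I}` satisfies `(H_I(U))`. -/
def SatisfiesH {N n : ℕ} (U : Set (Mat N n)) (I : ℕ) (l : Fin I → ℝ)
    (ξ : Fin I → Mat N n) : Prop :=
  HIProp U (List.ofFn fun i => (l i, ξ i))

/-- The gradient of a map `u : ℝ^n → ℝ^N`, as an `N × n` matrix. -/
def matGrad {N n : ℕ} (u : (Fin n → ℝ) → Fin N → ℝ) (x : Fin n → ℝ) : Mat N n :=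
  LinearMap.toMatrix' (fderiv ℝ u x).toLinearMap

/-- `u` is affine on the set `s`. -/
def AffineOn {N n : ℕ} (u : (Fin n → ℝ) → Fin N → ℝ) (s : Set (Fin n → ℝ)) : Prop :=
  ∃ (A : Mat N n) (b : Fin N → ℝ), ∀ x ∈ s, u x = A.mulVec x + b

/-- `u` is piecewise affine on the open set `Ω`. -/
def PiecewiseAffineOn {N n : ℕ} (u : (Fin n → ℝ) → Fin N → ℝ)
    (Ω : Set (Fin n → ℝ)) : Prop :=
  ContinuousOn u (closure Ω) ∧
  ∃ P : ℕ → Set (Fin n → ℝ),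
    (∀ k, IsOpen (P k)) ∧ (∀ k, P k ⊆ Ω) ∧
    (∀ k l, k ≠ l → Disjoint (P k) (P l)) ∧
    volume (Ω \ ⋃ k, P k) = 0 ∧ ∀ k, AffineOn u (P k)

/-- `u` is piecewise `C¹` on the open set `Ω`. -/
def PiecewiseC1On {N n : ℕ} (u : (Fin n → ℝ) → Fin N → ℝ)
    (Ω : Set (Fin n → ℝ)) : Prop :=
  ContinuousOn u (closure Ω) ∧
  ∃ P : ℕ → Set (Fin n → ℝ),
    (∀ k, IsOpen (P k)) ∧ (∀ k, P k ⊆ Ω) ∧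
    (∀ k l, k ≠ l → Disjoint (P k) (P l)) ∧
    volume (Ω \ ⋃ k, P k) = 0 ∧ ∀ k, ContDiffOn ℝ 1 u (P k)

/-- `u ∈ φ + W₀^{1,∞}(Ω; ℝ^N)`: `u` is Lipschitz on `closure Ω` and agrees with `φ`
on the boundary of `Ω`. -/
def MemW01inf {N n : ℕ} (Ω : Set (Fin n → ℝ)) (φ u : (Fin n → ℝ) → Fin N → ℝ) : Prop :=
  (∃ C : NNReal, LipschitzOnWith C u (closure Ω)) ∧ ∀ x ∈ frontier Ω, u x = φ x

/-- `K` has the relaxation property with respect to `E`. -/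
def HasRelaxationProperty {N n : ℕ} (K E : Set (Mat N n)) : Prop :=
  ∀ Ω : Set (Fin n → ℝ), IsOpen Ω → Bornology.IsBounded Ω →
    ∀ ξ ∈ K, ∀ b : Fin N → ℝ,
      ∃ u : ℕ → (Fin n → ℝ) → Fin N → ℝ,
        (∀ ν, PiecewiseAffineOn (u ν) Ω) ∧
        (∀ ν, MemW01inf Ω (fun x => ξ.mulVec x + b) (u ν)) ∧
        (∀ ν, ∀ᵐ x ∂(volume.restrict Ω), matGrad (u ν) x ∈ E ∪ K) ∧
        (∃ C : NNReal, ∀ ν, LipschitzOnWith C (u ν) (closure Ω)) ∧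
        TendstoUniformlyOn u (fun x => ξ.mulVec x + b) atTop (closure Ω) ∧
        Tendsto (fun ν => ∫ x in Ω, Metric.infDist (matGrad (u ν) x) E) atTop (nhds 0)

/-- The singular values of a square matrix, in nondecreasing order:
the square roots of the eigenvalues of `ξ ξᵀ`, sorted. -/
def singularValues {n : ℕ} (ξ : Matrix (Fin n) (Fin n) ℝ) (i : Fin n) : ℝ :=
  Real.sqrt ((Matrix.isHermitian_mul_conjTranspose_self ξ).eigenvalues
    (Tuple.sort (Matrix.isHermitian_mul_conjTranspose_self ξ).eigenvalues i))

end

section Helpers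
open Set Topology Matrix

/-- `f` is locally affine at `x` with gradient `p`. -/
def SLA {n : ℕ} (f : (Fin n → ℝ) → ℝ) (p x : Fin n → ℝ) : Prop :=
  ∃ b : ℝ, ∀ᶠ y in 𝓝 x, f y = p ⬝ᵥ y + b

/-- countably piecewise affine scalar function with gradients in `S`. -/
def SPA {n : ℕ} (S : Set (Fin n → ℝ)) (f : (Fin n → ℝ) → ℝ) : Prop :=
  (∃ C : NNReal, LipschitzWith C f) ∧
  ∃ F : Set ((Fin n → ℝ) × ℝ), F.Countable ∧ (∀ α ∈ F, α.1 ∈ S) ∧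
    ∀ᵐ x, ∃ α ∈ F, ∀ᶠ y in 𝓝 x, f y = α.1 ⬝ᵥ y + α.2

theorem lip_dot {n : ℕ} (p : Fin n → ℝ) (b : ℝ) :
    ∃ C : NNReal, LipschitzWith C (fun x : Fin n → ℝ => p ⬝ᵥ x + b) := by
  let L : (Fin n → ℝ) →ₗ[ℝ] ℝ := dotProductBilin ℝ ℝ p
  have h := (LinearMap.toContinuousLinearMap L).lipschitz
  exact ⟨_, h.add (LipschitzWith.const b)⟩

theorem cont_dot {n : ℕ} (p : Fin n → ℝ) (b : ℝ) :
    Continuous (fun x : Fin n → ℝ => p ⬝ᵥ x + b) := (lip_dot p b).choose_spec.continuous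

theorem null_hyper {n : ℕ} (q : Fin n → ℝ) (hq : q ≠ 0) (c : ℝ) :
    volume {x : Fin n → ℝ | q ⬝ᵥ x = c} = 0 := by
  let A : AffineSubspace ℝ (Fin n → ℝ) :=
    { carrier := {x | q ⬝ᵥ x = c}
      smul_vsub_vadd_mem' := by
        intro t x y z hx hy hz
        simp only [mem_ofPred_eq] at *
        simp [dotProduct_add, dotProduct_smul, dotProduct_sub, hx, hy, hz] }
  have := Measure.addHaar_affineSubspace volume A (fun h => by
    have h0 : (0 : Fin n → ℝ) ∈ A := h ▸ trivial
    have h1 : q ∈ A := h ▸ trivial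
    change q ⬝ᵥ 0 = c at h0
    change q ⬝ᵥ q = c at h1
    rw [dotProduct_zero] at h0
    rw [← h0, dotProduct_self_eq_zero] at h1
    exact hq h1)
  exact this

theorem null_pair {n : ℕ} (α β : (Fin n → ℝ) × ℝ) (h : α ≠ β) :
    ∀ᵐ x : Fin n → ℝ, α.1 ⬝ᵥ x + α.2 ≠ β.1 ⬝ᵥ x + β.2 := by
  by_cases hp : α.1 = β.1
  · have : α.2 ≠ β.2 := fun h2 => h (Prod.ext hp h2)
    refine Eventually.of_forall fun x hx => this ?_
    rw [hp] at hx; linarith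
  · have := null_hyper (α.1 - β.1) (sub_ne_zero.2 hp) (β.2 - α.2)
    rw [ae_iff]
    refine measure_mono_null ?_ this
    intro x hx
    simp only [ne_eq, not_not, mem_ofPred_eq] at hx ⊢
    rw [sub_dotProduct]; linarith

theorem SPA.affine {n : ℕ} {S : Set (Fin n → ℝ)} (p : Fin n → ℝ) (b : ℝ) (hp : p ∈ S) :
    SPA S (fun x => p ⬝ᵥ x + b) :=
  ⟨lip_dot p b, {(p, b)}, countable_singleton _, by simpa using hp,
    Eventually.of_forall fun x => ⟨(p,b), rfl, Eventually.of_forall fun y => rfl⟩⟩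

theorem SPA.mono {n : ℕ} {S T : Set (Fin n → ℝ)} {f} (h : SPA S f) (hST : S ⊆ T) : SPA T f := by
  obtain ⟨h1, F, hF, h2, h3⟩ := h
  exact ⟨h1, F, hF, fun α hα => hST (h2 α hα), h3⟩

theorem SPA.sel {n : ℕ} {S : Set (Fin n → ℝ)} {f g} (hf : SPA S f) (hg : SPA S g)
    (k : ℝ → ℝ → ℝ) (h1 : (∀ a b, a < b → k a b = a) ∨ (∀ a b, a < b → k a b = b))
    (h2 : (∀ a b, b < a → k a b = a) ∨ (∀ a b, b < a → k a b = b)) (h3 : ∀ a, k a a = a)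
    (hl : ∃ C : NNReal, LipschitzWith C (fun x => k (f x) (g x))) :
    SPA S (fun x => k (f x) (g x)) := by
  obtain ⟨-, F, hF, hFS, hFx⟩ := hf
  obtain ⟨-, G, hG, hGS, hGx⟩ := hg
  refine ⟨hl, F ∪ G, hF.union hG, ?_, ?_⟩
  · rintro α (h | h)
    exacts [hFS _ h, hGS _ h]
  have key : ∀ᵐ x : Fin n → ℝ, ∀ α ∈ F, ∀ β ∈ G, α ≠ β → α.1 ⬝ᵥ x + α.2 ≠ β.1 ⬝ᵥ x + β.2 := by
    rw [ae_ball_iff hF]; intro α hα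
    rw [ae_ball_iff hG]; intro β hβ
    by_cases h : α = β
    · exact Eventually.of_forall fun x hx => absurd h hx
    · filter_upwards [null_pair α β h] with x hx _ using hx
  filter_upwards [hFx, hGx, key] with x ⟨α, hα, hα'⟩ ⟨β, hβ, hβ'⟩ hk
  by_cases h : α = β
  · subst h
    refine ⟨α, Or.inl hα, ?_⟩
    filter_upwards [hα', hβ'] with y h1 h2
    rw [h1, h2, h3]
  · rcases lt_or_gt_of_ne (hk α hα β hβ h) with hlt | hlt
    · have ev := (cont_dot α.1 α.2).continuousAt.eventually_lt (cont_dot β.1 β.2).continuousAt hlt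
      rcases h1 with h1 | h1
      · refine ⟨α, Or.inl hα, ?_⟩
        filter_upwards [hα', hβ', ev] with y e1 e2 e3
        rw [e1, e2, h1 _ _ e3]
      · refine ⟨β, Or.inr hβ, ?_⟩
        filter_upwards [hα', hβ', ev] with y e1 e2 e3
        rw [e1, e2, h1 _ _ e3]
    · have ev := (cont_dot β.1 β.2).continuousAt.eventually_lt (cont_dot α.1 α.2).continuousAt hlt
      rcases h2 with h1 | h1
      · refine ⟨α, Or.inl hα, ?_⟩
        filter_upwards [hα', hβ', ev] with y e1 e2 e3
        rw [e1, e2, h1 _ _ e3]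
      · refine ⟨β, Or.inr hβ, ?_⟩
        filter_upwards [hα', hβ', ev] with y e1 e2 e3
        rw [e1, e2, h1 _ _ e3]

theorem SPA.min {n : ℕ} {S : Set (Fin n → ℝ)} {f g} (hf : SPA S f) (hg : SPA S g) :
    SPA S (fun x => min (f x) (g x)) := by
  obtain ⟨C, hC⟩ := hf.1
  obtain ⟨D, hD⟩ := hg.1
  exact hf.sel hg _ (Or.inl fun a b h => min_eq_left h.le) (Or.inr fun a b h => min_eq_right h.le)
    min_self ⟨_, hC.min hD⟩

theorem SPA.max {n : ℕ} {S : Set (Fin n → ℝ)} {f g} (hf : SPA S f) (hg : SPA S g) :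
    SPA S (fun x => max (f x) (g x)) := by
  obtain ⟨C, hC⟩ := hf.1
  obtain ⟨D, hD⟩ := hg.1
  exact hf.sel hg _ (Or.inr fun a b h => max_eq_right h.le) (Or.inl fun a b h => max_eq_left h.le)
    max_self ⟨_, hC.max hD⟩

theorem SPA.inf' {n : ℕ} {S : Set (Fin n → ℝ)} {ι : Type*} (s : Finset ι) (hs : s.Nonempty)
    (f : ι → (Fin n → ℝ) → ℝ) (h : ∀ i ∈ s, SPA S (f i)) :
    SPA S (fun x => s.inf' hs (fun i => f i x)) := by
  have := Finset.inf'_induction (p := SPA S) hs f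
    (fun a ha b hb => by simpa using! SPA.min ha hb) h
  have e : (fun x => s.inf' hs (fun i => f i x)) = s.inf' hs f := by
    ext x; simp [Finset.inf'_apply]
  rw [e]; exact this

/-- sawtooth -/
theorem exists_saw {n : ℕ} (ν : Fin n → ℝ) (t : ℝ) (ht : 0 < t) (ht1 : t < 1)
    (O : Set (Fin n → ℝ)) (hO : Bornology.IsBounded O) (δ : ℝ) (hδ : 0 < δ) :
    ∃ s, SPA {(1 - t) • ν, (-t) • ν} s ∧ (∀ x, 0 ≤ s x) ∧ ∀ x ∈ O, s x ≤ δ := by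
  obtain ⟨C, hC⟩ := lip_dot ν 0
  have hb := hC.isBounded_image hO
  obtain ⟨R, hR⟩ := hb.subset_closedBall 0
  obtain ⟨M, hM⟩ := exists_nat_gt (R / δ)
  let s : Finset ℤ := Finset.Icc (-(M:ℤ) - 1) (M + 1)
  have hs : s.Nonempty := ⟨0, by simp [s]; omega⟩
  let g : ℤ → (Fin n → ℝ) → ℝ := fun j x =>
    max (((1 - t) • ν) ⬝ᵥ x + (- (1 - t) * (δ * j))) (((-t) • ν) ⬝ᵥ x + t * (δ * j))
  have hg : ∀ j x, g j x = max ((1 - t) * (ν ⬝ᵥ x - δ * j)) ((-t) * (ν ⬝ᵥ x - δ * j)) := by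
    intro j x
    simp only [g, smul_dotProduct, smul_eq_mul]
    congr 1 <;> ring
  refine ⟨fun x => s.inf' hs (fun j => g j x), ?_, ?_, ?_⟩
  · refine SPA.inf' s hs g fun j _ => SPA.max (SPA.affine _ _ (by simp)) (SPA.affine _ _ (by simp))
  · intro x
    refine Finset.le_inf' _ _ fun j _ => ?_
    rw [hg]
    rcases le_total 0 (ν ⬝ᵥ x - δ * j) with h | h
    · exact le_max_of_le_left (mul_nonneg (by linarith) h)
    · exact le_max_of_le_right (mul_nonneg_of_nonpos_of_nonpos (by linarith) h)
  · intro x hx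
    have hxR : |ν ⬝ᵥ x| ≤ R := by
      have := hR (mem_image_of_mem _ hx)
      simpa using this
    rw [abs_le] at hxR
    have hRM : R < M * δ := by rwa [div_lt_iff₀ hδ] at hM
    let j : ℤ := ⌊ν ⬝ᵥ x / δ⌋
    have e1 : (j:ℝ) * δ ≤ ν ⬝ᵥ x := by
      have := Int.floor_le (ν ⬝ᵥ x / δ); rwa [le_div_iff₀ hδ] at this
    have e2 : ν ⬝ᵥ x < (j + 1) * δ := by
      have := Int.lt_floor_add_one (ν ⬝ᵥ x / δ); rwa [div_lt_iff₀ hδ] at this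
    have hj : j ∈ s := by
      simp only [s, Finset.mem_Icc]
      constructor
      · have : (-(M:ℝ)) < j + 1 := by
          by_contra hcon; push Not at hcon
          nlinarith
        have : (-(M:ℤ)) < j + 1 := by exact_mod_cast this
        omega
      · have : (j:ℝ) < M := by
          by_contra hcon; push Not at hcon
          nlinarith
        have : j < (M:ℤ) := by exact_mod_cast this
        omega
    refine (Finset.inf'_le _ hj).trans ?_
    rw [hg]
    refine max_le ?_ ?_ <;> nlinarith

/-- cutoff -/
theorem exists_cut {n : ℕ} [Nonempty (Fin n)] (O : Set (Fin n → ℝ)) (hO : IsOpen O)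
    (K : Set (Fin n → ℝ)) (hK : IsCompact K) (hKO : K ⊆ O)
    (W : Set (Fin n → ℝ)) (hW : W ∈ 𝓝 (0 : Fin n → ℝ)) :
    ∃ d, SPA W d ∧ (∀ x, 0 ≤ d x) ∧ (∃ K', IsCompact K' ∧ K' ⊆ O ∧ ∀ x ∉ K', d x = 0) ∧
      ∃ θ > 0, ∀ x ∈ K, θ ≤ d x := by
  have h0W : (0 : Fin n → ℝ) ∈ W := mem_of_mem_nhds hW
  have hzero : SPA W (fun _ : Fin n → ℝ => (0:ℝ)) := by
    simpa using! SPA.affine (S := W) 0 0 h0W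
  refine hK.induction_on (p := fun K => ∃ d, SPA W d ∧ (∀ x, 0 ≤ d x) ∧ (∃ K', IsCompact K' ∧ K' ⊆ O ∧ ∀ x ∉ K', d x = 0) ∧
      ∃ θ > 0, ∀ x ∈ K, θ ≤ d x) ?_ ?_ ?_ ?_
  · exact ⟨fun _ => 0, hzero, fun _ => le_rfl, ⟨∅, isCompact_empty, empty_subset _, fun _ _ => rfl⟩,
      1, one_pos, by simp⟩
  · rintro s t hst ⟨d, h1, h2, h3, θ, hθ, h4⟩
    exact ⟨d, h1, h2, h3, θ, hθ, fun x hx => h4 x (hst hx)⟩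
  · rintro s t ⟨d, h1, h2, ⟨L, hL, hLO, hLd⟩, θ, hθ, h4⟩ ⟨d', h1', h2', ⟨L', hL', hLO', hLd'⟩, θ', hθ', h4'⟩
    refine ⟨_, h1.max h1', fun x => le_max_of_le_left (h2 x), ⟨L ∪ L', hL.union hL', union_subset hLO hLO', ?_⟩,
      min θ θ', lt_min hθ hθ', ?_⟩
    · intro x hx
      simp only [mem_union, not_or] at hx
      simp [hLd x hx.1, hLd' x hx.2]
    · rintro x (hx | hx)
      · exact (min_le_left _ _).trans ((h4 x hx).trans (le_max_left _ _))
      · exact (min_le_right _ _).trans ((h4' x hx).trans (le_max_right _ _))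
  · intro c hc
    obtain ⟨r, hr, hrO⟩ := Metric.nhds_basis_closedBall.mem_iff.1 (hO.mem_nhds (hKO hc))
    obtain ⟨ρ, hρ, hρW⟩ := Metric.nhds_basis_closedBall.mem_iff.1 hW
    let e : Fin n → (Fin n → ℝ) := fun i => Pi.single i ρ
    have he : ∀ i, e i ∈ W := fun i => hρW (by
      simp [e, Pi.norm_single, abs_of_pos hρ])
    have he' : ∀ i, - e i ∈ W := fun i => hρW (by
      simp [e, Pi.norm_single, abs_of_pos hρ])
    let f : Fin n → (Fin n → ℝ) → ℝ := fun i x =>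
      min (e i ⬝ᵥ x + ρ * (r - c i)) ((- e i) ⬝ᵥ x + ρ * (r + c i))
    have hf : ∀ i x, f i x = ρ * (r - |x i - c i|) := by
      intro i x
      simp only [f, e, neg_dotProduct, single_dotProduct]
      rcases le_total 0 (x i - c i) with h | h
      · rw [abs_of_nonneg h, min_eq_right (by nlinarith)]; ring
      · rw [abs_of_nonpos h, min_eq_left (by nlinarith)]; ring
    refine ⟨Metric.ball c (r/2), mem_nhdsWithin_of_mem_nhds (Metric.ball_mem_nhds _ (by positivity)),
      _, hzero.max (SPA.inf' Finset.univ Finset.univ_nonempty f fun i _ =>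
        (SPA.affine _ _ (he i)).min (SPA.affine _ _ (he' i))), fun x => le_max_left _ _,
      ⟨Metric.closedBall c r, isCompact_closedBall _ _, hrO, ?_⟩, ρ * (r / 2), by positivity, ?_⟩
    · intro x hx
      have : ∃ i, r < |x i - c i| := by
        by_contra hcon; push Not at hcon
        apply hx
        rw [Metric.mem_closedBall, dist_pi_le_iff hr.le]
        exact hcon
      obtain ⟨i, hi⟩ := this
      apply max_eq_left
      refine (Finset.inf'_le _ (Finset.mem_univ i)).trans ?_
      rw [hf]; nlinarith
    · intro x hx
      refine le_max_of_le_right (Finset.le_inf' _ _ fun i _ => ?_)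
      rw [hf]
      have : |x i - c i| ≤ r / 2 := by
        have h1 := dist_le_pi_dist x c i
        rw [Metric.mem_ball] at hx
        rw [Real.dist_eq] at h1
        linarith
      nlinarith

theorem SLA.lineDeriv {n : ℕ} {f : (Fin n → ℝ) → ℝ} {p x : Fin n → ℝ} (h : SLA f p x)
    (v : Fin n → ℝ) : lineDeriv ℝ f x v = p ⬝ᵥ v := by
  obtain ⟨b, hb⟩ := h
  have h1 : f =ᶠ[𝓝 x] fun y => p ⬝ᵥ y + b := hb
  rw [h1.lineDeriv_eq]
  have : HasLineDerivAt ℝ (fun y : Fin n → ℝ => p ⬝ᵥ y + b) (p ⬝ᵥ v) x v := by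
    unfold HasLineDerivAt
    simp only [dotProduct_add, dotProduct_smul, smul_eq_mul]
    have := (((hasDerivAt_id (0:ℝ)).mul_const (p ⬝ᵥ v)).const_add (p ⬝ᵥ x)).add_const b
    simpa using this
  exact this.lineDeriv

theorem isOpen_SLA {n : ℕ} (f : (Fin n → ℝ) → ℝ) (p : Fin n → ℝ) : IsOpen {x | SLA f p x} := by
  have : {x | SLA f p x} = ⋃ b : ℝ, {x | ∀ᶠ y in 𝓝 x, f y = p ⬝ᵥ y + b} := by
    ext x; simp [SLA]
  rw [this]
  exact isOpen_iUnion fun b => isOpen_setOfPred_eventually_nhds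

end Helpers

section Helpers2
open Set Topology Matrix

theorem exists_phi {n : ℕ} [Nonempty (Fin n)] (ν : Fin n → ℝ) (hν : ν ≠ 0) (t : ℝ) (ht : 0 < t)
    (ht1 : t < 1) (O : Set (Fin n → ℝ)) (hO : IsOpen O) (hOb : Bornology.IsBounded O)
    (W : Set (Fin n → ℝ)) (hW : W ∈ 𝓝 (0 : Fin n → ℝ)) (δ : ℝ) (hδ : 0 < δ) :
    ∃ φ : (Fin n → ℝ) → ℝ, SPA ({(1 - t) • ν, (-t) • ν} ∪ W) φ ∧ (∀ x, |φ x| ≤ δ) ∧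
      (∃ K', IsCompact K' ∧ K' ⊆ O ∧ ∀ x ∉ K', φ x = 0) ∧
      ∃ O₁ O₂ : Set (Fin n → ℝ), IsOpen O₁ ∧ IsOpen O₂ ∧ O₁ ⊆ O ∧ O₂ ⊆ O ∧ Disjoint O₁ O₂ ∧
        (∀ x ∈ O₁, SLA φ ((1 - t) • ν) x) ∧ (∀ x ∈ O₂, SLA φ ((-t) • ν) x) ∧
        |(volume O₁).toReal - t * (volume O).toReal| ≤ δ ∧
        |(volume O₂).toReal - (1 - t) * (volume O).toReal| ≤ δ := by
  have hOfin : volume O ≠ ⊤ := hOb.measure_lt_top.ne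
  have hνν : 0 < ν ⬝ᵥ ν := by
    have h1 : 0 ≤ ν ⬝ᵥ ν := Finset.sum_nonneg fun i _ => mul_self_nonneg _
    exact lt_of_le_of_ne h1 fun h => hν (dotProduct_self_eq_zero.1 h.symm)
  let v : Fin n → ℝ := (ν ⬝ᵥ ν)⁻¹ • ν
  have hv : ν ⬝ᵥ v = 1 := by
    simp only [v, dotProduct_smul, smul_eq_mul]; field_simp
  let W' : Set (Fin n → ℝ) := W ∩ {p | |p ⬝ᵥ v| < 1}
  have hW' : W' ∈ 𝓝 (0 : Fin n → ℝ) := by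
    refine inter_mem hW ?_
    have hc : Continuous fun p : Fin n → ℝ => |p ⬝ᵥ v| := by
      have := cont_dot v 0
      simp only [add_zero] at this
      simp_rw [dotProduct_comm _ v]
      exact this.abs
    exact hc.continuousAt.eventually_lt continuousAt_const (by simp)
  obtain ⟨K, hKO, hK, hKm⟩ : ∃ K ⊆ O, IsCompact K ∧ volume O < volume K + ENNReal.ofReal (δ / 2) :=
    hO.measurableSet.exists_isCompact_lt_add hOfin (by simpa using hδ)
  obtain ⟨d, hd, hd0, ⟨K', hK', hK'O, hdK'⟩, θ, hθ, hdθ⟩ := exists_cut O hO K hK hKO W' hW'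
  obtain ⟨s, hs, hs0, hsO⟩ := exists_saw ν t ht ht1 O hOb (min (δ) (θ / 2)) (by positivity)
  let φ : (Fin n → ℝ) → ℝ := fun x => min (s x) (d x)
  have hφ : SPA ({(1 - t) • ν, (-t) • ν} ∪ W') φ :=
    (hs.mono subset_union_left).min (hd.mono subset_union_right)
  have hφ0 : ∀ x ∉ K', φ x = 0 := fun x hx => by
    simp only [φ, hdK' x hx]; exact min_eq_right (hs0 x)
  have hφb : ∀ x, |φ x| ≤ δ := by
    intro x
    by_cases hx : x ∈ K'
    · rw [abs_of_nonneg (le_min (hs0 x) (hd0 x))]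
      exact (min_le_left _ _).trans ((hsO x (hK'O hx)).trans (min_le_left _ _))
    · rw [hφ0 x hx]; simpa using hδ.le
  let O₁ := {x | SLA φ ((1 - t) • ν) x} ∩ O
  let O₂ := {x | SLA φ ((-t) • ν) x} ∩ O
  have hO₁ : IsOpen O₁ := (isOpen_SLA _ _).inter hO
  have hO₂ : IsOpen O₂ := (isOpen_SLA _ _).inter hO
  have hD₁ : ∀ x ∈ O₁, lineDeriv ℝ φ x v = 1 - t := fun x hx => by
    rw [SLA.lineDeriv hx.1, smul_dotProduct, hv]; simp
  have hD₂ : ∀ x ∈ O₂, lineDeriv ℝ φ x v = - t := fun x hx => by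
    rw [SLA.lineDeriv hx.1, smul_dotProduct, hv]; simp
  have hdisj : Disjoint O₁ O₂ := by
    rw [Set.disjoint_left]
    intro x h1 h2
    have := (hD₁ x h1).symm.trans (hD₂ x h2)
    linarith
  let R := O \ (O₁ ∪ O₂)
  -- measure of R
  have hsO12 : ∀ᵐ x, x ∈ K → x ∈ O₁ ∪ O₂ := by
    obtain ⟨⟨C, hC⟩, F, hF, hFS, hFx⟩ := hs
    obtain ⟨D, hD⟩ := hd.1
    filter_upwards [hFx] with x ⟨α, hα, hα'⟩ hxK
    have hlt : s x < d x := by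
      have h1 := hsO x (hKO hxK)
      have h2 := hdθ x hxK
      have h3 := min_le_right δ (θ / 2)
      linarith
    have ev := hC.continuous.continuousAt.eventually_lt hD.continuous.continuousAt hlt
    have hl : SLA φ α.1 x := ⟨α.2, by
      filter_upwards [hα', ev] with y e1 e2
      simp only [φ]
      rw [min_eq_left e2.le, e1]⟩
    rcases hFS α hα with h | h
    · left; rw [h] at hl; exact ⟨hl, hKO hxK⟩
    · right; rw [mem_singleton_iff.1 h] at hl; exact ⟨hl, hKO hxK⟩
  have hRm : (volume R).toReal ≤ δ / 2 := by
    have h1 : volume R ≤ volume (O \ K) := by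
      refine measure_mono_ae ?_
      filter_upwards [hsO12] with x hx hxR
      exact ⟨hxR.1, fun h => hxR.2 (hx h)⟩
    have h2 : volume (O \ K) ≤ ENNReal.ofReal (δ / 2) := by
      rw [measure_sdiff hKO hK.measurableSet.nullMeasurableSet hK.measure_lt_top.ne]
      exact tsub_le_iff_left.2 hKm.le
    exact ENNReal.toReal_le_of_le_ofReal (by positivity) (h1.trans h2)
  have hRmeas : MeasurableSet R := hO.measurableSet.diff (hO₁.measurableSet.union hO₂.measurableSet)
  have hO12 : O₁ ∪ O₂ ⊆ O := union_subset inter_subset_right inter_subset_right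
  have f1 : volume O₁ ≠ ⊤ := measure_ne_top_of_subset inter_subset_right hOfin
  have f2 : volume O₂ ≠ ⊤ := measure_ne_top_of_subset inter_subset_right hOfin
  have fR : volume R ≠ ⊤ := measure_ne_top_of_subset sdiff_subset hOfin
  have hOeq : O = (O₁ ∪ O₂) ∪ R := (union_sdiff_cancel hO12).symm
  have dR : Disjoint (O₁ ∪ O₂) R := disjoint_sdiff_right
  have hsumm : (volume O).toReal = (volume O₁).toReal + (volume O₂).toReal + (volume R).toReal := by
    have : volume O = volume O₁ + volume O₂ + volume R := by
      conv_lhs => rw [hOeq]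
      rw [measure_union dR hRmeas, measure_union hdisj hO₂.measurableSet]
    rw [this, ENNReal.toReal_add (by finiteness) fR, ENNReal.toReal_add f1 f2]
  -- derivative on R
  have hDR : ∀ᵐ x, x ∈ R → ‖lineDeriv ℝ φ x v‖ ≤ 1 := by
    obtain ⟨-, F, hF, hFS, hFx⟩ := hφ
    filter_upwards [hFx] with x ⟨α, hα, hα'⟩ hxR
    have hl : SLA φ α.1 x := ⟨α.2, hα'⟩
    rw [hl.lineDeriv, Real.norm_eq_abs]
    rcases hFS α hα with (h | h) | h
    · rw [h] at hl; exact absurd (Or.inl ⟨hl, hxR.1⟩) hxR.2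
    · rw [mem_singleton_iff.1 h] at hl; exact absurd (Or.inr ⟨hl, hxR.1⟩) hxR.2
    · exact h.2.le
  obtain ⟨C, hC⟩ := hφ.1
  have hcs : HasCompactSupport φ := HasCompactSupport.intro hK' hφ0
  have hint0 : ∫ x, lineDeriv ℝ φ x v = 0 := by
    have h := LipschitzWith.integral_lineDeriv_mul_eq (μ := volume)
      (LipschitzWith.const (1:ℝ) : LipschitzWith 0 fun _ : Fin n → ℝ => (1:ℝ)) hC hcs (-v)
    simp only [neg_neg, mul_one] at h
    rw [← h]
    simp [lineDeriv]
  have hintO : ∫ x in O, lineDeriv ℝ φ x v = 0 := by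
    rw [← hint0]
    apply setIntegral_eq_integral_of_forall_compl_eq_zero
    intro x hx
    have : SLA φ 0 x := ⟨0, by
      filter_upwards [hK'.isClosed.isOpen_compl.mem_nhds (fun h => hx (hK'O h))] with y hy
      simp [hφ0 y hy]⟩
    rw [this.lineDeriv]; simp
  have i1 : IntegrableOn (fun x => lineDeriv ℝ φ x v) O₁ :=
    (integrableOn_const f1 (C := 1 - t)).congr_fun (fun x hx => (hD₁ x hx).symm) hO₁.measurableSet
  have i2 : IntegrableOn (fun x => lineDeriv ℝ φ x v) O₂ :=
    (integrableOn_const f2 (C := - t)).congr_fun (fun x hx => (hD₂ x hx).symm) hO₂.measurableSet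
  have iR : IntegrableOn (fun x => lineDeriv ℝ φ x v) R :=
    Measure.integrableOn_of_bounded fR (measurable_lineDeriv hC.continuous).aestronglyMeasurable
      (M := 1) ((ae_restrict_iff' hRmeas).2 hDR)
  have e1 : ∫ x in O₁, lineDeriv ℝ φ x v = (volume O₁).toReal * (1 - t) := by
    rw [setIntegral_congr_fun hO₁.measurableSet hD₁]; simp [Measure.real]
  have e2 : ∫ x in O₂, lineDeriv ℝ φ x v = (volume O₂).toReal * (- t) := by
    rw [setIntegral_congr_fun hO₂.measurableSet hD₂]; simp [Measure.real]
  have eR : |∫ x in R, lineDeriv ℝ φ x v| ≤ 1 * (volume R).toReal :=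
    norm_setIntegral_le_of_norm_le_const_ae' fR.lt_top hDR
  rw [hOeq, setIntegral_union dR hRmeas (i1.union i2) iR,
    setIntegral_union hdisj hO₂.measurableSet i1 i2, e1, e2] at hintO
  have hRR : 0 ≤ (volume R).toReal := ENNReal.toReal_nonneg
  refine ⟨φ, hφ.mono (union_subset_union_right _ inter_subset_left), hφb, ⟨K', hK', hK'O, hφ0⟩,
    O₁, O₂, hO₁, hO₂, inter_subset_right, inter_subset_right, hdisj, fun x hx => hx.1,
    fun x hx => hx.1, ?_, ?_⟩
  · rw [abs_le] at eR ⊢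
    rw [hsumm]
    constructor <;> nlinarith
  · rw [abs_le] at eR ⊢
    rw [hsumm]
    constructor <;> nlinarith

end Helpers2

section Helpers3
open Set Topology Matrix

/-- `u` is locally affine at `x` with gradient `A`. -/
def VLA {N n : ℕ} (u : (Fin n → ℝ) → Fin N → ℝ) (A : Mat N n) (x : Fin n → ℝ) : Prop :=
  ∃ b : Fin N → ℝ, ∀ᶠ y in 𝓝 x, u y = A *ᵥ y + b

theorem VLA.matGrad {N n : ℕ} {u : (Fin n → ℝ) → Fin N → ℝ} {A : Mat N n} {x : Fin n → ℝ}
    (h : VLA u A x) : matGrad u x = A := by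
  obtain ⟨b, hb⟩ := h
  have h1 : u =ᶠ[𝓝 x] fun y => A *ᵥ y + b := hb
  unfold _root_.matGrad
  have h2 : HasFDerivAt (fun y => A *ᵥ y + b)
      (LinearMap.toContinuousLinearMap (Matrix.toLin' A)) x := by
    have := (LinearMap.toContinuousLinearMap (Matrix.toLin' A)).hasFDerivAt (x := x)
    exact this.add_const b
  rw [h1.fderiv_eq, h2.fderiv]
  ext i j
  simp

theorem VLA.unique {N n : ℕ} {u : (Fin n → ℝ) → Fin N → ℝ} {A B : Mat N n} {x : Fin n → ℝ}
    (h : VLA u A x) (h' : VLA u B x) : A = B := h.matGrad.symm.trans h'.matGrad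

theorem lip_mul {N n : ℕ} (A : Mat N n) (b : Fin N → ℝ) :
    ∃ C : NNReal, LipschitzWith C (fun x : Fin n → ℝ => A *ᵥ x + b) := by
  have h := (LinearMap.toContinuousLinearMap (Matrix.toLin' A)).lipschitz
  exact ⟨_, h.add (LipschitzWith.const b)⟩

theorem rank_one_decomp {N n : ℕ} (A : Mat N n) (h : A.rank = 1) :
    ∃ (a : Fin N → ℝ) (ν : Fin n → ℝ), ν ≠ 0 ∧ A = vecMulVec a ν := by
  unfold Matrix.rank at h
  obtain ⟨w, hw, hw'⟩ := finrank_eq_one_iff'.1 h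
  have : ∀ j : Fin n, ∃ c : ℝ, c • (w : Fin N → ℝ) = A.col j := by
    intro j
    obtain ⟨c, hc⟩ := hw' ⟨A.col j, ⟨Pi.single j 1, by simp⟩⟩
    exact ⟨c, congrArg Subtype.val hc⟩
  choose ν hν using this
  have hA : A = vecMulVec (w : Fin N → ℝ) ν := by
    ext i j
    have := congrFun (hν j) i
    simp only [Pi.smul_apply, smul_eq_mul, Matrix.col_apply] at this
    rw [vecMulVec_apply, ← this, mul_comm]
  refine ⟨w, ν, ?_, hA⟩
  rintro rfl
  have h0 : A = 0 := by rw [hA]; ext i j; simp [vecMulVec_apply]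
  have : A.rank = 1 := h
  rw [h0, Matrix.rank_zero] at this
  exact zero_ne_one this

/-- State of the construction -/
structure LamState {N n : ℕ} (V : Set (Mat N n)) (Ω : Set (Fin n → ℝ)) (ξ : Mat N n)
    (b : Fin N → ℝ) (ε : ℝ) (u : (Fin n → ℝ) → Fin N → ℝ)
    (M : List ((ℝ × Mat N n) × Set (Fin n → ℝ))) : Prop where
  aff : ∃ F : Set (Mat N n × (Fin N → ℝ)), F.Countable ∧
    ∀ᵐ x, ∃ α ∈ F, α.1 ∈ V ∧ ∀ᶠ y in 𝓝 x, u y = α.1 *ᵥ y + α.2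
  lip : ∃ C : NNReal, LipschitzWith C u
  out : ∀ x ∉ Ω, u x = ξ *ᵥ x + b
  close : ∀ x, ‖u x - (ξ *ᵥ x + b)‖ ≤ ε
  sets : ∀ m ∈ M, IsOpen m.2 ∧ m.2 ⊆ Ω ∧ (∀ x ∈ m.2, VLA u m.1.2 x) ∧
    |(volume m.2).toReal - m.1.1 * (volume Ω).toReal| ≤ ε
  disj : M.Pairwise (fun p q => Disjoint p.2 q.2)

theorem LamState.perm {N n : ℕ} {V : Set (Mat N n)} {Ω : Set (Fin n → ℝ)} {ξ : Mat N n}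
    {b : Fin N → ℝ} {ε : ℝ} {u : (Fin n → ℝ) → Fin N → ℝ} {M M'}
    (h : LamState V Ω ξ b ε u M) (hp : M'.Perm M) : LamState V Ω ξ b ε u M' :=
  ⟨h.aff, h.lip, h.out, h.close, fun m hm => h.sets m (hp.mem_iff.1 hm),
    (hp.pairwise_iff (fun hxy => Disjoint.symm hxy)).2 h.disj⟩

theorem LamState.init {N n : ℕ} {V : Set (Mat N n)} {Ω : Set (Fin n → ℝ)} {ξ : Mat N n}
    (b : Fin N → ℝ) {ε : ℝ} (hε : 0 < ε) (hΩ : IsOpen Ω) (hV : ξ ∈ V) :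
    LamState V Ω ξ b ε (fun x => ξ *ᵥ x + b) [((1, ξ), Ω)] where
  aff := ⟨{(ξ, b)}, countable_singleton _, Eventually.of_forall fun x =>
    ⟨(ξ, b), rfl, hV, Eventually.of_forall fun y => rfl⟩⟩
  lip := lip_mul _ _
  out := fun _ _ => rfl
  close := fun x => by simpa using hε.le
  sets := by
    intro m hm
    rw [List.mem_singleton] at hm
    subst hm
    exact ⟨hΩ, subset_rfl, fun x _ => ⟨b, Eventually.of_forall fun y => rfl⟩, by simpa using hε.le⟩
  disj := List.pairwise_singleton _ _

theorem VLA.add {N n : ℕ} {u : (Fin n → ℝ) → Fin N → ℝ} {A B : Mat N n} {x : Fin n → ℝ}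
    (h : VLA u A x) {φ : (Fin n → ℝ) → ℝ} {p : Fin n → ℝ} (h' : SLA φ p x) (a : Fin N → ℝ)
    (hB : B = A + vecMulVec a p) : VLA (fun y => u y + φ y • a) B x := by
  obtain ⟨b, hb⟩ := h
  obtain ⟨c, hc⟩ := h'
  refine ⟨b + c • a, ?_⟩
  filter_upwards [hb, hc] with y e1 e2
  rw [e1, e2, hB, Matrix.add_mulVec, Matrix.vecMulVec_mulVec]
  ext i
  simp; ring

theorem LamState.split {N n : ℕ} {V : Set (Mat N n)} (hV : IsOpen V) {Ω : Set (Fin n → ℝ)}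
    (hΩb : Bornology.IsBounded Ω) {ξ : Mat N n}
    {b : Fin N → ℝ} {ε : ℝ} (hε : 0 < ε) {u : (Fin n → ℝ) → Fin N → ℝ} {l₁ l₂ : ℝ}
    (hl₁ : 0 < l₁) (hl₂ : 0 < l₂) {ξ₁ ξ₂ : Mat N n} (h₁ : ξ₁ ∈ V) (h₂ : ξ₂ ∈ V)
    (hr : (ξ₁ - ξ₂).rank = 1) (l : ℝ) (hl : l = l₁ + l₂) (η : Mat N n) (hηV : η ∈ V)
    (hη : η = (l₁ + l₂)⁻¹ • (l₁ • ξ₁ + l₂ • ξ₂)) {O : Set (Fin n → ℝ)} {M}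
    (h : LamState V Ω ξ b (ε / 2) u (((l, η), O) :: M)) :
    ∃ u' O₁ O₂, LamState V Ω ξ b ε u' (((l₁, ξ₁), O₁) :: ((l₂, ξ₂), O₂) :: M) := by
  subst hl
  obtain ⟨a, ν, hν, hrank⟩ := rank_one_decomp _ hr
  have : Nonempty (Fin n) := by
    by_contra hcon
    rw [not_nonempty_iff] at hcon
    exact hν (Subsingleton.elim _ _)
  obtain ⟨hOo, hOΩ, hOA, hOm⟩ := h.sets _ List.mem_cons_self
  simp only at hOo hOΩ hOA hOm
  set t : ℝ := l₁ / (l₁ + l₂) with htdef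
  have ht : 0 < t := by positivity
  have ht' : 1 - t = l₂ / (l₁ + l₂) := by rw [htdef]; field_simp; ring
  have ht1 : t < 1 := by
    have : 0 < l₂ / (l₁ + l₂) := by positivity
    linarith
  have hηt : η = t • ξ₁ + (1 - t) • ξ₂ := by
    rw [hη, ht', htdef, smul_add, smul_smul, smul_smul]
    congr 2 <;> field_simp
  have hξ₁ : ξ₁ = η + vecMulVec a ((1 - t) • ν) := by
    rw [vecMulVec_smul, ← hrank, hηt]; module
  have hξ₂ : ξ₂ = η + vecMulVec a ((-t) • ν) := by
    rw [vecMulVec_smul, ← hrank, hηt]; module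
  let W : Set (Fin n → ℝ) := {p | η + vecMulVec a p ∈ V}
  have hW : W ∈ 𝓝 (0 : Fin n → ℝ) := by
    have hc : Continuous fun p : Fin n → ℝ => η + vecMulVec a p := by fun_prop
    refine hc.continuousAt.preimage_mem_nhds (hV.mem_nhds ?_)
    have : vecMulVec a (0 : Fin n → ℝ) = 0 := by ext i j; simp [vecMulVec_apply]
    simpa [this] using hηV
  let δ : ℝ := ε / 2 / (‖a‖ + 1)
  have hδ : 0 < δ := by positivity
  have hδε : δ ≤ ε / 2 := div_le_self (by positivity) (by linarith [norm_nonneg a])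
  have hδa : δ * ‖a‖ ≤ ε / 2 := by
    have : δ * (‖a‖ + 1) = ε / 2 := by simp only [δ]; field_simp
    linarith
  obtain ⟨φ, hφ, hφb, ⟨K, hK, hKO, hK0⟩, O₁, O₂, hO₁, hO₂, hO₁O, hO₂O, hdis, hA₁, hA₂, hm₁, hm₂⟩ :=
    exists_phi ν hν t ht ht1 O hOo (hΩb.subset hOΩ) W hW δ hδ
  have hφ0 : ∀ x ∉ K, ∀ᶠ y in 𝓝 x, φ y = 0 := fun x hx => by
    filter_upwards [hK.isClosed.isOpen_compl.mem_nhds hx] with y hy using hK0 y hy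
  have hmain : ∀ (l' s v : ℝ), 0 < s → s < 1 → s * (l₁ + l₂) = l' → |v - s * (volume O).toReal| ≤ δ →
      |v - l' * (volume Ω).toReal| ≤ ε := by
    intro l' s v hs hs1 hl' hv
    have e : v - l' * (volume Ω).toReal = (v - s * (volume O).toReal) +
      s * ((volume O).toReal - (l₁ + l₂) * (volume Ω).toReal) := by rw [← hl']; ring
    rw [e]
    refine (abs_add_le _ _).trans ?_
    rw [abs_mul, abs_of_pos hs]
    have : s * |(volume O).toReal - (l₁ + l₂) * (volume Ω).toReal| ≤ 1 * (ε / 2) :=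
      mul_le_mul hs1.le hOm (abs_nonneg _) zero_le_one
    linarith
  refine ⟨fun x => u x + φ x • a, O₁, O₂, ?_, ?_, ?_, ?_, ?_, ?_⟩
  · obtain ⟨F, hF, hFx⟩ := h.aff
    obtain ⟨-, G, hG, hGS, hGx⟩ := hφ
    refine ⟨F ∪ image2 (fun α β => (α.1 + vecMulVec a β.1, α.2 + β.2 • a)) F G,
      hF.union (hF.image2 hG _), ?_⟩
    filter_upwards [hFx, hGx] with x ⟨α, hα, hαV, hαx⟩ ⟨β, hβ, hβx⟩
    by_cases hx : x ∈ O
    · refine ⟨_, Or.inr (mem_image2_of_mem hα hβ), ?_, ?_⟩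
      · have : α.1 = η := VLA.unique ⟨α.2, hαx⟩ (hOA x hx)
        simp only [this]
        rcases hGS β hβ with (hh | hh) | hh
        · rw [hh, ← hξ₁]; exact h₁
        · rw [mem_singleton_iff.1 hh, ← hξ₂]; exact h₂
        · exact hh
      · filter_upwards [hαx, hβx] with y e1 e2
        rw [e1, e2, Matrix.add_mulVec, Matrix.vecMulVec_mulVec]
        ext i
        simp; ring
    · refine ⟨α, Or.inl hα, hαV, ?_⟩
      filter_upwards [hαx, hφ0 x (fun hh => hx (hKO hh))] with y e1 e2
      rw [e1, e2]; simp
  · obtain ⟨C, hC⟩ := h.lip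
    obtain ⟨D, hD⟩ := hφ.1
    exact ⟨_, hC.add ((ContinuousLinearMap.toSpanSingleton ℝ a).lipschitz.comp hD)⟩
  · intro x hx
    rw [h.out x hx, hK0 x (fun hh => hx (hOΩ (hKO hh)))]; simp
  · intro x
    have e : u x + φ x • a - (ξ *ᵥ x + b) = (u x - (ξ *ᵥ x + b)) + φ x • a := by abel
    rw [e]
    refine (norm_add_le _ _).trans ?_
    have h1 := h.close x
    have h2 : ‖φ x • a‖ ≤ δ * ‖a‖ := by
      rw [norm_smul]; exact mul_le_mul_of_nonneg_right (hφb x) (norm_nonneg _)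
    linarith
  · intro m hm
    rcases List.mem_cons.1 hm with rfl | hm
    · refine ⟨hO₁, hO₁O.trans hOΩ, fun x hx => (hOA x (hO₁O hx)).add (hA₁ x hx) a hξ₁,
        hmain _ t _ ht ht1 ?_ hm₁⟩
      simp only [htdef]; field_simp
    rcases List.mem_cons.1 hm with rfl | hm
    · refine ⟨hO₂, hO₂O.trans hOΩ, fun x hx => (hOA x (hO₂O hx)).add (hA₂ x hx) a hξ₂,
        hmain _ (1 - t) _ (by linarith) (by linarith) ?_ hm₂⟩
      simp only [ht']; field_simp
    · obtain ⟨g1, g2, g3, g4⟩ := h.sets m (List.mem_cons_of_mem _ hm)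
      refine ⟨g1, g2, fun x hx => ?_, g4.trans (by linarith)⟩
      have hd : Disjoint O m.2 := (List.pairwise_cons.1 h.disj).1 m hm
      obtain ⟨c, hc⟩ := g3 x hx
      refine ⟨c, ?_⟩
      filter_upwards [hc, hφ0 x (fun hh => Set.disjoint_left.1 hd (hKO hh) hx)] with y e1 e2
      rw [e1, e2]; simp
  · obtain ⟨hd, hM⟩ := List.pairwise_cons.1 h.disj
    refine List.pairwise_cons.2 ⟨?_, List.pairwise_cons.2 ⟨?_, hM⟩⟩
    · intro m hm
      rcases List.mem_cons.1 hm with rfl | hm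
      · exact hdis
      · exact (hd m hm).mono_left hO₁O
    · intro m hm
      exact (hd m hm).mono_left hO₂O

theorem HIProp.mem {N n : ℕ} {U : Set (Mat N n)} {L} (h : HIProp U L) : ∀ p ∈ L, p.2 ∈ U := by
  induction h with
  | single l ξ hξ => simpa using hξ
  | pair l₁ l₂ ξ₁ ξ₂ h₁ h₂ _ => simp [h₁, h₂]
  | step L rest l₁ l₂ ξ₁ ξ₂ hperm hrest h₁ h₂ hrank hrec ih =>
    intro p hp
    rcases List.mem_cons.1 (hperm.mem_iff.1 hp) with rfl | hp
    · exact h₁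
    rcases List.mem_cons.1 hp with rfl | hp
    · exact h₂
    · exact ih p (List.mem_cons_of_mem _ hp)

theorem LamState.exists {N n : ℕ} {U V : Set (Mat N n)} (hV : IsOpen V) (hUV : U ⊆ V)
    {Ω : Set (Fin n → ℝ)} (hΩ : IsOpen Ω) (hΩb : Bornology.IsBounded Ω) {ξ : Mat N n}
    (hξV : ξ ∈ V) (b : Fin N → ℝ) {L} (h : HIProp U L) :
    (∀ p ∈ L, 0 < p.1) → (L.map Prod.fst).sum = 1 → (L.map (fun p => p.1 • p.2)).sum = ξ →
    ∀ ε > 0, ∃ u M, M.map Prod.fst = L ∧ LamState V Ω ξ b ε u M := by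
  induction h with
  | single l ζ hζ =>
    intro hp hs hm ε hε
    simp only [List.map_cons, List.map_nil, List.sum_cons, List.sum_nil, add_zero] at hs hm
    subst hs
    rw [one_smul] at hm
    subst hm
    exact ⟨_, _, rfl, LamState.init b hε hΩ hξV⟩
  | pair l₁ l₂ ξ₁ ξ₂ h₁ h₂ hrank =>
    intro hp hs hm ε hε
    simp only [List.map_cons, List.map_nil, List.sum_cons, List.sum_nil, add_zero] at hs hm
    have h := LamState.init (V := V) (ξ := ξ) b (half_pos hε) hΩ hξV
    obtain ⟨u', O₁, O₂, h'⟩ := h.split hV hΩb hε (hp (l₁, ξ₁) (by simp)) (hp (l₂, ξ₂) (by simp))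
      (hUV h₁) (hUV h₂) hrank 1 hs.symm ξ hξV (by rw [hs, hm]; simp)
    exact ⟨_, _, rfl, h'⟩
  | step L rest l₁ l₂ ξ₁ ξ₂ hperm hrest h₁ h₂ hrank hrec ih =>
    intro hp hs hm ε hε
    have hp' : ∀ p ∈ (l₁, ξ₁) :: (l₂, ξ₂) :: rest, 0 < p.1 := fun p hpp => hp p (hperm.mem_iff.2 hpp)
    have hl₁ : 0 < l₁ := hp' (l₁, ξ₁) (by simp)
    have hl₂ : 0 < l₂ := hp' (l₂, ξ₂) (by simp)
    rw [(hperm.map _).sum_eq] at hs hm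
    simp only [List.map_cons, List.sum_cons] at hs hm
    have hne : l₁ + l₂ ≠ 0 := by positivity
    obtain ⟨u, M, hM, hst⟩ := ih
      (by
        intro p hpp
        rcases List.mem_cons.1 hpp with rfl | hpp
        · exact add_pos hl₁ hl₂
        · exact hp' p (by simp [hpp]))
      (by simp only [List.map_cons, List.sum_cons]; linarith)
      (by
        simp only [List.map_cons, List.sum_cons]
        rw [smul_smul, mul_inv_cancel₀ hne, one_smul, ← hm, add_assoc])
      (ε / 2) (half_pos hε)
    obtain ⟨⟨p, O⟩, M', rfl, hp1, hM'⟩ := List.map_eq_cons_iff.1 hM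
    simp only at hp1
    subst hp1
    obtain ⟨u', O₁, O₂, h'⟩ := hst.split hV hΩb hε hl₁ hl₂ (hUV h₁) (hUV h₂) hrank _ rfl _
      (hUV (hrec.mem _ List.mem_cons_self)) rfl
    have hL : L.Perm (List.map Prod.fst (((l₁, ξ₁), O₁) :: ((l₂, ξ₂), O₂) :: M')) := by
      simpa [hM'] using hperm
    obtain ⟨M'', hM'', hpp⟩ := (congrFun₂ (List.eq_map_comp_perm Prod.fst) L _).mpr hL
    exact ⟨u', M'', hM''.symm, h'.perm hpp⟩

end Helpers3

section Statements

open Metric Set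

theorem stmt5 {N n : ℕ} (I : ℕ) (hI : 1 < I) (U : Set (Mat N n)) (hU : IsOpen U)
    (l : Fin I → ℝ) (ξs : Fin I → Mat N n) (hl : ∀ i, 0 < l i) (hsum : ∑ i, l i = 1)
    (hH : SatisfiesH U I l ξs) (ξ : Mat N n) (hξ : ξ = ∑ i, l i • ξs i)
    (b : Fin N → ℝ) (ε : ℝ) (hε : 0 < ε)
    (Ω : Set (Fin n → ℝ)) (hΩo : IsOpen Ω) (hΩb : Bornology.IsBounded Ω) :
    ∃ (u : (Fin n → ℝ) → Fin N → ℝ) (O : Fin I → Set (Fin n → ℝ)),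
      PiecewiseAffineOn u Ω ∧
      MemW01inf Ω (fun x => ξ.mulVec x + b) u ∧
      (∀ i, IsOpen (O i) ∧ O i ⊆ Ω) ∧
      (∀ i j, i ≠ j → Disjoint (O i) (O j)) ∧
      (∀ᵐ x ∂(MeasureTheory.volume.restrict Ω), matGrad u x ∈ U ∪ Metric.ball ξ ε) ∧
      (∀ i, ∀ᵐ x ∂(MeasureTheory.volume.restrict (O i)), matGrad u x = ξs i) ∧
      (∀ x ∈ Ω, ‖u x - (ξ.mulVec x + b)‖ ≤ ε) ∧
      (∀ i, |(MeasureTheory.volume (O i)).toReal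
        - l i * (MeasureTheory.volume Ω).toReal| ≤ ε) := by
  obtain ⟨u, M, hM, hst⟩ := LamState.exists (U := U) (V := U ∪ Metric.ball ξ ε)
    (hU.union isOpen_ball) subset_union_left hΩo hΩb (ξ := ξ) (Or.inr (mem_ball_self hε)) b hH
    (by
      intro p hp
      obtain ⟨i, rfl⟩ := (List.mem_ofFn' _ _).1 hp
      exact hl i)
    (by rw [List.map_ofFn, List.sum_ofFn]; exact hsum)
    (by rw [List.map_ofFn, List.sum_ofFn]; exact hξ.symm)
    ε hε
  have hlen : M.length = I := by
    have := congrArg List.length hM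
    simpa using this
  have hget : ∀ (i : Fin I) (h : i.1 < M.length), (M[i.1]).1 = (l i, ξs i) := by
    intro i h
    have : (M.map Prod.fst)[i.1]'(by simpa using h) = (l i, ξs i) := by
      simp [hM]
    simpa using this
  have hlt : ∀ i : Fin I, i.1 < M.length := fun i => by rw [hlen]; exact i.2
  have hS : ∀ i : Fin I, _ := fun i => hst.sets (M[i.1]'(hlt i)) (List.getElem_mem _)
  obtain ⟨F, hF, hFx⟩ := hst.aff
  obtain ⟨C, hC⟩ := hst.lip
  refine ⟨u, fun i => (M[i.1]'(hlt i)).2, ⟨hC.continuous.continuousOn, ?_⟩,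
    ⟨⟨C, hC.lipschitzOnWith⟩, ?_⟩, fun i => ⟨(hS i).1, (hS i).2.1⟩, ?_, ?_, ?_,
    fun x _ => hst.close x, ?_⟩
  · obtain ⟨e, he⟩ := hF.to_subtype.exists_injective_nat
    let Q : ℕ → Set (Fin n → ℝ) := fun k =>
      {x | ∃ α : F, e α = k ∧ ∀ᶠ y in nhds x, u y = α.1.1.mulVec y + α.1.2}
    refine ⟨fun k => Q k ∩ Ω, ?_, fun k => inter_subset_right, ?_, ?_, ?_⟩
    · intro k
      refine IsOpen.inter ?_ hΩo
      have : Q k = ⋃ α : F, ⋃ _ : e α = k, {x | ∀ᶠ y in nhds x, u y = α.1.1.mulVec y + α.1.2} := by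
        ext x; simp [Q]
      rw [this]
      exact isOpen_iUnion fun α => isOpen_iUnion fun _ => isOpen_setOfPred_eventually_nhds
    · intro k m hkm
      rw [Set.disjoint_left]
      rintro x ⟨⟨α, rfl, hα⟩, -⟩ ⟨⟨β, rfl, hβ⟩, -⟩
      apply hkm
      have h1 : α.1.1 = β.1.1 := VLA.unique ⟨_, hα⟩ ⟨_, hβ⟩
      have h2 : α.1.2 = β.1.2 := by
        have e1 := hα.self_of_nhds
        rw [hβ.self_of_nhds, h1] at e1
        exact (add_left_cancel e1).symm
      congr 1
      exact Subtype.ext (Prod.ext h1 h2)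
    · refine measure_mono_null ?_ (ae_iff.1 hFx)
      intro x hx hcon
      obtain ⟨α, hα, -, hαx⟩ := hcon
      exact hx.2 (mem_iUnion.2 ⟨e ⟨α, hα⟩, ⟨⟨α, hα⟩, rfl, hαx⟩, hx.1⟩)
    · intro k
      by_cases hk : ∃ α : F, e α = k
      · obtain ⟨α, rfl⟩ := hk
        refine ⟨α.1.1, α.1.2, ?_⟩
        rintro x ⟨⟨β, hβ, hβx⟩, -⟩
        obtain rfl := he hβ
        exact hβx.self_of_nhds
      · refine ⟨0, 0, ?_⟩
        rintro x ⟨⟨β, hβ, -⟩, -⟩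
        exact absurd ⟨β, hβ⟩ hk
  · intro x hx
    refine hst.out x fun h => ?_
    rw [hΩo.frontier_eq] at hx
    exact hx.2 h
  · intro i j hij
    have hp := List.pairwise_iff_getElem.1 hst.disj
    rcases lt_or_gt_of_ne hij with h | h
    · exact hp i.1 j.1 (hlt i) (hlt j) h
    · exact (hp j.1 i.1 (hlt j) (hlt i) h).symm
  · apply ae_restrict_of_ae
    filter_upwards [hFx] with x ⟨α, _, hαV, hαx⟩
    rw [VLA.matGrad ⟨_, hαx⟩]
    exact hαV
  · intro i
    refine ae_restrict_of_forall_mem (hS i).1.measurableSet fun x hx => ?_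
    rw [((hS i).2.2.1 x hx).matGrad, hget]
  · intro i
    have := (hS i).2.2.2
    rwa [hget] at this

end Statements
end

section
/- Let E ⊆ ℝ^{n×n} be of the form E = {ξ ∈ ℝ^{n×n} : (λ_1(ξ),…,λ_n(ξ)) ∈ Λ_E, det ξ ≥ 0} for some compact set Λ_E ⊆ {(x_1,…,x_n) ∈ ℝ^n : 0 ≤ x_1 ≤ … ≤ x_n}. Then Rco_f E has the same form; more precisely, Rco_f E = {ξ ∈ ℝ^{n×n} : (λ_1(ξ),…,λ_n(ξ)) ∈ Λ', det ξ ≥ 0}, where Λ' := {(λ_1(ξ),…,λ_n(ξ)) : ξ ∈ Rco_f E} is a compact subset of {(x_1,…,x_n) ∈ ℝ^n : 0 ≤ x_1 ≤ … ≤ x_n}. -/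
open MeasureTheory Filter

attribute [local instance] Classical.propDecidable
attribute [local instance] Matrix.frobeniusNormedAddCommGroup Matrix.frobeniusNormedSpace

section Helpers
open Matrix

lemma sv_nonneg {n : ℕ} (ξ : Mat n n) (i : Fin n) : 0 ≤ singularValues ξ i := Real.sqrt_nonneg _

lemma sv_mono {n : ℕ} (ξ : Mat n n) : Monotone (singularValues ξ) := by
  intro i j hij
  exact Real.sqrt_le_sqrt (Tuple.monotone_sort
    (Matrix.isHermitian_mul_conjTranspose_self ξ).eigenvalues hij)

lemma eig_nonneg {n : ℕ} (ξ : Mat n n) (i : Fin n) :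
    0 ≤ (Matrix.isHermitian_mul_conjTranspose_self ξ).eigenvalues i :=
  (Matrix.posSemidef_self_mul_conjTranspose ξ).eigenvalues_nonneg i

lemma sv_eq_of_charpoly {n : ℕ} (ξ η : Mat n n)
    (h : (ξ * ξᴴ).charpoly = (η * ηᴴ).charpoly) : singularValues ξ = singularValues η := by
  have := (Matrix.IsHermitian.eigenvalues_eq_eigenvalues_iff
    (Matrix.isHermitian_mul_conjTranspose_self ξ)
    (Matrix.isHermitian_mul_conjTranspose_self η)).2 h
  funext i
  unfold singularValues
  rw [this]

lemma sv_mul {n : ℕ} (ξ A B : Mat n n) (hA : Aᵀ * A = 1) (hB : B * Bᵀ = 1) :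
    singularValues (A * ξ * B) = singularValues ξ := by
  apply sv_eq_of_charpoly
  simp only [Matrix.conjTranspose_eq_transpose_of_trivial, Matrix.transpose_mul]
  have : A * ξ * B * (Bᵀ * (ξᵀ * Aᵀ)) = A * (ξ * ξᵀ * Aᵀ) := by
    calc _ = A * ξ * (B * Bᵀ) * ξᵀ * Aᵀ := by simp only [Matrix.mul_assoc]
      _ = _ := by rw [hB]; simp only [Matrix.mul_assoc, Matrix.mul_one]
  rw [this, Matrix.charpoly_mul_comm, Matrix.mul_assoc, hA, Matrix.mul_one]

lemma sv_sum_sq {n : ℕ} (ξ : Mat n n) :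
    ∑ i, (singularValues ξ i) ^ 2 = ∑ i, ∑ j, (ξ i j) ^ 2 := by
  have h1 := (Matrix.isHermitian_mul_conjTranspose_self ξ).trace_eq_sum_eigenvalues
  have h2 : ∑ i, (singularValues ξ i) ^ 2 =
      ∑ i, (Matrix.isHermitian_mul_conjTranspose_self ξ).eigenvalues i := by
    rw [← Equiv.sum_comp (Tuple.sort (Matrix.isHermitian_mul_conjTranspose_self ξ).eigenvalues)
      (Matrix.isHermitian_mul_conjTranspose_self ξ).eigenvalues]
    refine Finset.sum_congr rfl fun i _ => ?_
    exact Real.sq_sqrt (eig_nonneg ξ _)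
  rw [h2]
  simp only [RCLike.ofReal_real_eq_id, id] at h1
  rw [← h1]
  simp [Matrix.trace, Matrix.mul_apply, sq]

lemma sv_diag {n : ℕ} (x : Fin n → ℝ) (h0 : ∀ i, 0 ≤ x i) (hm : Monotone x) :
    singularValues (Matrix.diagonal x) = x := by
  set H := Matrix.isHermitian_mul_conjTranspose_self (Matrix.diagonal x) with hH
  have h1 := H.roots_charpoly_eq_eigenvalues
  have h2 : (Matrix.diagonal x * (Matrix.diagonal x)ᴴ) = Matrix.diagonal (fun i => x i * x i) := by
    simp [Matrix.diagonal_mul_diagonal]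
  have h3 : Multiset.map (fun i => x i * x i) Finset.univ.val = Multiset.map H.eigenvalues Finset.univ.val := by
    have h4 : (∏ i, (Polynomial.X - Polynomial.C (x i * x i))).roots
        = Multiset.map (fun i => x i * x i) Finset.univ.val := by
      rw [Polynomial.roots_prod]
      · simp only [Polynomial.roots_X_sub_C]
        exact Multiset.bind_singleton _ _
      · exact Finset.prod_ne_zero_iff.2 fun i _ => Polynomial.X_sub_C_ne_zero _
    rw [← h4, ← Matrix.charpoly_diagonal, ← h2, h1]
    rfl
  have h5 : (List.ofFn (fun i => x i * x i)).Perm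
      (List.ofFn (H.eigenvalues ∘ Tuple.sort H.eigenvalues)) := by
    refine List.Perm.trans ?_ (Equiv.Perm.ofFn_comp_perm _ _).symm
    rw [← Multiset.coe_eq_coe, ← Fin.univ_val_map, ← Fin.univ_val_map]
    exact h3
  have h6 : (fun i => x i * x i) = (H.eigenvalues ∘ Tuple.sort H.eigenvalues) := by
    apply List.ofFn_injective
    refine List.Perm.eq_of_sortedLE ?_ ?_ h5
    · exact (Monotone.sortedLE_ofFn (f := fun i => x i * x i) (fun i j hij => mul_le_mul (hm hij) (hm hij) (h0 _) (h0 _)))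
    · exact (Tuple.monotone_sort H.eigenvalues).sortedLE_ofFn
  funext i
  have := congrFun h6 i
  refine Eq.trans ?_ (Real.sqrt_mul_self (h0 i))
  exact congrArg Real.sqrt this.symm

lemma svd {n : ℕ} (ξ : Mat n n) : ∃ U V : Mat n n, Uᵀ * U = 1 ∧ V * Vᵀ = 1 ∧
    ξ = U * Matrix.diagonal (singularValues ξ) * V := by
  set H := Matrix.isHermitian_mul_conjTranspose_self ξ with hH
  set σ := Tuple.sort H.eigenvalues with hσ
  set Q : Mat n n := (H.eigenvectorUnitary : Matrix (Fin n) (Fin n) ℝ) with hQ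
  have hQQ : Qᵀ * Q = 1 := by
    have := Unitary.coe_star_mul_self H.eigenvectorUnitary
    rwa [Matrix.star_eq_conjTranspose, Matrix.conjTranspose_eq_transpose_of_trivial] at this
  have hQA : Qᵀ * (ξ * ξᵀ) * Q = Matrix.diagonal H.eigenvalues := by
    have := H.conjStarAlgAut_star_eigenvectorUnitary
    rw [Unitary.conjStarAlgAut_star_apply, Matrix.star_eq_conjTranspose,
      Matrix.conjTranspose_eq_transpose_of_trivial] at this
    have e : ξᴴ = ξᵀ := Matrix.conjTranspose_eq_transpose_of_trivial ξ
    rw [← e]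
    exact this
  set U : Mat n n := Q.submatrix id σ with hU
  have hUU : Uᵀ * U = 1 := by
    rw [hU, Matrix.transpose_submatrix, ← Matrix.submatrix_mul _ _ _ id _ Function.bijective_id, hQQ,
      Matrix.submatrix_one_equiv]
  set W : Mat n n := Uᵀ * ξ with hW
  have hWW : W * Wᵀ = Matrix.diagonal (fun i => singularValues ξ i * singularValues ξ i) := by
    have : W * Wᵀ = (Qᵀ * (ξ * ξᵀ) * Q).submatrix σ σ := by
      ext i j
      simp only [hW, hU, Matrix.transpose_mul, Matrix.transpose_transpose]
      simp only [Matrix.mul_assoc]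
      rfl
    rw [this, hQA, Matrix.submatrix_diagonal_equiv]
    congr 1
    funext i
    exact (Real.mul_self_sqrt (eig_nonneg ξ _)).symm
  have hin : ∀ i j, inner ℝ (WithLp.toLp 2 (W i) : EuclideanSpace ℝ (Fin n)) (WithLp.toLp 2 (W j)) =
      if i = j then singularValues ξ i * singularValues ξ i else 0 := by
    intro i j
    have := congrFun (congrFun hWW i) j
    rw [Matrix.diagonal_apply] at this
    rw [← this]
    simp [Matrix.mul_apply, PiLp.inner_apply, mul_comm]
  let v : Fin n → EuclideanSpace ℝ (Fin n) := fun i => (singularValues ξ i)⁻¹ • WithLp.toLp 2 (W i)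
  let S : Set (Fin n) := {i | singularValues ξ i ≠ 0}
  have hv : Orthonormal ℝ (S.domRestrict v) := by
    rw [orthonormal_iff_ite]
    rintro ⟨i, hi⟩ ⟨j, hj⟩
    simp only [Set.domRestrict_apply, v, inner_smul_left, inner_smul_right, hin, Subtype.mk.injEq]
    have hi : singularValues ξ i ≠ 0 := hi
    by_cases hij : i = j
    · subst hij
      simp
      field_simp
    · simp [hij]
  obtain ⟨b, hb⟩ := hv.exists_orthonormalBasis_extension_of_card_eq (by simp)
  refine ⟨U, Matrix.of fun i j => b i j, hUU, ?_, ?_⟩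
  · ext i j
    have := orthonormal_iff_ite.1 b.orthonormal i j
    rw [Matrix.one_apply, ← this]
    simp [Matrix.mul_apply, PiLp.inner_apply, mul_comm]
  · have hUU' : U * Uᵀ = 1 := mul_eq_one_comm.1 hUU
    have : W = Matrix.diagonal (singularValues ξ) * Matrix.of fun i j => b i j := by
      ext i j
      rw [Matrix.diagonal_mul, Matrix.of_apply]
      by_cases hi : singularValues ξ i = 0
      · have h := hin i i
        rw [hi] at h
        simp only [mul_zero, if_true] at h
        have h := inner_self_eq_zero.1 h
        have := congrArg (fun z : EuclideanSpace ℝ (Fin n) => z j) h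
        simp at this
        rw [this, hi, zero_mul]
      · rw [hb i hi]
        simp [v]
        field_simp
    rw [Matrix.mul_assoc, ← this, hW, ← Matrix.mul_assoc, hUU', Matrix.one_mul]

lemma sep_bdd {n : ℕ} (f : (Fin n → ℝ) → ℝ)
    (hf : ∀ x i a b t, 0 ≤ t → t ≤ 1 → f (Function.update x i (t * a + (1 - t) * b)) ≤
      t * f (Function.update x i a) + (1 - t) * f (Function.update x i b)) (R : ℝ) (hR : 0 < R)
    (S : Finset (Fin n)) : ∀ x : Fin n → ℝ, ∃ M, ∀ y : Fin n → ℝ, (∀ i ∈ S, |y i - x i| ≤ R) →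
      (∀ i, i ∉ S → y i = x i) → f y ≤ M := by
  induction S using Finset.induction_on with
  | empty =>
    intro x
    refine ⟨f x, fun y _ h => ?_⟩
    have : y = x := funext fun i => h i (by simp)
    rw [this]
  | insert a S ha ih =>
    intro x
    obtain ⟨M1, h1⟩ := ih (Function.update x a (x a + R))
    obtain ⟨M2, h2⟩ := ih (Function.update x a (x a - R))
    refine ⟨max M1 M2, fun y hy hy' => ?_⟩
    have key : ∀ c, (∀ i ∈ S, |Function.update y a c i - Function.update x a c i| ≤ R) ∧
        (∀ i, i ∉ S → Function.update y a c i = Function.update x a c i) := by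
      intro c
      constructor
      · intro i hi
        have : i ≠ a := fun h => ha (h ▸ hi)
        simp only [Function.update_of_ne this]
        exact hy i (Finset.mem_insert_of_mem hi)
      · intro i hi
        by_cases h : i = a
        · subst h; simp
        · simp only [Function.update_of_ne h]
          exact hy' i (by simp [h, hi])
    have k1 := h1 _ (key _).1 (key _).2
    have k2 := h2 _ (key _).1 (key _).2
    have hya := abs_le.1 (hy a (Finset.mem_insert_self _ _))
    have ht0 : 0 ≤ (y a - x a + R) / (2 * R) := div_nonneg (by linarith) (by linarith)
    have ht1 : (y a - x a + R) / (2 * R) ≤ 1 := by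
      rw [div_le_one (by linarith)]; linarith
    have h := hf y a (x a + R) (x a - R) _ ht0 ht1
    have e : (y a - x a + R) / (2 * R) * (x a + R) + (1 - (y a - x a + R) / (2 * R)) * (x a - R) = y a := by
      field_simp; ring
    rw [e, Function.update_eq_self] at h
    have l1 : f (Function.update y a (x a + R)) ≤ max M1 M2 := k1.trans (le_max_left _ _)
    have l2 : f (Function.update y a (x a - R)) ≤ max M1 M2 := k2.trans (le_max_right _ _)
    nlinarith [mul_le_mul_of_nonneg_left l1 ht0, mul_le_mul_of_nonneg_left l2 (sub_nonneg.2 ht1)]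

lemma sep_lsc {n : ℕ} (f : (Fin n → ℝ) → ℝ)
    (hf : ∀ x i a b t, 0 ≤ t → t ≤ 1 → f (Function.update x i (t * a + (1 - t) * b)) ≤
      t * f (Function.update x i a) + (1 - t) * f (Function.update x i b))
    (x : Fin n → ℝ) (M : ℝ) (hM : ∀ y : Fin n → ℝ, (∀ i, |y i - x i| ≤ 1) → f y ≤ M)
    (δ : ℝ) (h0 : 0 < δ) (h1 : δ ≤ 1)
    (S : Finset (Fin n)) : ∀ y : Fin n → ℝ, (∀ i ∈ S, |y i - x i| ≤ δ) →
      (∀ i, i ∉ S → y i = x i) → M - f y ≤ (1 + δ) ^ S.card * (M - f x) := by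
  induction S using Finset.induction_on with
  | empty =>
    intro y _ h
    have : y = x := funext fun i => h i (by simp)
    simp [this]
  | insert a S ha ih =>
    intro y hy hy'
    have hz := ih (Function.update y a (x a)) (by
      intro i hi
      have : i ≠ a := fun h => ha (h ▸ hi)
      simp only [Function.update_of_ne this]
      exact hy i (Finset.mem_insert_of_mem hi)) (by
      intro i hi
      by_cases h : i = a
      · subst h; simp
      · simp only [Function.update_of_ne h]
        exact hy' i (by simp [h, hi]))
    have hq := hM (Function.update y a (x a - (y a - x a) / δ)) (by
      intro i
      by_cases h : i = a
      · subst h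
        have := hy i (Finset.mem_insert_self _ _)
        simp only [Function.update_self]
        rw [sub_sub_cancel_left, abs_neg, abs_div, abs_of_pos h0, div_le_one h0]
        exact this
      · simp only [Function.update_of_ne h]
        by_cases hi : i ∈ S
        · exact (hy i (Finset.mem_insert_of_mem hi)).trans h1
        · rw [hy' i (by simp [h, hi])]; simp)
    have hc := hf y a (y a) (x a - (y a - x a) / δ) (1 / (1 + δ)) (by positivity)
      (by rw [div_le_one (by linarith)]; linarith)
    have e : 1 / (1 + δ) * y a + (1 - 1 / (1 + δ)) * (x a - (y a - x a) / δ) = x a := by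
      field_simp; ring
    rw [e, Function.update_eq_self] at hc
    have e2 : (1 - 1 / (1 + δ)) = δ / (1 + δ) := by field_simp; ring
    rw [e2] at hc
    have hc2 : (1 + δ) * f (Function.update y a (x a)) ≤
        f y + δ * f (Function.update y a (x a - (y a - x a) / δ)) := by
      have := mul_le_mul_of_nonneg_left hc (by linarith : 0 ≤ 1 + δ)
      refine this.trans (le_of_eq ?_)
      field_simp
    rw [Finset.card_insert_of_notMem ha, pow_succ]
    have h3 := mul_le_mul_of_nonneg_left hz (by linarith : 0 ≤ 1 + δ)
    have h4 := mul_le_mul_of_nonneg_left hq h0.le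
    nlinarith

lemma sep_closed {n : ℕ} (f : (Fin n → ℝ) → ℝ)
    (hf : ∀ x i a b t, 0 ≤ t → t ≤ 1 → f (Function.update x i (t * a + (1 - t) * b)) ≤
      t * f (Function.update x i a) + (1 - t) * f (Function.update x i b)) :
    IsClosed {x | f x ≤ 0} := by
  rw [← isOpen_compl_iff, Metric.isOpen_iff]
  intro x hx
  have hx : 0 < f x := by simpa using hx
  obtain ⟨M, hM⟩ := sep_bdd f hf 1 one_pos Finset.univ x
  have hM' : ∀ y : Fin n → ℝ, (∀ i, |y i - x i| ≤ 1) → f y ≤ M :=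
    fun y hy => hM y (fun i _ => hy i) (fun i hi => absurd (Finset.mem_univ i) hi)
  have hcont : Continuous fun δ : ℝ => (1 + δ) ^ (Finset.univ : Finset (Fin n)).card * (M - f x) := by
    fun_prop
  have hev : ∀ᶠ δ in nhds (0:ℝ),
      (1 + δ) ^ (Finset.univ : Finset (Fin n)).card * (M - f x) < M := by
    apply hcont.continuousAt.eventually_lt continuousAt_const
    simpa using hx
  obtain ⟨ε, hε, hball⟩ := Metric.eventually_nhds_iff.1 hev
  have hd0 : 0 < min (ε / 2) 1 := lt_min (by linarith) one_pos
  refine ⟨min (ε / 2) 1, hd0, fun y hy => ?_⟩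
  have hl := hball (y := min (ε / 2) 1) (by
    rw [Real.dist_eq, sub_zero, abs_of_pos hd0]
    exact (min_le_left _ _).trans_lt (by linarith))
  have := sep_lsc f hf x M hM' _ hd0 (min_le_right _ _) Finset.univ y (fun i _ => by
    have := dist_le_pi_dist y x i
    rw [Real.dist_eq] at this
    exact this.trans (le_of_lt (Metric.mem_ball.1 hy))) (fun i hi => absurd (Finset.mem_univ i) hi)
  simp only [Set.mem_compl_iff, Set.mem_ofPred_eq, not_le]
  linarith

lemma orth_det_unit {n : ℕ} {A : Mat n n} (hA : Aᵀ * A = 1) : IsUnit A.det := by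
  have := congrArg Matrix.det hA
  rw [Matrix.det_mul, Matrix.det_one] at this
  exact IsUnit.of_mul_eq_one_right _ this

lemma orth_det {n : ℕ} {A : Mat n n} (hA : Aᵀ * A = 1) : A.det * A.det = 1 := by
  have := congrArg Matrix.det hA
  rwa [Matrix.det_mul, Matrix.det_one, Matrix.det_transpose] at this

lemma rank_one_diag {n : ℕ} (i : Fin n) (c : ℝ) (hc : c ≠ 0) :
    (Matrix.diagonal (Pi.single i c : Fin n → ℝ)).rank = 1 := by
  rw [Matrix.rank_diagonal, Fintype.card_eq_one_iff]
  refine ⟨⟨i, by simpa using hc⟩, fun y => ?_⟩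
  rcases y with ⟨j, hj⟩
  apply Subtype.ext
  by_contra h
  exact hj (Pi.single_eq_of_ne h _)

lemma det_affine {n : ℕ} (ξ η : Mat n n) (h : (ξ - η).rank = 1) (t : ℝ) :
    (t • ξ + (1 - t) • η).det = t * ξ.det + (1 - t) * η.det := by
  obtain ⟨U, V, hU, hV, hM⟩ := svd (ξ - η)
  have hVt : Vᵀᵀ * Vᵀ = 1 := by rw [Matrix.transpose_transpose]; exact hV
  have hVu : IsUnit V.det := by rw [← Matrix.det_transpose]; exact orth_det_unit hVt
  set s := singularValues (ξ - η) with hs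
  have hr : (Matrix.diagonal s).rank = 1 := by
    rw [hM, Matrix.rank_mul_eq_left_of_isUnit_det _ _ hVu,
      Matrix.rank_mul_eq_right_of_isUnit_det _ _ (orth_det_unit hU)] at h
    exact h
  rw [Matrix.rank_diagonal, Fintype.card_eq_one_iff] at hr
  obtain ⟨⟨k, hk⟩, huniq⟩ := hr
  have hsk : s = Pi.single k (s k) := by
    funext j
    by_cases hj : j = k
    · subst hj; simp
    · rw [Pi.single_eq_of_ne hj]
      by_contra h0
      exact hj (congrArg Subtype.val (huniq ⟨j, h0⟩))
  have hUU : U * Uᵀ = 1 := mul_eq_one_comm.1 hU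
  have hVV : Vᵀ * V = 1 := mul_eq_one_comm.1 hV
  set B : Mat n n := Uᵀ * η * Vᵀ with hB
  have hη : η = U * B * V := by
    calc η = (U * Uᵀ) * η * (Vᵀ * V) := by rw [hUU, hVV]; simp
      _ = _ := by rw [hB]; simp only [Matrix.mul_assoc]
  have hgen : ∀ r : ℝ, (η + r • (ξ - η)).det =
      U.det * (B.det + r * (B.updateRow k (Pi.single k (s k))).det) * V.det := by
    intro r
    have h1 : η + r • (ξ - η) = U * (B.updateRow k (B k + r • Pi.single k (s k))) * V := by
      rw [hM]
      conv_lhs => rw [hη]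
      have : B.updateRow k (B k + r • Pi.single k (s k)) = B + r • Matrix.diagonal s := by
        ext i j
        by_cases hi : i = k
        · subst hi
          by_cases hj : j = i
          · subst hj; simp
          · simp [hj, Matrix.diagonal_apply_ne' _ hj]
        · simp only [Matrix.updateRow_ne hi, Matrix.add_apply, Matrix.smul_apply]
          by_cases hj : i = j
          · subst hj
            rw [Matrix.diagonal_apply_eq, hsk, Pi.single_eq_of_ne hi]; simp
          · rw [Matrix.diagonal_apply_ne _ hj]; simp
      rw [this]
      simp only [Matrix.mul_add, Matrix.add_mul, Matrix.mul_smul, Matrix.smul_mul]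
    rw [h1, Matrix.det_mul, Matrix.det_mul, Matrix.det_updateRow_add, Matrix.det_updateRow_smul,
      Matrix.updateRow_eq_self]
  have e0 := hgen 0
  have e1 := hgen 1
  have et := hgen t
  have f0 : η + (0:ℝ) • (ξ - η) = η := by simp
  have f1 : η + (1:ℝ) • (ξ - η) = ξ := by simp
  have ft : η + t • (ξ - η) = t • ξ + (1 - t) • η := by
    rw [smul_sub, sub_smul, one_smul]; abel
  rw [f0] at e0
  rw [f1] at e1
  rw [ft] at et
  rw [e0, e1, et]; ring

lemma rco_det {n : ℕ} (E : Set (Mat n n)) (hE : ∀ ξ ∈ E, 0 ≤ ξ.det) :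
    ∀ ξ ∈ RcoF E, 0 ≤ ξ.det := by
  intro ξ hξ
  have := hξ (fun η => - η.det) (by
    intro t _ ξ η h
    simp only
    rw [det_affine ξ η h t]; linarith) (fun η hη => by simpa using hE η hη)
  simpa using this

lemma rco_bdd {n : ℕ} (E : Set (Mat n n)) (C : ℝ) (hE : ∀ ξ ∈ E, ∑ i, ∑ j, (ξ i j) ^ 2 ≤ C) :
    ∀ ξ ∈ RcoF E, ∑ i, ∑ j, (ξ i j) ^ 2 ≤ C := by
  intro ξ hξ
  have := hξ (fun η => ∑ i, ∑ j, (η i j) ^ 2 - C) (by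
    intro t ht ξ η h
    have : ∑ i, ∑ j, ((t • ξ + (1 - t) • η) i j) ^ 2 ≤
        t * ∑ i, ∑ j, (ξ i j) ^ 2 + (1 - t) * ∑ i, ∑ j, (η i j) ^ 2 := by
      simp only [Finset.mul_sum, ← Finset.sum_add_distrib]
      refine Finset.sum_le_sum fun i _ => Finset.sum_le_sum fun j _ => ?_
      simp only [Matrix.add_apply, Matrix.smul_apply, smul_eq_mul]
      nlinarith [mul_nonneg (mul_nonneg ht.1 (sub_nonneg.2 ht.2)) (sq_nonneg (ξ i j - η i j))]
    simp only
    linarith) (fun η hη => by simpa using hE η hη)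
  simpa using this

lemma rco_inv {n : ℕ} (E : Set (Mat n n)) (A B : Mat n n) (hA : Aᵀ * A = 1) (hB : B * Bᵀ = 1)
    (hE : ∀ ξ ∈ E, A * ξ * B ∈ E) : ∀ ξ ∈ RcoF E, A * ξ * B ∈ RcoF E := by
  intro ξ hξ f hf hfE
  have hVt : Bᵀᵀ * Bᵀ = 1 := by rw [Matrix.transpose_transpose]; exact hB
  have hBu : IsUnit B.det := by rw [← Matrix.det_transpose]; exact orth_det_unit hVt
  refine hξ (fun η => f (A * η * B)) ?_ (fun η hη => hfE _ (hE η hη))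
  intro t ht ξ η h
  have h1 := hf t ht (A * ξ * B) (A * η * B) (by
    rw [← Matrix.sub_mul, ← Matrix.mul_sub, Matrix.rank_mul_eq_left_of_isUnit_det _ _ hBu,
      Matrix.rank_mul_eq_right_of_isUnit_det _ _ (orth_det_unit hA)]
    exact h)
  simp only [Matrix.mul_add, Matrix.add_mul, Matrix.mul_smul, Matrix.smul_mul]
  exact h1

lemma svd_det {n : ℕ} (ξ : Mat n n) (hd : 0 ≤ ξ.det) : ∃ U V : Mat n n, Uᵀ * U = 1 ∧ V * Vᵀ = 1 ∧
    U.det * V.det = 1 ∧ ξ = U * Matrix.diagonal (singularValues ξ) * V := by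
  obtain ⟨U, V, hU, hV, h⟩ := svd ξ
  have d1 := orth_det hU
  have d2 : V.det * V.det = 1 := by
    have := congrArg Matrix.det hV
    rwa [Matrix.det_mul, Matrix.det_one, Matrix.det_transpose] at this
  have d3 : (U.det * V.det - 1) * (U.det * V.det + 1) = 0 := by
    calc _ = (U.det * U.det) * (V.det * V.det) - 1 := by ring
      _ = 0 := by rw [d1, d2]; ring
  rcases mul_eq_zero.1 d3 with d | d
  · exact ⟨U, V, hU, hV, by linarith, h⟩
  · have hdet : ξ.det = U.det * V.det * ∏ i, singularValues ξ i := by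
      conv_lhs => rw [h]
      rw [Matrix.det_mul, Matrix.det_mul, Matrix.det_diagonal]; ring
    have hp : 0 ≤ ∏ i, singularValues ξ i := Finset.prod_nonneg fun i _ => sv_nonneg ξ i
    have hz : ∏ i, singularValues ξ i = 0 := by
      have : U.det * V.det = -1 := by linarith
      rw [this] at hdet
      linarith
    obtain ⟨k, -, hk⟩ := Finset.prod_eq_zero_iff.1 hz
    set J : Mat n n := Matrix.diagonal (Function.update (fun _ => (1:ℝ)) k (-1)) with hJ
    have hJJ : J * J = 1 := by
      rw [hJ, Matrix.diagonal_mul_diagonal, ← Matrix.diagonal_one]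
      congr 1
      funext i
      by_cases hi : i = k
      · subst hi; simp
      · simp [Function.update_of_ne hi]
    have hJt : Jᵀ = J := by rw [hJ, Matrix.diagonal_transpose]
    have hJd : J.det = -1 := by
      rw [hJ, Matrix.det_diagonal, Finset.prod_update_of_mem (Finset.mem_univ k)]; simp
    have hJs : J * Matrix.diagonal (singularValues ξ) = Matrix.diagonal (singularValues ξ) := by
      rw [hJ, Matrix.diagonal_mul_diagonal]
      congr 1
      funext i
      by_cases hi : i = k
      · subst hi; simp [hk]
      · simp [Function.update_of_ne hi]
    refine ⟨U * J, V, ?_, hV, ?_, ?_⟩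
    · rw [Matrix.transpose_mul, hJt]
      calc J * Uᵀ * (U * J) = J * (Uᵀ * U) * J := by simp only [Matrix.mul_assoc]
        _ = 1 := by rw [hU, Matrix.mul_one, hJJ]
    · rw [Matrix.det_mul, hJd]; linarith
    · rw [Matrix.mul_assoc U, hJs]; exact h

end Helpers

section Statements

open Metric Set

theorem stmt7 {n : ℕ} (ΛE : Set (Fin n → ℝ)) (hΛc : IsCompact ΛE)
    (hΛord : ∀ x ∈ ΛE, (∀ i, 0 ≤ x i) ∧ ∀ i j : Fin n, i ≤ j → x i ≤ x j)
    (E : Set (Mat n n))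
    (hE : E = {ξ : Mat n n | singularValues ξ ∈ ΛE ∧ 0 ≤ ξ.det}) :
    IsCompact (singularValues '' RcoF E) ∧
    (∀ x ∈ singularValues '' RcoF E,
      (∀ i, 0 ≤ x i) ∧ ∀ i j : Fin n, i ≤ j → x i ≤ x j) ∧
    RcoF E = {ξ : Mat n n | singularValues ξ ∈ singularValues '' RcoF E ∧ 0 ≤ ξ.det} := by
  have hEinv : ∀ A B : Mat n n, A.transpose * A = 1 → B * B.transpose = 1 → A.det * B.det = 1 →
      ∀ ξ ∈ E, A * ξ * B ∈ E := by
    intro A B hA hB hd ξ hξ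
    rw [hE] at hξ ⊢
    refine ⟨?_, ?_⟩
    · rw [sv_mul ξ A B hA hB]; exact hξ.1
    · have : (A * ξ * B).det = (A.det * B.det) * ξ.det := by
        rw [Matrix.det_mul, Matrix.det_mul]; ring
      rw [this, hd, one_mul]; exact hξ.2
  have hR : ∀ ξ : Mat n n, 0 ≤ ξ.det →
      (ξ ∈ RcoF E ↔ Matrix.diagonal (singularValues ξ) ∈ RcoF E) := by
    intro ξ hξ
    obtain ⟨U, V, hU, hV, hd, h⟩ := svd_det ξ hξ
    have hUU : U * U.transpose = 1 := mul_eq_one_comm.1 hU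
    have hVV : V.transpose * V = 1 := mul_eq_one_comm.1 hV
    constructor
    · intro hm
      have := rco_inv E U.transpose V.transpose (by rwa [Matrix.transpose_transpose])
        (by rwa [Matrix.transpose_transpose])
        (hEinv _ _ (by rwa [Matrix.transpose_transpose]) (by rwa [Matrix.transpose_transpose])
          (by rwa [Matrix.det_transpose, Matrix.det_transpose])) ξ hm
      have e : U.transpose * ξ * V.transpose = Matrix.diagonal (singularValues ξ) := by
        conv_lhs => rw [h]
        calc _ = (U.transpose * U) * Matrix.diagonal (singularValues ξ) * (V * V.transpose) := by
              simp only [Matrix.mul_assoc]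
          _ = _ := by rw [hU, hV, Matrix.one_mul, Matrix.mul_one]
      rwa [e] at this
    · intro hm
      have := rco_inv E U V hU hV (hEinv _ _ hU hV hd) _ hm
      rwa [← h] at this
  have hdet : ∀ ξ ∈ RcoF E, 0 ≤ ξ.det := rco_det E (fun ξ hξ => by rw [hE] at hξ; exact hξ.2)
  have himg : singularValues '' RcoF E =
      {x | ((∀ i, 0 ≤ x i) ∧ ∀ i j : Fin n, i ≤ j → x i ≤ x j) ∧ Matrix.diagonal x ∈ RcoF E} := by
    ext x
    constructor
    · rintro ⟨ξ, hξ, rfl⟩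
      exact ⟨⟨sv_nonneg ξ, fun i j hij => sv_mono ξ hij⟩, (hR ξ (hdet ξ hξ)).1 hξ⟩
    · rintro ⟨⟨h0, hm⟩, hx⟩
      exact ⟨_, hx, sv_diag x h0 (fun i j hij => hm i j hij)⟩
  refine ⟨?_, ?_, ?_⟩
  · obtain ⟨C, hC⟩ := hΛc.bddAbove_image (f := fun x => ∑ i, (x i) ^ 2) (by fun_prop)
    have hb := rco_bdd E C (fun ξ hξ => by
      rw [hE] at hξ
      rw [← sv_sum_sq]
      exact hC ⟨_, hξ.1, rfl⟩)
    refine Metric.isCompact_of_isClosed_isBounded ?_ ?_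
    · rw [himg]
      have e : {x : Fin n → ℝ | ((∀ i, 0 ≤ x i) ∧ ∀ i j : Fin n, i ≤ j → x i ≤ x j) ∧
          Matrix.diagonal x ∈ RcoF E} = (⋂ i, {x | 0 ≤ x i}) ∩
          (⋂ i, ⋂ j, ⋂ (_ : i ≤ j), {x | x i ≤ x j}) ∩
          (⋂ (f : Mat n n → ℝ), ⋂ (_ : RankOneConvexFun f), ⋂ (_ : ∀ η ∈ E, f η ≤ 0),
            {x | f (Matrix.diagonal x) ≤ 0}) := by
        ext x
        simp [RcoF]
      rw [e]
      refine IsClosed.inter (IsClosed.inter ?_ ?_) ?_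
      · exact isClosed_iInter fun i => isClosed_le continuous_const (continuous_apply i)
      · exact isClosed_iInter fun i => isClosed_iInter fun j => isClosed_iInter fun _ =>
          isClosed_le (continuous_apply i) (continuous_apply j)
      · refine isClosed_iInter fun f => isClosed_iInter fun hf => isClosed_iInter fun _ => ?_
        refine sep_closed (fun x => f (Matrix.diagonal x)) ?_
        intro x i a b t h0 h1
        by_cases hab : a = b
        · subst hab
          have : t * a + (1 - t) * a = a := by ring
          rw [this]
          apply le_of_eq
          ring
        · have hr := hf t ⟨h0, h1⟩ (Matrix.diagonal (Function.update x i a))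
            (Matrix.diagonal (Function.update x i b)) (by
              rw [← rank_one_diag i (a - b) (sub_ne_zero.2 hab), Matrix.diagonal_sub]
              congr 2
              funext j
              by_cases hj : j = i
              · subst hj; simp
              · simp [hj])
          have e2 : t • Matrix.diagonal (Function.update x i a) +
              (1 - t) • Matrix.diagonal (Function.update x i b) =
              Matrix.diagonal (Function.update x i (t * a + (1 - t) * b)) := by
            rw [← Matrix.diagonal_smul, ← Matrix.diagonal_smul, Matrix.diagonal_add]
            congr 1
            funext j
            by_cases hj : j = i
            · subst hj; simp
            · simp [hj]; ring
          rwa [e2] at hr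
    · rw [himg, isBounded_iff_forall_norm_le]
      refine ⟨C + 1, ?_⟩
      rintro x ⟨-, hx⟩
      have h1 := hb _ hx
      have hsum : ∑ i, (x i) ^ 2 ≤ C := by
        refine le_trans (Finset.sum_le_sum fun i _ => ?_) h1
        have := Finset.single_le_sum (f := fun j => (Matrix.diagonal x i j) ^ 2)
          (fun j _ => sq_nonneg _) (Finset.mem_univ i)
        simpa using this
      have hC0 : 0 ≤ C := le_trans (Finset.sum_nonneg fun i _ => sq_nonneg _) hsum
      rw [pi_norm_le_iff_of_nonneg (by linarith)]
      intro i
      have h2 := Finset.single_le_sum (f := fun j => (x j) ^ 2)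
          (fun j _ => sq_nonneg _) (Finset.mem_univ i)
      rw [Real.norm_eq_abs]
      nlinarith [sq_abs (x i), abs_nonneg (x i), sq_nonneg (|x i| - 1)]
  · rw [himg]
    exact fun x hx => hx.1
  · ext ξ
    constructor
    · exact fun h => ⟨⟨ξ, h, rfl⟩, hdet ξ h⟩
    · rintro ⟨⟨η, hη, he⟩, hd⟩
      rw [hR ξ hd, ← he]
      exact (hR η (hdet η hη)).1 hη

end Statements
end

section
/- Let E = {ξ ∈ ℝ^{2×2} : (λ_1(ξ), λ_2(ξ)) ∈ Λ_E, det ξ ≥ 0}, where Λ_E is a compact subset of {(x_1, x_2) ∈ ℝ² : 0 ≤ x_1 ≤ x_2} such that R(Λ_E) is connected. Then Rco_f E = {ξ ∈ ℝ^{2×2} : (λ_1(ξ), λ_2(ξ)) ∈ R(Λ_E), det ξ ≥ 0}. -/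
open MeasureTheory Filter

attribute [local instance] Classical.propDecidable
attribute [local instance] Matrix.frobeniusNormedAddCommGroup Matrix.frobeniusNormedSpace

lemma aux_bd (S : Set (ℝ × ℝ)) (hS : IsCompact S) (x0 y0 : ℝ)
    (h0 : ∀ p ∈ S, p.1 = x0 → p.2 < y0) :
    ∃ C : ℝ, 0 ≤ C ∧ ∀ p ∈ S, p.2 - y0 ≤ C * |p.1 - x0| := by
  have hK : IsCompact (S ∩ {p : ℝ × ℝ | y0 ≤ p.2}) :=
    hS.inter_right (isClosed_le continuous_const continuous_snd)
  have hc : ContinuousOn (fun p : ℝ × ℝ => (p.2 - y0) / |p.1 - x0|)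
      (S ∩ {p : ℝ × ℝ | y0 ≤ p.2}) := by
    apply ContinuousOn.div
    · fun_prop
    · fun_prop
    · rintro p ⟨hp, hp2⟩ h
      have : p.1 = x0 := by
        have := abs_eq_zero.mp h
        linarith
      exact absurd (h0 p hp this) (not_lt.mpr hp2)
  obtain ⟨C, hC⟩ := hK.bddAbove_image hc
  refine ⟨max C 0, le_max_right _ _, fun p hp => ?_⟩
  by_cases h : y0 ≤ p.2
  · have h1 := hC ⟨p, ⟨hp, h⟩, rfl⟩
    have hpos : 0 < |p.1 - x0| := by
      apply abs_pos.mpr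
      intro h2
      exact absurd (h0 p hp (by linarith)) (not_lt.mpr h)
    have h1 : (p.2 - y0) / |p.1 - x0| ≤ C := h1
    rw [div_le_iff₀ hpos] at h1
    exact h1.trans (mul_le_mul_of_nonneg_right (le_max_left _ _) hpos.le)
  · push Not at h
    have : 0 ≤ max C 0 * |p.1 - x0| := by positivity
    linarith

lemma aux_sep (S : Set (ℝ × ℝ)) (hS : IsCompact S) (x0 y0 : ℝ)
    (h0 : ∀ p ∈ S, p.1 = x0 → p.2 < y0)
    (hch : ∀ p ∈ S, ∀ q ∈ S, p.1 < x0 → x0 < q.1 →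
      p.2 * (q.1 - x0) + q.2 * (x0 - p.1) ≤ y0 * (q.1 - p.1)) :
    ∃ k : ℝ, ∀ p ∈ S, p.2 - y0 ≤ k * (p.1 - x0) := by
  obtain ⟨C, hC0, hC⟩ := aux_bd S hS x0 y0 h0
  obtain ⟨k, hk1, hk2⟩ := exists_between_of_forall_le
    (s := insert (-C) {s | ∃ q ∈ S, x0 < q.1 ∧ s = (q.2 - y0) / (q.1 - x0)})
    (t := insert C {s | ∃ p ∈ S, p.1 < x0 ∧ s = (y0 - p.2) / (x0 - p.1)})
    ⟨_, Set.mem_insert _ _⟩ ⟨_, Set.mem_insert _ _⟩ (by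
      rintro x (rfl | ⟨q, hq, hq1, rfl⟩) y (rfl | ⟨p, hp, hp1, rfl⟩)
      · linarith
      · have := hC p hp
        rw [abs_of_neg (by linarith)] at this
        rw [le_div_iff₀ (by linarith)]
        linarith
      · have := hC q hq
        rw [abs_of_pos (by linarith)] at this
        rw [div_le_iff₀ (by linarith)]
        linarith
      · have := hch p hp q hq hp1 hq1
        rw [div_le_div_iff₀ (by linarith) (by linarith)]
        nlinarith)
  refine ⟨k, fun p hp => ?_⟩
  rcases lt_trichotomy p.1 x0 with h | h | h
  · have := hk2 (Set.mem_insert_of_mem _ ⟨p, hp, h, rfl⟩)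
    rw [le_div_iff₀ (by linarith)] at this
    linarith
  · have := h0 p hp h
    rw [h]; linarith
  · have := hk1 (Set.mem_insert_of_mem _ ⟨p, hp, h, rfl⟩)
    rw [div_le_iff₀ (by linarith)] at this
    linarith

lemma aux_planar (R : Set (ℝ × ℝ)) (hR : IsCompact R)
    (hpos : ∀ p ∈ R, 0 ≤ p.1 ∧ p.1 ≤ p.2)
    (F1 : ∀ p ∈ R, ∀ x y : ℝ, 0 ≤ x → x ≤ y → x * y = p.1 * p.2 → y - x ≤ p.2 - p.1 →
      (x, y) ∈ R)
    (F2 : ∀ p ∈ R, ∀ q ∈ R, |(q.1 + q.2) - (p.1 + p.2)| ≤ |(q.2 - q.1) - (p.2 - p.1)| →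
      ∀ t : ℝ, 0 ≤ t → t ≤ 1 → ∀ x y : ℝ, 0 ≤ x → x ≤ y →
      x * y = (1 - t) * (p.1 * p.2) + t * (q.1 * q.2) →
      y - x ≤ (1 - t) * (p.2 - p.1) + t * (q.2 - q.1) → (x, y) ∈ R)
    (F3 : ∀ p ∈ R, ∀ q ∈ R, p.1 ≤ q.1 → q.1 ≤ p.2 → p.2 ≤ q.2 →
      ∀ t : ℝ, 0 ≤ t → t ≤ 1 → ∀ x y : ℝ, 0 ≤ x → x ≤ y →
      x * y = (1 - t) * (p.1 * p.2) + t * (q.1 * q.2) →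
      x + y ≤ (1 - t) * (p.1 + p.2) + t * (q.1 + q.2) → (x, y) ∈ R)
    (F4 : ∀ p ∈ R, ∀ q ∈ R, ∀ s : ℝ, 0 ≤ s → p.1 * p.2 ≤ s * s → s * s ≤ q.1 * q.2 →
      (s, s) ∈ R)
    (x0 y0 : ℝ) (hx0 : 0 ≤ x0) (hxy : x0 ≤ y0) (hX : (x0, y0) ∉ R) :
    (∃ k : ℝ, ∀ p ∈ R, (p.2 - p.1) - (y0 - x0) ≤ k * (p.1 * p.2 - x0 * y0)) ∨
    (∃ k : ℝ, ∀ p ∈ R, (p.1 + p.2) - (x0 + y0) ≤ k * (p.1 * p.2 - x0 * y0)) := by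
  -- vertical segments
  have V : ∀ u v : ℝ, (x0, u) ∈ R → (x0, v) ∈ R → u ≤ y0 → y0 ≤ v → False := by
    intro u v hu hv h1 h2
    rcases eq_or_lt_of_le (h1.trans h2) with h | h
    · have : y0 = u := by linarith
      exact hX (this ▸ hu)
    · apply hX
      have hvu : 0 < v - u := by linarith
      refine F2 _ hu _ hv (le_of_eq ?_) ((y0 - u) / (v - u)) (by apply div_nonneg <;> linarith)
        (by rw [div_le_one hvu]; linarith) x0 y0 hx0 hxy ?_ (le_of_eq ?_)
      · congr 1; simp
      · simp only; field_simp; ring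
      · simp only; field_simp; ring
  have H : ∀ u v : ℝ, (u, y0) ∈ R → (v, y0) ∈ R → u ≤ x0 → x0 ≤ v → False := by
    intro u v hu hv h1 h2
    rcases eq_or_lt_of_le (h1.trans h2) with h | h
    · have : x0 = u := by linarith
      exact hX (this ▸ hu)
    · apply hX
      have hvu : 0 < v - u := by linarith
      refine F2 _ hu _ hv (le_of_eq ?_) ((x0 - u) / (v - u)) (by apply div_nonneg <;> linarith)
        (by rw [div_le_one hvu]; linarith) x0 y0 hx0 hxy ?_ (le_of_eq ?_)
      · rw [← abs_neg]; congr 1; simp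
      · simp only; field_simp; ring
      · simp only; field_simp; ring
  have LR1 : ∀ p ∈ R, ∀ q ∈ R, p.1 * p.2 < x0 * y0 → x0 * y0 < q.1 * q.2 →
      p.1 ≤ x0 → q.1 ≤ x0 → False := by
    intro p hp q hq h1 h2 h3 h4
    obtain ⟨hp1, hp2⟩ := hpos p hp
    obtain ⟨hq1, hq2⟩ := hpos q hq
    have hx : 0 < x0 := by
      rcases eq_or_lt_of_le hx0 with h | h
      · rw [← h] at h1
        nlinarith
      · exact h
    have hq0 : 0 < q.1 := by
      rcases eq_or_lt_of_le hq1 with h | h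
      · rw [← h] at h2
        nlinarith
      · exact h
    have hQ : (x0, q.1 * q.2 / x0) ∈ R := by
      have e1 : x0 ≤ q.1 * q.2 / x0 := by
        rw [le_div_iff₀ hx]; nlinarith
      have e2 : q.1 * q.2 / x0 ≤ q.2 := by
        rw [div_le_iff₀ hx]; nlinarith
      exact F1 q hq _ _ hx0 e1 (by field_simp) (by linarith)
    have hQ2 : y0 ≤ q.1 * q.2 / x0 := by
      rw [le_div_iff₀ hx]; nlinarith
    by_cases h : x0 * x0 ≤ p.1 * p.2
    · have hP : (x0, p.1 * p.2 / x0) ∈ R := by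
        have e1 : x0 ≤ p.1 * p.2 / x0 := by
          rw [le_div_iff₀ hx]; nlinarith
        have e2 : p.1 * p.2 / x0 ≤ p.2 := by
          rw [div_le_iff₀ hx]; nlinarith
        exact F1 p hp _ _ hx0 e1 (by field_simp) (by linarith)
      refine V _ _ hP hQ ?_ hQ2
      rw [div_le_iff₀ hx]; nlinarith
    · exact V _ _ (F4 p hp q hq x0 hx0 (by linarith) (by nlinarith)) hQ hxy hQ2
  have LR2 : ∀ p ∈ R, ∀ q ∈ R, p.1 * p.2 < x0 * y0 → x0 * y0 < q.1 * q.2 →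
      y0 ≤ p.2 → y0 ≤ q.2 → False := by
    intro p hp q hq h1 h2 h3 h4
    obtain ⟨hp1, hp2⟩ := hpos p hp
    obtain ⟨hq1, hq2⟩ := hpos q hq
    have hx : 0 < x0 := by
      rcases eq_or_lt_of_le hx0 with h | h
      · rw [← h] at h1
        nlinarith
      · exact h
    have hy : 0 < y0 := by linarith
    have hP : (p.1 * p.2 / y0, y0) ∈ R := by
      have e1 : p.1 * p.2 / y0 ≤ y0 := by
        rw [div_le_iff₀ hy]; nlinarith
      have e2 : p.1 ≤ p.1 * p.2 / y0 := by
        rw [le_div_iff₀ hy]; nlinarith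
      exact F1 p hp _ _ (by linarith) e1 (by field_simp) (by linarith)
    have hP2 : p.1 * p.2 / y0 ≤ x0 := by
      rw [div_le_iff₀ hy]; nlinarith
    by_cases h : q.1 * q.2 ≤ y0 * y0
    · have hQ : (q.1 * q.2 / y0, y0) ∈ R := by
        have e1 : q.1 * q.2 / y0 ≤ y0 := by
          rw [div_le_iff₀ hy]; nlinarith
        have e2 : q.1 ≤ q.1 * q.2 / y0 := by
          rw [le_div_iff₀ hy]; nlinarith
        exact F1 q hq _ _ (by linarith) e1 (by field_simp) (by linarith)
      refine H _ _ hP hQ hP2 ?_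
      rw [le_div_iff₀ hy]; nlinarith
    · exact H _ _ hP (F4 p hp q hq y0 hy.le (by nlinarith) (by nlinarith)) hP2 hxy
  -- b separation
  have Bsep : (∀ p ∈ R, ∀ q ∈ R, p.1 * p.2 < x0 * y0 → x0 * y0 < q.1 * q.2 →
      p.1 < q.1 → p.2 < q.2 → x0 < p.1 ∨ q.2 < y0) →
      ∃ k : ℝ, ∀ p ∈ R, (p.2 - p.1) - (y0 - x0) ≤ k * (p.1 * p.2 - x0 * y0) := by
    intro hcase
    obtain ⟨k, hk⟩ := aux_sep ((fun p : ℝ × ℝ => (p.1 * p.2, p.2 - p.1)) '' R)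
      (hR.image (by fun_prop)) (x0 * y0) (y0 - x0)
      (by
        rintro _ ⟨p, hp, rfl⟩ h
        by_contra h2
        push Not at h2
        exact hX (F1 p hp x0 y0 hx0 hxy h.symm h2))
      (by
        rintro _ ⟨p, hp, rfl⟩ _ ⟨q, hq, rfl⟩ h1 h2
        simp only at h1 h2 ⊢
        obtain ⟨hp1, hp2⟩ := hpos p hp
        obtain ⟨hq1, hq2⟩ := hpos q hq
        by_cases hAB : |(q.1 + q.2) - (p.1 + p.2)| ≤ |(q.2 - q.1) - (p.2 - p.1)|
        · by_contra hcon
          push Not at hcon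
          apply hX
          have hd : 0 < q.1 * q.2 - p.1 * p.2 := by linarith
          refine F2 p hp q hq hAB ((x0 * y0 - p.1 * p.2) / (q.1 * q.2 - p.1 * p.2))
            (by apply div_nonneg <;> linarith) (by rw [div_le_one hd]; linarith) x0 y0 hx0 hxy ?_ ?_
          · field_simp; ring
          · rw [show (1 - (x0 * y0 - p.1 * p.2) / (q.1 * q.2 - p.1 * p.2)) * (p.2 - p.1) +
              (x0 * y0 - p.1 * p.2) / (q.1 * q.2 - p.1 * p.2) * (q.2 - q.1) =
              ((p.2 - p.1) * (q.1 * q.2 - x0 * y0) + (q.2 - q.1) * (x0 * y0 - p.1 * p.2)) /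
                (q.1 * q.2 - p.1 * p.2) by field_simp; ring]
            rw [le_div_iff₀ hd]
            exact hcon.le
        · push Not at hAB
          have hsq := sq_lt_sq.mpr hAB
          have h12 : 0 < (q.1 - p.1) * (q.2 - p.2) := by nlinarith
          have h3 : p.1 < q.1 ∧ p.2 < q.2 := by
            rcases pos_and_pos_or_neg_and_neg_of_mul_pos h12 with h | h
            · constructor <;> linarith
            · exfalso
              have : q.1 * q.2 ≤ p.1 * p.2 :=
                mul_le_mul (by linarith) (by linarith) (by linarith) (by linarith)
              linarith
          rcases hcase p hp q hq h1 h2 h3.1 h3.2 with h | h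
          · have hv : 0 < p.1 := by linarith
            have e1 : p.1 * (q.2 - q.1) ≤ q.1 * q.2 - p.1 ^ 2 := by nlinarith
            have e2 : x0 * y0 - p.1 ^ 2 ≤ p.1 * (y0 - x0) := by nlinarith
            have e3 : p.1 * ((p.2 - p.1) * (q.1 * q.2 - x0 * y0) +
                (q.2 - q.1) * (x0 * y0 - p.1 * p.2)) ≤
                p.1 * ((y0 - x0) * (q.1 * q.2 - p.1 * p.2)) := by
              have i1 := mul_le_mul_of_nonneg_right e1 (show 0 ≤ x0 * y0 - p.1 * p.2 by linarith)
              have i2 := mul_le_mul_of_nonneg_right e2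
                (show 0 ≤ q.1 * q.2 - p.1 * p.2 by linarith)
              nlinarith
            exact le_of_mul_le_mul_left e3 hv
          · have hv : 0 < q.2 := by linarith
            have e1 : q.2 * (p.2 - p.1) ≤ q.2 ^ 2 - p.1 * p.2 := by nlinarith
            have e2 : q.2 ^ 2 - x0 * y0 ≤ q.2 * (y0 - x0) := by nlinarith
            have e3 : q.2 * ((p.2 - p.1) * (q.1 * q.2 - x0 * y0) +
                (q.2 - q.1) * (x0 * y0 - p.1 * p.2)) ≤
                q.2 * ((y0 - x0) * (q.1 * q.2 - p.1 * p.2)) := by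
              have i1 := mul_le_mul_of_nonneg_right e1 (show 0 ≤ q.1 * q.2 - x0 * y0 by linarith)
              have i2 := mul_le_mul_of_nonneg_right e2
                (show 0 ≤ q.1 * q.2 - p.1 * p.2 by linarith)
              nlinarith
            exact le_of_mul_le_mul_left e3 hv)
    exact ⟨k, fun p hp => hk _ ⟨p, hp, rfl⟩⟩
  by_cases L1 : ∃ p ∈ R, p.1 * p.2 < x0 * y0 ∧ p.1 ≤ x0
  swap
  · push Not at L1
    exact Or.inl (Bsep fun p hp q hq h1 _ _ _ => Or.inl (L1 p hp h1))
  by_cases R2 : ∃ q ∈ R, x0 * y0 < q.1 * q.2 ∧ y0 ≤ q.2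
  swap
  · push Not at R2
    exact Or.inl (Bsep fun p hp q hq _ h2 _ _ => Or.inr (R2 q hq h2))
  right
  obtain ⟨pl, hpl, hpl1, hpl2⟩ := L1
  obtain ⟨qr, hqr, hqr1, hqr2⟩ := R2
  have R1 : ∀ q ∈ R, x0 * y0 < q.1 * q.2 → x0 < q.1 := by
    intro q hq h
    by_contra hc
    exact LR1 pl hpl q hq hpl1 h hpl2 (not_lt.mp hc)
  have L2 : ∀ p ∈ R, p.1 * p.2 < x0 * y0 → p.2 < y0 := by
    intro p hp h
    by_contra hc
    exact LR2 p hp qr hqr h hqr1 (not_lt.mp hc) hqr2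
  have hx0' : 0 < x0 := by
    rcases eq_or_lt_of_le hx0 with h | h
    · obtain ⟨h3, h4⟩ := hpos pl hpl
      rw [← h] at hpl1
      nlinarith
    · exact h
  have line : ∀ u : ℝ, x0 ≤ u → u ≤ y0 → ∀ p q : ℝ × ℝ, p.1 * p.2 < x0 * y0 →
      x0 * y0 < q.1 * q.2 → 0 ≤ (p.1 - u) * (p.2 - u) → 0 ≤ (q.1 - u) * (q.2 - u) →
      (p.1 + p.2) * (q.1 * q.2 - x0 * y0) + (q.1 + q.2) * (x0 * y0 - p.1 * p.2) ≤
        (x0 + y0) * (q.1 * q.2 - p.1 * p.2) := by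
    intro u hu1 hu2 p q h1 h2 hp hq
    have e0 : 0 ≤ (u - x0) * (y0 - u) := mul_nonneg (by linarith) (by linarith)
    have e3 : u * ((p.1 + p.2) * (q.1 * q.2 - x0 * y0) + (q.1 + q.2) * (x0 * y0 - p.1 * p.2)) ≤
        u * ((x0 + y0) * (q.1 * q.2 - p.1 * p.2)) := by
      have i1 := mul_nonneg hp (show 0 ≤ q.1 * q.2 - x0 * y0 by linarith)
      have i2 := mul_nonneg hq (show 0 ≤ x0 * y0 - p.1 * p.2 by linarith)
      have i3 := mul_nonneg e0 (show 0 ≤ q.1 * q.2 - p.1 * p.2 by linarith)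
      nlinarith
    exact le_of_mul_le_mul_left e3 (by linarith)
  obtain ⟨k, hk⟩ := aux_sep ((fun p : ℝ × ℝ => (p.1 * p.2, p.1 + p.2)) '' R)
    (hR.image (by fun_prop)) (x0 * y0) (x0 + y0)
    (by
      rintro _ ⟨p, hp, rfl⟩ h
      by_contra h2
      push Not at h2
      obtain ⟨hp1, hp2⟩ := hpos p hp
      simp only at h h2
      refine hX (F1 p hp x0 y0 hx0 hxy h.symm ?_)
      refine (sq_le_sq₀ (by linarith) (by linarith)).mp ?_
      nlinarith)
    (by
      rintro _ ⟨p, hp, rfl⟩ _ ⟨q, hq, rfl⟩ h1 h2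
      simp only at h1 h2 ⊢
      obtain ⟨hp1, hp2⟩ := hpos p hp
      obtain ⟨hq1, hq2⟩ := hpos q hq
      have hl := L2 p hp h1
      have hr := R1 q hq h2
      by_cases c1 : q.1 < p.1
      · exact line q.1 hr.le (by linarith) p q h1 h2
          (mul_nonneg (by linarith) (by linarith)) (by simp)
      by_cases c2 : q.2 < p.2
      · exact line p.2 (by linarith) hl.le p q h1 h2 (by simp)
          (mul_nonneg_of_nonpos_of_nonpos (by linarith) (by linarith))
      by_cases c3 : p.2 < q.1
      · refine line (max p.2 x0) (le_max_right _ _) (max_le hl.le hxy) p q h1 h2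
          (mul_nonneg_of_nonpos_of_nonpos ?_ ?_) (mul_nonneg ?_ ?_)
        · linarith [le_max_left p.2 x0]
        · linarith [le_max_left p.2 x0]
        · linarith [max_le c3.le hr.le]
        · linarith [max_le c3.le hr.le]
      push Not at c1 c2 c3
      by_contra hcon
      push Not at hcon
      apply hX
      have hd : 0 < q.1 * q.2 - p.1 * p.2 := by linarith
      refine F3 p hp q hq c1 c3 c2 ((x0 * y0 - p.1 * p.2) / (q.1 * q.2 - p.1 * p.2))
        (by apply div_nonneg <;> linarith) (by rw [div_le_one hd]; linarith) x0 y0 hx0 hxy ?_ ?_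
      · field_simp; ring
      · rw [show (1 - (x0 * y0 - p.1 * p.2) / (q.1 * q.2 - p.1 * p.2)) * (p.1 + p.2) +
          (x0 * y0 - p.1 * p.2) / (q.1 * q.2 - p.1 * p.2) * (q.1 + q.2) =
          ((p.1 + p.2) * (q.1 * q.2 - x0 * y0) + (q.1 + q.2) * (x0 * y0 - p.1 * p.2)) /
            (q.1 * q.2 - p.1 * p.2) by field_simp; ring]
        rw [le_div_iff₀ hd]
        exact hcon.le)
  exact ⟨k, fun p hp => hk _ ⟨p, hp, rfl⟩⟩

noncomputable def cz (ξ : Mat 2 2) : ℂ := ⟨(ξ 0 0 + ξ 1 1) / 2, (ξ 1 0 - ξ 0 1) / 2⟩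
noncomputable def cw (ξ : Mat 2 2) : ℂ := ⟨(ξ 0 0 - ξ 1 1) / 2, (ξ 1 0 + ξ 0 1) / 2⟩
noncomputable def cmk (z w : ℂ) : Mat 2 2 := !![z.re + w.re, w.im - z.im; z.im + w.im, z.re - w.re]

lemma nsq (z : ℂ) : ‖z‖ ^ 2 = z.re ^ 2 + z.im ^ 2 := by
  rw [Complex.sq_norm, Complex.normSq_apply]; ring

lemma cz_cmk (z w : ℂ) : cz (cmk z w) = z := by
  apply Complex.ext <;> simp [cz, cmk] <;> ring

lemma cw_cmk (z w : ℂ) : cw (cmk z w) = w := by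
  apply Complex.ext <;> simp [cw, cmk] <;> ring

lemma cmk_eta (ξ : Mat 2 2) : cmk (cz ξ) (cw ξ) = ξ := by
  ext i j
  fin_cases i <;> fin_cases j <;> simp [cz, cw, cmk] <;> ring

lemma cz_comb (s t : ℝ) (ξ η : Mat 2 2) :
    cz (s • ξ + t • η) = s * cz ξ + t * cz η := by
  apply Complex.ext <;> simp [cz] <;> ring

lemma cw_comb (s t : ℝ) (ξ η : Mat 2 2) :
    cw (s • ξ + t • η) = s * cw ξ + t * cw η := by
  apply Complex.ext <;> simp [cw] <;> ring

lemma cmk_comb (s t : ℝ) (z w z' w' : ℂ) :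
    s • cmk z w + t • cmk z' w' = cmk (s * z + t * z') (s * w + t * w') := by
  ext i j
  fin_cases i <;> fin_cases j <;> simp [cmk] <;> ring

lemma cmk_sub (z w z' w' : ℂ) :
    cmk z w - cmk z' w' = cmk (z - z') (w - w') := by
  ext i j
  fin_cases i <;> fin_cases j <;> simp [cmk] <;> ring

lemma det_czw (ξ : Mat 2 2) : ξ.det = ‖cz ξ‖ ^ 2 - ‖cw ξ‖ ^ 2 := by
  rw [nsq, nsq, Matrix.det_fin_two]; simp [cz, cw]; ring

lemma det_cmk (z w : ℂ) : (cmk z w).det = ‖z‖ ^ 2 - ‖w‖ ^ 2 := by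
  rw [det_czw, cz_cmk, cw_cmk]

lemma det_of_rank (A : Mat 2 2) (h : A.rank = 1) : A.det = 0 := by
  by_contra hd
  have := Matrix.rank_of_isUnit A ((Matrix.isUnit_iff_isUnit_det A).mpr (isUnit_iff_ne_zero.mpr hd))
  rw [h] at this
  simp at this

lemma rank_of_det (A : Mat 2 2) (h : A.det = 0) (h0 : A ≠ 0) : A.rank = 1 := by
  have h1 : A.rank ≠ 0 := by
    intro hr
    apply h0
    rw [Matrix.rank, Module.finrank_eq_zero_iff_of_free] at hr
    have hr2 : LinearMap.range A.mulVecLin = ⊥ := Submodule.subsingleton_iff_eq_bot.mp hr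
    rw [LinearMap.range_eq_bot] at hr2
    ext i j
    have := congrFun (LinearMap.congr_fun hr2 (Pi.single j 1)) i
    simpa using this
  have h2 : A.rank ≠ 2 := by
    intro hr
    have hr2 : LinearMap.range A.mulVecLin = ⊤ := by
      apply Submodule.eq_top_of_finrank_eq
      rw [← Matrix.rank, hr]; simp
    have : IsUnit A := by
      rw [← Matrix.mulVec_surjective_iff_isUnit]
      exact LinearMap.range_eq_top.mp hr2
    rw [Matrix.isUnit_iff_isUnit_det, h] at this
    simp at this
  have h3 := Matrix.rank_le_card_width A
  simp at h3
  omega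

lemma sv_eq (ξ : Mat 2 2) (hd : 0 ≤ ξ.det) :
    singularValues ξ 0 = ‖cz ξ‖ - ‖cw ξ‖ ∧ singularValues ξ 1 = ‖cz ξ‖ + ‖cw ξ‖ := by
  unfold singularValues
  have hnn := fun i => (Matrix.posSemidef_self_mul_conjTranspose ξ).eigenvalues_nonneg i
  have htr := (Matrix.isHermitian_mul_conjTranspose_self ξ).trace_eq_sum_eigenvalues
  have hdet := (Matrix.isHermitian_mul_conjTranspose_self ξ).det_eq_prod_eigenvalues
  have hmono := Tuple.monotone_sort (Matrix.isHermitian_mul_conjTranspose_self ξ).eigenvalues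
  have hmono := hmono (show (0 : Fin 2) ≤ 1 by simp)
  simp only [Function.comp] at hmono
  rw [← Equiv.sum_comp (Tuple.sort (Matrix.isHermitian_mul_conjTranspose_self ξ).eigenvalues)] at htr
  rw [← Equiv.prod_comp (Tuple.sort (Matrix.isHermitian_mul_conjTranspose_self ξ).eigenvalues)] at hdet
  have hn0 := hnn (Tuple.sort (Matrix.isHermitian_mul_conjTranspose_self ξ).eigenvalues 0)
  have hn1 := hnn (Tuple.sort (Matrix.isHermitian_mul_conjTranspose_self ξ).eigenvalues 1)
  rw [Fin.sum_univ_two] at htr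
  rw [Fin.prod_univ_two] at hdet
  generalize (Matrix.isHermitian_mul_conjTranspose_self ξ).eigenvalues
    (Tuple.sort (Matrix.isHermitian_mul_conjTranspose_self ξ).eigenvalues 0) = u at *
  generalize (Matrix.isHermitian_mul_conjTranspose_self ξ).eigenvalues
    (Tuple.sort (Matrix.isHermitian_mul_conjTranspose_self ξ).eigenvalues 1) = v at *
  have hu : √u ^ 2 = u := Real.sq_sqrt hn0
  have hv : √v ^ 2 = v := Real.sq_sqrt hn1
  have hu0 := Real.sqrt_nonneg u
  have hv0 := Real.sqrt_nonneg v
  have huv : √u ≤ √v := Real.sqrt_le_sqrt hmono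
  have t1 : √u ^ 2 + √v ^ 2 = 2 * (‖cz ξ‖ ^ 2 + ‖cw ξ‖ ^ 2) := by
    rw [hu, hv, nsq, nsq]
    simp [Matrix.trace, Matrix.mul_apply, Fin.sum_univ_two] at htr
    simp [cz, cw]
    linarith
  have t2 : √u * √v = ‖cz ξ‖ ^ 2 - ‖cw ξ‖ ^ 2 := by
    rw [← det_czw]
    rw [Matrix.det_mul, Matrix.det_conjTranspose] at hdet
    simp at hdet
    rw [← Real.sqrt_mul hn0, ← hdet]
    exact Real.sqrt_mul_self hd
  have a1 : √u + √v = 2 * ‖cz ξ‖ := by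
    rw [← sq_eq_sq₀ (by positivity) (by positivity)]
    nlinarith
  have a2 : √v - √u = 2 * ‖cw ξ‖ := by
    rw [← sq_eq_sq₀ (by linarith) (by positivity)]
    nlinarith
  constructor <;> linarith

lemma tri (a0 a1 L : ℝ) (h0 : 0 ≤ a0) (h1 : 0 ≤ a1) (hL1 : |a1 - a0| ≤ L) (hL2 : L ≤ a0 + a1) :
    ∃ z : ℂ, ‖z‖ = a1 ∧ ‖z - (a0 : ℂ)‖ = L := by
  have hL : 0 ≤ L := (abs_nonneg _).trans hL1
  suffices ∃ x y : ℝ, x ^ 2 + y ^ 2 = a1 ^ 2 ∧ (x - a0) ^ 2 + y ^ 2 = L ^ 2 by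
    obtain ⟨x, y, e1, e2⟩ := this
    refine ⟨⟨x, y⟩, ?_, ?_⟩
    · rw [← sq_eq_sq₀ (norm_nonneg _) h1, nsq]; exact e1
    · rw [← sq_eq_sq₀ (norm_nonneg _) hL, nsq]; simpa using e2
  rcases eq_or_lt_of_le h0 with h | h
  · subst h
    simp only [sub_zero, zero_add] at hL1 hL2
    have : L = a1 := le_antisymm hL2 (by rwa [abs_of_nonneg h1] at hL1)
    exact ⟨a1, 0, by ring, by rw [this]; ring⟩
  · have e1 : (a1 - a0) ^ 2 ≤ L ^ 2 := sq_le_sq.mpr (by rwa [abs_of_nonneg hL])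
    have e2 : L ^ 2 ≤ (a0 + a1) ^ 2 := by
      apply (sq_le_sq₀ hL (by linarith)).mpr hL2
    have e3 : (a0 ^ 2 + a1 ^ 2 - L ^ 2) ^ 2 ≤ (2 * a0 * a1) ^ 2 := by
      apply sq_le_sq'
      · nlinarith
      · nlinarith
    have e4 : ((a0 ^ 2 + a1 ^ 2 - L ^ 2) / (2 * a0)) ^ 2 ≤ a1 ^ 2 := by
      rw [div_pow, div_le_iff₀ (by positivity)]
      nlinarith
    have e5 := Real.sq_sqrt (sub_nonneg.mpr e4)
    refine ⟨(a0 ^ 2 + a1 ^ 2 - L ^ 2) / (2 * a0), _, by rw [e5]; ring, ?_⟩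
    · rw [e5]
      field_simp
      ring

lemma norm_comb (z z' : ℂ) (s t : ℝ) (hst : s + t = 1) :
    ‖(s : ℂ) * z + t * z'‖ ^ 2 = s * ‖z‖ ^ 2 + t * ‖z'‖ ^ 2 - s * t * ‖z - z'‖ ^ 2 := by
  simp only [nsq]
  obtain rfl : s = 1 - t := by linarith
  simp
  ring

lemma roc_set {K : Set (Mat 2 2)} (hK : RankOneConvexSet K) (A B : Mat 2 2) (hA : A ∈ K)
    (hB : B ∈ K) (hd : (A - B).det = 0) (t : ℝ) (h0 : 0 ≤ t) (h1 : t ≤ 1) :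
    t • A + (1 - t) • B ∈ K := by
  by_cases h : A - B = 0
  · have : A = B := sub_eq_zero.mp h
    rw [this, ← add_smul]; simpa using hB
  · exact hK A hA B hB (rank_of_det _ hd h) t ⟨h0, h1⟩

abbrev KK (R : Set (ℝ × ℝ)) : Set (Mat 2 2) :=
  {ξ : Mat 2 2 | (singularValues ξ 0, singularValues ξ 1) ∈ R ∧ 0 ≤ ξ.det}

lemma mem_KK (R : Set (ℝ × ℝ)) (z w : ℂ) (h : ‖w‖ ≤ ‖z‖) :
    cmk z w ∈ KK R ↔ (‖z‖ - ‖w‖, ‖z‖ + ‖w‖) ∈ R := by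
  have hd : 0 ≤ (cmk z w).det := by
    rw [det_cmk]
    have := norm_nonneg w
    nlinarith
  have := sv_eq _ hd
  rw [cz_cmk, cw_cmk] at this
  simp only [KK, Set.mem_setOf_eq, this.1, this.2, hd, and_true]


lemma chord0 (R : Set (ℝ × ℝ)) (hpos : ∀ p ∈ R, 0 ≤ p.1 ∧ p.1 ≤ p.2)
    (hR : RankOneConvexSet (KK R)) (p q : ℝ × ℝ) (hp : p ∈ R) (hq : q ∈ R) (l : ℝ)
    (hA1 : |(q.1 + q.2) - (p.1 + p.2)| ≤ l) (hA2 : l ≤ (p.1 + p.2) + (q.1 + q.2))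
    (hB1 : |(q.2 - q.1) - (p.2 - p.1)| ≤ l) (hB2 : l ≤ (p.2 - p.1) + (q.2 - q.1))
    (t : ℝ) (ht0 : 0 ≤ t) (ht1 : t ≤ 1) (x y : ℝ) (hx : 0 ≤ x) (hxy : x ≤ y)
    (hD : x * y = (1 - t) * (p.1 * p.2) + t * (q.1 * q.2))
    (hB : (y - x) ^ 2 = (1 - t) * (p.2 - p.1) ^ 2 + t * (q.2 - q.1) ^ 2 - t * (1 - t) * l ^ 2) :
    (x, y) ∈ R := by
  obtain ⟨hp1, hp2⟩ := hpos p hp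
  obtain ⟨hq1, hq2⟩ := hpos q hq
  have hhalf : ∀ u : ℝ, |u / 2| = |u| / 2 := fun u => by rw [abs_div]; simp
  obtain ⟨z, hz1, hz2⟩ := tri ((p.1 + p.2) / 2) ((q.1 + q.2) / 2) (l / 2) (by linarith)
    (by linarith) (by rw [← sub_div, hhalf]; linarith) (by linarith)
  obtain ⟨w, hw1, hw2⟩ := tri ((p.2 - p.1) / 2) ((q.2 - q.1) / 2) (l / 2) (by linarith)
    (by linarith) (by rw [← sub_div, hhalf]; linarith) (by linarith)
  have hz0 : ‖(((p.1 + p.2) / 2 : ℝ) : ℂ)‖ = (p.1 + p.2) / 2 := by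
    rw [Complex.norm_real, Real.norm_of_nonneg (by linarith)]
  have hw0 : ‖(((p.2 - p.1) / 2 : ℝ) : ℂ)‖ = (p.2 - p.1) / 2 := by
    rw [Complex.norm_real, Real.norm_of_nonneg (by linarith)]
  generalize (((p.1 + p.2) / 2 : ℝ) : ℂ) = z0 at *
  generalize (((p.2 - p.1) / 2 : ℝ) : ℂ) = w0 at *
  have m1 : cmk z w ∈ KK R := by
    rw [mem_KK R z w (by linarith), hz1, hw1]
    convert hq using 1
    ext <;> simp <;> ring
  have m0 : cmk z0 w0 ∈ KK R := by
    rw [mem_KK R z0 w0 (by linarith), hz0, hw0]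
    convert hp using 1
    ext <;> simp <;> ring
  have m := roc_set hR _ _ m1 m0 (by rw [cmk_sub, det_cmk, hz2, hw2]; ring) t ht0 ht1
  rw [cmk_comb] at m
  have nz := norm_comb z z0 t (1 - t) (by ring)
  have nw := norm_comb w w0 t (1 - t) (by ring)
  rw [hz1, hz2, hz0] at nz
  rw [hw1, hw2, hw0] at nw
  have ez : ‖(t : ℂ) * z + ((1 - t : ℝ) : ℂ) * z0‖ = (x + y) / 2 := by
    rw [← sq_eq_sq₀ (norm_nonneg _) (by linarith), nz]
    linear_combination (-1 / 4) * hB - hD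
  have ew : ‖(t : ℂ) * w + ((1 - t : ℝ) : ℂ) * w0‖ = (y - x) / 2 := by
    rw [← sq_eq_sq₀ (norm_nonneg _) (by linarith), nw]
    linear_combination (-1 / 4) * hB
  rw [mem_KK R _ _ (by rw [ez, ew]; linarith), ez, ew] at m
  convert m using 1
  ext <;> simp <;> ring

lemma exB (B D : ℝ) (hB : 0 ≤ B) (hD : 0 ≤ D) :
    ∃ x y : ℝ, 0 ≤ x ∧ x ≤ y ∧ y - x = B ∧ x * y = D := by
  have h := Real.sq_sqrt (show 0 ≤ B ^ 2 + 4 * D by positivity)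
  have h2 : B ≤ √(B ^ 2 + 4 * D) := Real.le_sqrt_of_sq_le (by linarith)
  refine ⟨(√(B ^ 2 + 4 * D) - B) / 2, (√(B ^ 2 + 4 * D) + B) / 2, by linarith, by linarith,
    by ring, by nlinarith⟩

lemma eq_of_BD (x y x' y' : ℝ) (hx : 0 ≤ x) (hxy : x ≤ y) (hx' : 0 ≤ x') (hxy' : x' ≤ y')
    (hB : y - x = y' - x') (hD : x * y = x' * y') : x = x' ∧ y = y' := by
  have : x + y = x' + y' := by
    rw [← sq_eq_sq₀ (by linarith) (by linarith)]
    have : (y - x) ^ 2 = (y' - x') ^ 2 := by rw [hB]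
    nlinarith
  constructor <;> linarith

lemma F1 (R : Set (ℝ × ℝ)) (hpos : ∀ p ∈ R, 0 ≤ p.1 ∧ p.1 ≤ p.2)
    (hR : RankOneConvexSet (KK R)) :
    ∀ p ∈ R, ∀ x y : ℝ, 0 ≤ x → x ≤ y → x * y = p.1 * p.2 → y - x ≤ p.2 - p.1 →
      (x, y) ∈ R := by
  intro p hp x y hx hxy hD hB
  obtain ⟨hp1, hp2⟩ := hpos p hp
  rcases eq_or_lt_of_le hp2 with h | h
  · obtain ⟨e1, e2⟩ := eq_of_BD x y p.1 p.2 hx hxy hp1 hp2 (by linarith) hD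
    rw [e1, e2]; exact hp
  · have hpp : 0 < p.2 - p.1 := by linarith
    have h3 : (y - x) / (p.2 - p.1) ≤ 1 := by rw [div_le_one hpp]; exact hB
    have h4 : 0 ≤ (y - x) / (p.2 - p.1) := div_nonneg (by linarith) hpp.le
    refine chord0 R hpos hR p p hp hp (2 * (p.2 - p.1)) (by simp; linarith) (by linarith)
      (by simp; linarith) (by linarith) ((1 - (y - x) / (p.2 - p.1)) / 2) (by linarith)
      (by linarith) x y hx hxy (by rw [hD]; ring) ?_
    field_simp
    ring

lemma chord (R : Set (ℝ × ℝ)) (hpos : ∀ p ∈ R, 0 ≤ p.1 ∧ p.1 ≤ p.2)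
    (hR : RankOneConvexSet (KK R)) (p q : ℝ × ℝ) (hp : p ∈ R) (hq : q ∈ R) (l : ℝ)
    (hA1 : |(q.1 + q.2) - (p.1 + p.2)| ≤ l) (hA2 : l ≤ (p.1 + p.2) + (q.1 + q.2))
    (hB1 : |(q.2 - q.1) - (p.2 - p.1)| ≤ l) (hB2 : l ≤ (p.2 - p.1) + (q.2 - q.1))
    (t : ℝ) (ht0 : 0 ≤ t) (ht1 : t ≤ 1) (x y : ℝ) (hx : 0 ≤ x) (hxy : x ≤ y)
    (hD : x * y = (1 - t) * (p.1 * p.2) + t * (q.1 * q.2))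
    (hB : (y - x) ^ 2 ≤ (1 - t) * (p.2 - p.1) ^ 2 + t * (q.2 - q.1) ^ 2 - t * (1 - t) * l ^ 2) :
    (x, y) ∈ R := by
  have hy : 0 ≤ y := hx.trans hxy
  obtain ⟨x', y', h1, h2, h3, h4⟩ := exB _ (x * y) (Real.sqrt_nonneg
    ((1 - t) * (p.2 - p.1) ^ 2 + t * (q.2 - q.1) ^ 2 - t * (1 - t) * l ^ 2)) (by positivity)
  have h5 := Real.sq_sqrt ((sq_nonneg _).trans hB)
  have := chord0 R hpos hR p q hp hq l hA1 hA2 hB1 hB2 t ht0 ht1 x' y' h1 h2 (h4.trans hD)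
    (by rw [h3, h5])
  refine F1 R hpos hR _ this x y hx hxy h4.symm ?_
  simp only [h3]
  exact Real.le_sqrt_of_sq_le hB

lemma F2 (R : Set (ℝ × ℝ)) (hpos : ∀ p ∈ R, 0 ≤ p.1 ∧ p.1 ≤ p.2)
    (hR : RankOneConvexSet (KK R)) :
    ∀ p ∈ R, ∀ q ∈ R, |(q.1 + q.2) - (p.1 + p.2)| ≤ |(q.2 - q.1) - (p.2 - p.1)| →
      ∀ t : ℝ, 0 ≤ t → t ≤ 1 → ∀ x y : ℝ, 0 ≤ x → x ≤ y →
      x * y = (1 - t) * (p.1 * p.2) + t * (q.1 * q.2) →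
      y - x ≤ (1 - t) * (p.2 - p.1) + t * (q.2 - q.1) → (x, y) ∈ R := by
  intro p hp q hq hAB t ht0 ht1 x y hx hxy hD hB
  obtain ⟨hp1, hp2⟩ := hpos p hp
  obtain ⟨hq1, hq2⟩ := hpos q hq
  have hb : |(q.2 - q.1) - (p.2 - p.1)| ≤ (p.2 - p.1) + (q.2 - q.1) := by
    rw [abs_le]; constructor <;> linarith
  refine chord R hpos hR p q hp hq _ hAB (by linarith) le_rfl hb t ht0 ht1 x y hx hxy hD ?_
  rw [sq_abs]
  have := pow_le_pow_left₀ (by linarith) hB 2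
  nlinarith

lemma F3 (R : Set (ℝ × ℝ)) (hpos : ∀ p ∈ R, 0 ≤ p.1 ∧ p.1 ≤ p.2)
    (hR : RankOneConvexSet (KK R)) :
    ∀ p ∈ R, ∀ q ∈ R, p.1 ≤ q.1 → q.1 ≤ p.2 → p.2 ≤ q.2 →
      ∀ t : ℝ, 0 ≤ t → t ≤ 1 → ∀ x y : ℝ, 0 ≤ x → x ≤ y →
      x * y = (1 - t) * (p.1 * p.2) + t * (q.1 * q.2) →
      x + y ≤ (1 - t) * (p.1 + p.2) + t * (q.1 + q.2) → (x, y) ∈ R := by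
  intro p hp q hq h1 h2 h3 t ht0 ht1 x y hx hxy hD hB
  obtain ⟨hp1, hp2⟩ := hpos p hp
  obtain ⟨hq1, hq2⟩ := hpos q hq
  refine chord R hpos hR p q hp hq ((q.1 + q.2) - (p.1 + p.2))
    (by rw [abs_of_nonneg (by linarith)]) (by linarith)
    (by rw [abs_le]; constructor <;> linarith) (by linarith) t ht0 ht1 x y hx hxy hD ?_
  have := pow_le_pow_left₀ (by linarith) hB 2
  nlinarith

lemma F4 (R : Set (ℝ × ℝ)) (hpos : ∀ p ∈ R, 0 ≤ p.1 ∧ p.1 ≤ p.2)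
    (hR : RankOneConvexSet (KK R)) (hc : IsPreconnected R) :
    ∀ p ∈ R, ∀ q ∈ R, ∀ s : ℝ, 0 ≤ s → p.1 * p.2 ≤ s * s → s * s ≤ q.1 * q.2 →
      (s, s) ∈ R := by
  intro p hp q hq s hs h1 h2
  obtain ⟨r, hr, hr2⟩ := hc.intermediate_value hp hq
    (f := fun p : ℝ × ℝ => p.1 * p.2) (by fun_prop) ⟨h1, h2⟩
  have := hpos r hr
  exact F1 R hpos hR r hr s s hs le_rfl hr2.symm (by linarith)

lemma roc_fun {f : Mat 2 2 → ℝ} (hf : RankOneConvexFun f) (A B : Mat 2 2)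
    (hd : (A - B).det = 0) (t : ℝ) (h0 : 0 ≤ t) (h1 : t ≤ 1) :
    f (t • A + (1 - t) • B) ≤ t * f A + (1 - t) * f B := by
  by_cases h : A - B = 0
  · have : A = B := sub_eq_zero.mp h
    rw [this, ← add_smul]
    apply le_of_eq
    simp
    ring
  · exact hf t ⟨h0, h1⟩ A B (rank_of_det _ hd h)

lemma det_comb (A B : Mat 2 2) (t : ℝ) (h : (A - B).det = 0) :
    (t • A + (1 - t) • B).det = t * A.det + (1 - t) * B.det := by
  simp only [Matrix.det_fin_two, Matrix.add_apply, Matrix.smul_apply, Matrix.sub_apply,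
    smul_eq_mul] at h ⊢
  linear_combination (-t * (1 - t)) * h

lemma norm_cvx (z z' : ℂ) (t : ℝ) (h0 : 0 ≤ t) (h1 : t ≤ 1) :
    ‖(t : ℂ) * z + ((1 - t : ℝ) : ℂ) * z'‖ ≤ t * ‖z‖ + (1 - t) * ‖z'‖ := by
  refine (norm_add_le _ _).trans (le_of_eq ?_)
  rw [norm_mul, norm_mul, Complex.norm_real, Complex.norm_real, Real.norm_of_nonneg h0,
    Real.norm_of_nonneg (by linarith)]

lemma roc_test (α β k c : ℝ) (hα : 0 ≤ α) (hβ : 0 ≤ β) :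
    RankOneConvexFun (fun ξ : Mat 2 2 => α * ‖cz ξ‖ + β * ‖cw ξ‖ + k * ξ.det + c) := by
  intro t ht A B hr
  have hd := det_comb A B t (det_of_rank _ hr)
  have h1 := mul_le_mul_of_nonneg_left (norm_cvx (cz A) (cz B) t ht.1 ht.2) hα
  have h2 := mul_le_mul_of_nonneg_left (norm_cvx (cw A) (cw B) t ht.1 ht.2) hβ
  simp only [hd, cz_comb, cw_comb]
  linarith

/-- The inclusion of the hull in the set. -/
lemma part1 (ΛE R : Set (ℝ × ℝ)) (hRc : IsCompact R) (hpos : ∀ p ∈ R, 0 ≤ p.1 ∧ p.1 ≤ p.2)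
    (hsub : ΛE ⊆ R) (hR : RankOneConvexSet (KK R)) (hconn : IsConnected R) (ξ : Mat 2 2)
    (hξ : ξ ∈ RcoF (KK ΛE)) : ξ ∈ KK R := by
  have test : ∀ α β k c : ℝ, 0 ≤ α → 0 ≤ β →
      (∀ p ∈ R, α * ((p.1 + p.2) / 2) + β * ((p.2 - p.1) / 2) + k * (p.1 * p.2) + c ≤ 0) →
      α * ‖cz ξ‖ + β * ‖cw ξ‖ + k * ξ.det + c ≤ 0 := by
    intro α β k c hα hβ h
    refine hξ _ (roc_test α β k c hα hβ) ?_
    rintro η ⟨h1, h2⟩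
    have h3 := h _ (hsub h1)
    obtain ⟨e1, e2⟩ := sv_eq η h2
    rw [det_czw]
    rw [e1, e2] at h3
    refine le_trans (le_of_eq ?_) h3
    ring
  have hdet : 0 ≤ ξ.det := by
    have := test 0 0 (-1) 0 le_rfl le_rfl (by
      intro p hp
      obtain ⟨h1, h2⟩ := hpos p hp
      nlinarith)
    linarith
  refine ⟨?_, hdet⟩
  obtain ⟨e1, e2⟩ := sv_eq ξ hdet
  have f1 := F1 R hpos hR
  have f4 := F4 R hpos hR hconn.isPreconnected
  have hdz : ξ.det = ‖cz ξ‖ ^ 2 - ‖cw ξ‖ ^ 2 := det_czw ξ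
  rw [e1, e2]
  have hw0 := norm_nonneg (cw ξ)
  have hz0 := norm_nonneg (cz ξ)
  have hwz : ‖cw ξ‖ ≤ ‖cz ξ‖ := by
    rw [← sq_le_sq₀ hw0 hz0]; linarith
  by_contra hX
  rcases eq_or_lt_of_le hw0 with h | h
  · -- diagonal case
    rw [← h] at hX hdz
    simp only [sub_zero, add_zero] at hX
    by_cases hl : ∃ p ∈ R, p.1 * p.2 ≤ ‖cz ξ‖ * ‖cz ξ‖
    · obtain ⟨p, hp, hpl⟩ := hl
      have hall : ∀ q ∈ R, q.1 * q.2 < ‖cz ξ‖ * ‖cz ξ‖ := by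
        intro q hq
        by_contra hq2
        exact hX (f4 p hp q hq _ hz0 hpl (not_lt.mp hq2))
      obtain ⟨m, hm, hm2⟩ := hRc.exists_isMaxOn hconn.nonempty
        (f := fun p : ℝ × ℝ => p.1 * p.2) (by fun_prop)
      have := test 0 0 1 (-(m.1 * m.2)) le_rfl le_rfl (by
        intro q hq
        have : q.1 * q.2 ≤ m.1 * m.2 := hm2 hq
        linarith)
      have := hall m hm
      nlinarith
    · push Not at hl
      obtain ⟨m, hm, hm2⟩ := hRc.exists_isMinOn hconn.nonempty
        (f := fun p : ℝ × ℝ => p.1 * p.2) (by fun_prop)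
      have := test 0 0 (-1) (m.1 * m.2) le_rfl le_rfl (by
        intro q hq
        have : m.1 * m.2 ≤ q.1 * q.2 := hm2 hq
        linarith)
      have := hl m hm
      nlinarith
  · -- shrink
    have hcont : Filter.Tendsto (fun b : ℝ => (√(ξ.det + b ^ 2) - b, √(ξ.det + b ^ 2) + b))
        (nhds ‖cw ξ‖) (nhds (‖cz ξ‖ - ‖cw ξ‖, ‖cz ξ‖ + ‖cw ξ‖)) := by
      have hc : Continuous (fun b : ℝ => (√(ξ.det + b ^ 2) - b, √(ξ.det + b ^ 2) + b)) := by
        fun_prop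
      have := hc.tendsto ‖cw ξ‖
      have hs : √(ξ.det + ‖cw ξ‖ ^ 2) = ‖cz ξ‖ := by
        rw [hdz, sub_add_cancel, Real.sqrt_sq hz0]
      simp only [hs] at this
      exact this
    have hev := hcont.eventually (hRc.isClosed.isOpen_compl.mem_nhds hX)
    have hev2 := (hev.filter_mono nhdsWithin_le_nhds).and
      (Ioo_mem_nhdsLT h)
    obtain ⟨b, hb, hb0, hb1⟩ := hev2.exists
    have hs2 : √(ξ.det + b ^ 2) ^ 2 = ξ.det + b ^ 2 := Real.sq_sqrt (by positivity)
    have hsb : b ≤ √(ξ.det + b ^ 2) := Real.le_sqrt_of_sq_le (by linarith)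
    have hsz : √(ξ.det + b ^ 2) < ‖cz ξ‖ := by
      rw [← sq_lt_sq₀ (Real.sqrt_nonneg _) hz0, hs2]
      nlinarith
    generalize √(ξ.det + b ^ 2) = a at *
    have hD : (a - b) * (a + b) = ξ.det := by linarith [hs2, show (a-b)*(a+b) = a^2-b^2 by ring]
    rcases aux_planar R hRc hpos f1 (F2 R hpos hR) (F3 R hpos hR) f4 (a - b) (a + b)
      (by linarith) (by linarith) hb with ⟨k, hk⟩ | ⟨k, hk⟩
    · have := test 0 2 (-k) (-(2 * b) + k * ξ.det) le_rfl (by norm_num) (by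
        intro p hp
        have := hk p hp
        rw [hD] at this
        linarith)
      linarith
    · have := test 2 0 (-k) (-(2 * a) + k * ξ.det) (by norm_num) le_rfl (by
        intro p hp
        have := hk p hp
        rw [hD] at this
        linarith)
      linarith

lemma cvx_step (h : ℝ → ℝ) (hc : ConvexOn ℝ Set.univ h) (x x' c M δ : ℝ) (hM : 0 ≤ M) (hc0 : 0 ≤ c)
    (hδ : δ ≤ 1) (hxx : |x - x'| ≤ δ) (hb : ∀ u, |u - x| ≤ 2 → h u ≤ M) (hx' : h x' ≤ c) :
    h x ≤ c + δ * M := by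
  obtain ⟨s, hs, hst⟩ : ∃ s : ℝ, |s| ≤ 1 ∧ x - x' = |x - x'| * s := by
    rcases le_total 0 (x - x') with h | h
    · exact ⟨1, by simp, by rw [abs_of_nonneg h]; ring⟩
    · exact ⟨-1, by simp, by rw [abs_of_nonpos h]; ring⟩
  have h0 := abs_nonneg (x - x')
  have h1 := hc.2 (Set.mem_univ x') (Set.mem_univ (x' + s)) (show 0 ≤ 1 - |x - x'| by linarith) h0
    (by ring)
  have e : (1 - |x - x'|) • x' + |x - x'| • (x' + s) = x := by
    simp only [smul_eq_mul]; linarith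
  rw [e] at h1
  simp only [smul_eq_mul] at h1
  have h2 : h (x' + s) ≤ M := by
    apply hb
    have : x' + s - x = -(x - x') + s := by ring
    rw [this]
    refine (abs_add_le _ _).trans ?_
    rw [abs_neg]; linarith
  have i1 := mul_le_mul_of_nonneg_left hx' (show 0 ≤ 1 - |x - x'| by linarith)
  have i2 := mul_le_mul_of_nonneg_left h2 h0
  have i3 := mul_le_mul_of_nonneg_right hxx hM
  have i4 := mul_nonneg h0 hc0
  linarith

lemma cvx_bd (h : ℝ → ℝ) (hc : ConvexOn ℝ Set.univ h) (x u : ℝ) (hu : |u - x| ≤ 2) :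
    h u ≤ max (h (x - 2)) (h (x + 2)) := by
  rw [abs_le] at hu
  exact hc.le_max_of_mem_Icc (Set.mem_univ _) (Set.mem_univ _) ⟨by linarith, by linarith⟩

lemma sep_closed_s10 (g : ℝ → ℝ → ℝ) (h1 : ∀ y, ConvexOn ℝ Set.univ (fun x => g x y))
    (h2 : ∀ x, ConvexOn ℝ Set.univ (g x)) : IsClosed {p : ℝ × ℝ | g p.1 p.2 ≤ 0} := by
  rw [← closure_subset_iff_isClosed]
  rintro ⟨x, y⟩ hxy
  obtain ⟨M, hM0, hM⟩ : ∃ M : ℝ, 0 ≤ M ∧ ∀ u v, |u - x| ≤ 2 → |v - y| ≤ 2 → g u v ≤ M := by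
    refine ⟨max 0 (max (max (g (x - 2) (y - 2)) (g (x - 2) (y + 2)))
      (max (g (x + 2) (y - 2)) (g (x + 2) (y + 2)))), le_max_left _ _, fun u v hu hv => ?_⟩
    refine le_trans ?_ (le_max_right _ _)
    refine (cvx_bd _ (h1 v) x u hu).trans ?_
    exact max_le_max (cvx_bd _ (h2 _) y v hv) (cvx_bd _ (h2 _) y v hv)
  have key : ∀ δ : ℝ, 0 < δ → δ ≤ 1 → g x y ≤ 0 + δ * M + δ * M := by
    intro δ hδ hδ1
    obtain ⟨⟨x', y'⟩, hp, hd⟩ := Metric.mem_closure_iff.mp hxy δ hδ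
    rw [Prod.dist_eq, max_lt_iff, Real.dist_eq, Real.dist_eq] at hd
    have s1 := cvx_step _ (h1 y') x x' 0 M δ hM0 le_rfl hδ1 hd.1.le
      (fun u hu => hM u y' hu (by rw [abs_sub_comm]; linarith [hd.2])) hp
    exact cvx_step _ (h2 x) y y' _ M δ hM0 (by positivity) hδ1 hd.2.le
      (fun v hv => hM x v (by simp) hv) s1
  show g x y ≤ 0
  by_contra hc
  push Not at hc
  have := key (min 1 (g x y / (4 * (M + 1)))) (lt_min one_pos (by positivity)) (min_le_left _ _)
  have h3 : min 1 (g x y / (4 * (M + 1))) * M ≤ g x y / (4 * (M + 1)) * M :=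
    mul_le_mul_of_nonneg_right (min_le_right _ _) hM0
  have h4 : g x y / (4 * (M + 1)) * M ≤ g x y / 4 := by
    rw [div_mul_eq_mul_div, div_le_div_iff₀ (by positivity) (by norm_num)]
    nlinarith
  linarith

lemma diag_eq (x y : ℝ) : (!![y, 0; 0, x] : Mat 2 2) =
    cmk (((x + y) / 2 : ℝ) : ℂ) (((y - x) / 2 : ℝ) : ℂ) := by
  ext i j
  fin_cases i <;> fin_cases j <;> simp [cmk] <;> ring

lemma exists_unit (z : ℂ) : ∃ u : ℂ, ‖u‖ = 1 ∧ u * z = (‖z‖ : ℂ) := by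
  by_cases h : z = 0
  · exact ⟨1, by simp, by simp [h]⟩
  · have hz : (‖z‖ : ℂ) ≠ 0 := by simpa using h
    refine ⟨(‖z‖ : ℂ) / z, by simp [h], by field_simp⟩

lemma hull_inv (Λ : Set (ℝ × ℝ)) (u v : ℂ) (hu : ‖u‖ = 1) (hv : ‖v‖ = 1) (ξ : Mat 2 2)
    (hξ : ξ ∈ RcoF (KK Λ)) : cmk (u * cz ξ) (v * cw ξ) ∈ RcoF (KK Λ) := by
  intro f hf hfE
  refine hξ (fun η => f (cmk (u * cz η) (v * cw η))) ?_ ?_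
  · intro t ht A B hr
    have hd := det_of_rank _ hr
    have := roc_fun hf (cmk (u * cz A) (v * cw A)) (cmk (u * cz B) (v * cw B)) (by
      rw [cmk_sub, ← mul_sub, ← mul_sub, det_cmk, norm_mul, norm_mul, hu, hv]
      have e := cmk_sub (cz A) (cw A) (cz B) (cw B)
      rw [cmk_eta, cmk_eta] at e
      rw [e, det_cmk] at hd
      simpa using hd) t ht.1 ht.2
    rw [cmk_comb] at this
    simp only [cz_comb, cw_comb]
    convert this using 3 <;> ring
  · intro η hη
    apply hfE
    have hw : ‖cw η‖ ≤ ‖cz η‖ := by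
      have := hη.2
      rw [det_czw] at this
      rw [← sq_le_sq₀ (norm_nonneg _) (norm_nonneg _)]; linarith
    rw [mem_KK _ _ _ (by rw [norm_mul, norm_mul, hu, hv]; linarith)]
    rw [norm_mul, norm_mul, hu, hv, one_mul, one_mul, ← mem_KK _ _ _ hw, cmk_eta]
    exact hη

lemma part2 (Λ : Set (ℝ × ℝ)) (hΛc : IsCompact Λ)
    (hΛ : Λ ⊆ {p : ℝ × ℝ | 0 ≤ p.1 ∧ p.1 ≤ p.2}) (R : Set (ℝ × ℝ))
    (hmin : ∀ S : Set (ℝ × ℝ), IsCompact S → S ⊆ {p : ℝ × ℝ | 0 ≤ p.1 ∧ p.1 ≤ p.2} → Λ ⊆ S →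
      RankOneConvexSet (KK S) → R ⊆ S) : KK R ⊆ RcoF (KK Λ) := by
  let S : Set (ℝ × ℝ) := {p | 0 ≤ p.1 ∧ p.1 ≤ p.2} ∩ {p | (!![p.2, 0; 0, p.1] : Mat 2 2) ∈ RcoF (KK Λ)}
  have hdet : ∀ ξ ∈ RcoF (KK Λ), 0 ≤ ξ.det := by
    intro ξ hξ
    have := hξ _ (roc_test 0 0 (-1) 0 le_rfl le_rfl) (by
      intro η hη
      have := hη.2
      linarith)
    linarith
  have hiff : ∀ ξ : Mat 2 2, 0 ≤ ξ.det →
      ((singularValues ξ 0, singularValues ξ 1) ∈ S ↔ ξ ∈ RcoF (KK Λ)) := by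
    intro ξ hd
    obtain ⟨e1, e2⟩ := sv_eq ξ hd
    have hw : ‖cw ξ‖ ≤ ‖cz ξ‖ := by
      rw [det_czw] at hd
      rw [← sq_le_sq₀ (norm_nonneg _) (norm_nonneg _)]; linarith
    have hw0 := norm_nonneg (cw ξ)
    rw [e1, e2]
    have hD : (!![‖cz ξ‖ + ‖cw ξ‖, 0; 0, ‖cz ξ‖ - ‖cw ξ‖] : Mat 2 2) =
        cmk (‖cz ξ‖ : ℂ) (‖cw ξ‖ : ℂ) := by
      rw [diag_eq]; congr 2 <;> ring
    obtain ⟨u, hu, hu2⟩ := exists_unit (cz ξ)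
    obtain ⟨v, hv, hv2⟩ := exists_unit (cw ξ)
    have hu0 : u ≠ 0 := by rintro rfl; simp at hu
    have hv0 : v ≠ 0 := by rintro rfl; simp at hv
    constructor
    · rintro ⟨-, h⟩
      simp only [Set.mem_setOf_eq] at h
      rw [hD] at h
      have := hull_inv Λ u⁻¹ v⁻¹ (by simp [hu]) (by simp [hv]) _ h
      rw [cz_cmk, cw_cmk, ← hu2, ← hv2, inv_mul_cancel_left₀ hu0, inv_mul_cancel_left₀ hv0,
        cmk_eta] at this
      exact this
    · intro h
      refine ⟨⟨by simp only; linarith, by simp only; linarith⟩, ?_⟩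
      simp only [Set.mem_setOf_eq]
      rw [hD, ← hu2, ← hv2]
      exact hull_inv Λ u v hu hv ξ h
  have hKS : KK S = RcoF (KK Λ) := by
    ext ξ
    constructor
    · rintro ⟨h1, h2⟩
      exact (hiff ξ h2).mp h1
    · intro h
      exact ⟨(hiff ξ (hdet ξ h)).mpr h, hdet ξ h⟩
  have hsub : R ⊆ S := by
    apply hmin
    · -- compact
      have hcl : IsClosed S := by
        apply IsClosed.inter
        · exact (isClosed_le continuous_const continuous_fst).inter
            (isClosed_le continuous_fst continuous_snd)
        · have : {p : ℝ × ℝ | (!![p.2, 0; 0, p.1] : Mat 2 2) ∈ RcoF (KK Λ)} =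
              ⋂ f : {f : Mat 2 2 → ℝ // RankOneConvexFun f ∧ ∀ η ∈ KK Λ, f η ≤ 0},
                {p : ℝ × ℝ | f.1 !![p.2, 0; 0, p.1] ≤ 0} := by
            ext p
            simp [RcoF]
          rw [this]
          apply isClosed_iInter
          rintro ⟨f, hf, -⟩
          apply sep_closed_s10 (fun x y => f !![y, 0; 0, x])
          · intro y
            refine ⟨convex_univ, fun a _ b _ s t hs ht hst => ?_⟩
            obtain rfl : t = 1 - s := by linarith
            have := roc_fun hf !![y, 0; 0, a] !![y, 0; 0, b]
              (by simp [Matrix.det_fin_two]) s hs (by linarith)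
            simp only [smul_eq_mul]
            refine le_trans (le_of_eq ?_) this
            congr 1
            ext i j
            fin_cases i <;> fin_cases j <;> simp <;> ring
          · intro x
            refine ⟨convex_univ, fun a _ b _ s t hs ht hst => ?_⟩
            obtain rfl : t = 1 - s := by linarith
            have := roc_fun hf !![a, 0; 0, x] !![b, 0; 0, x]
              (by simp [Matrix.det_fin_two]) s hs (by linarith)
            simp only [smul_eq_mul]
            refine le_trans (le_of_eq ?_) this
            congr 1
            ext i j
            fin_cases i <;> fin_cases j <;> simp <;> ring
      obtain ⟨C, hC⟩ := hΛc.bddAbove_image (f := fun p : ℝ × ℝ => p.1 + p.2) (by fun_prop)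
      refine (isCompact_Icc (a := ((0 : ℝ), (0 : ℝ))) (b := (C, C))).of_isClosed_subset hcl ?_
      rintro ⟨x, y⟩ ⟨⟨hx, hxy⟩, hp⟩
      simp only at hx hxy
      have := hp _ (roc_test 2 0 0 (-C) (by norm_num) le_rfl) (by
        intro η hη
        obtain ⟨e1, e2⟩ := sv_eq η hη.2
        have := hC ⟨_, hη.1, rfl⟩
        simp only [e1, e2] at this
        linarith)
      simp only [diag_eq, cz_cmk] at this
      rw [Complex.norm_real, Real.norm_of_nonneg (by linarith)] at this
      refine ⟨⟨hx, by simp only; linarith⟩, ⟨by simp only; linarith, by simp only; linarith⟩⟩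
    · exact Set.inter_subset_left
    · intro p hp
      obtain ⟨hp1, hp2⟩ := hΛ hp
      refine ⟨⟨hp1, hp2⟩, ?_⟩
      intro f _ hfE
      apply hfE
      rw [diag_eq]
      have n1 : ‖(((p.1 + p.2) / 2 : ℝ) : ℂ)‖ = (p.1 + p.2) / 2 := by
        rw [Complex.norm_real, Real.norm_of_nonneg (by linarith)]
      have n2 : ‖(((p.2 - p.1) / 2 : ℝ) : ℂ)‖ = (p.2 - p.1) / 2 := by
        rw [Complex.norm_real, Real.norm_of_nonneg (by linarith)]
      rw [mem_KK _ _ _ (by rw [n1, n2]; linarith), n1, n2]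
      convert hp using 1
      ext <;> simp <;> ring
    · rw [hKS]
      intro A hA B hB hr t ht f hf hfE
      have := hf t ht A B hr
      have a1 := hA f hf hfE
      have b1 := hB f hf hfE
      have i1 := mul_nonpos_of_nonneg_of_nonpos ht.1 a1
      have i2 := mul_nonpos_of_nonneg_of_nonpos (show 0 ≤ 1 - t by linarith [ht.2]) b1
      linarith
  rw [← hKS]
  rintro ξ ⟨h1, h2⟩
  exact ⟨hsub h1, h2⟩

section Statements

open Metric Set

theorem stmt10 (ΛE : Set (ℝ × ℝ)) (hΛc : IsCompact ΛE)
    (hΛ : ΛE ⊆ {p : ℝ × ℝ | 0 ≤ p.1 ∧ p.1 ≤ p.2})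
    (RΛ : Set (ℝ × ℝ))
    (hRΛ : IsLeast {S : Set (ℝ × ℝ) | IsCompact S ∧
      S ⊆ {p : ℝ × ℝ | 0 ≤ p.1 ∧ p.1 ≤ p.2} ∧ ΛE ⊆ S ∧
      RankOneConvexSet {ξ : Mat 2 2 |
        (singularValues ξ 0, singularValues ξ 1) ∈ S ∧ 0 ≤ ξ.det}} RΛ)
    (hconn : IsConnected RΛ)
    (E : Set (Mat 2 2))
    (hE : E = {ξ : Mat 2 2 | (singularValues ξ 0, singularValues ξ 1) ∈ ΛE ∧ 0 ≤ ξ.det}) :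
    RcoF E = {ξ : Mat 2 2 | (singularValues ξ 0, singularValues ξ 1) ∈ RΛ ∧ 0 ≤ ξ.det} := by
  obtain ⟨⟨hRc, hRpos, hsub, hR⟩, hmin⟩ := hRΛ
  subst hE
  apply Set.Subset.antisymm
  · intro ξ hξ
    exact part1 ΛE RΛ hRc (fun p hp => hRpos hp) hsub hR hconn ξ hξ
  · exact part2 ΛE hΛc hΛ RΛ (fun S h1 h2 h3 h4 => hmin ⟨h1, h2, h3, h4⟩)

end Statements
end

section
/- Let E = {ξ ∈ ℝ^{2×2} : (λ_1(ξ), λ_2(ξ)) ∈ Λ_E, det ξ > 0} where Λ_E = {(a_1, a_2), (b_1, b_2)} with 0 < a_1 < b_1 < a_2 < b_2, and set θ̲ = (−a_1 a_2 + b_1 b_2)/(b_1 + b_2 − a_1 − a_2). Then Rco_f E = {ξ ∈ ℝ^{2×2} : (λ_1(ξ), λ_2(ξ)) ∈ R(Λ_E), det ξ > 0}, where R(Λ_E) is the set of points (x_1, x_2) ∈ ℝ² such that: a_1 ≤ x_1 ≤ x_2 ≤ b_2; x_2 ≥ a_1 a_2 / x_1; x_2 ≤ (−a_1 a_2 + θ̲(a_1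 + a_2) − θ̲ x_1)/(−x_1 + θ̲) whenever a_1 ≤ x_1 ≤ b_1; and x_2 ≤ b_1 b_2 / x_1. -/
open MeasureTheory Filter

attribute [local instance] Classical.propDecidable
attribute [local instance] Matrix.frobeniusNormedAddCommGroup Matrix.frobeniusNormedSpace

section Helpers

lemma h_rank_one_of_det {A : Mat 2 2} (h0 : A.det = 0) (hne : A ≠ 0) : A.rank = 1 := by
  obtain ⟨v, hv, hAv⟩ := Matrix.exists_mulVec_eq_zero_iff.mpr h0
  have h1 := LinearMap.finrank_range_add_finrank_ker A.mulVecLin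
  have h2 : 0 < Module.finrank ℝ (LinearMap.ker A.mulVecLin) := by
    rw [Module.finrank_pos_iff_exists_ne_zero]
    exact ⟨⟨v, by simpa using hAv⟩, fun h => hv (by simpa using congrArg Subtype.val h)⟩
  have h3 : A.rank ≠ 0 := by
    intro h
    rw [Matrix.rank, Submodule.finrank_eq_zero, LinearMap.range_eq_bot] at h
    apply hne
    ext i j
    have := congrFun (LinearMap.congr_fun h (Pi.single j 1)) i
    simpa using this
  have h4 : Module.finrank ℝ (Fin 2 → ℝ) = 2 := by simp
  rw [Matrix.rank] at h3 ⊢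
  omega

lemma h_det_of_rank_one {A : Mat 2 2} (h : A.rank = 1) : A.det = 0 := by
  by_contra h0
  have := Matrix.rank_of_det_ne_zero h0
  rw [h] at this
  simp at this

/-- conformal part -/
noncomputable def zc (ξ : Mat 2 2) : ℂ := ⟨(ξ 0 0 + ξ 1 1) / 2, (ξ 1 0 - ξ 0 1) / 2⟩

/-- anticonformal part -/
noncomputable def wc (ξ : Mat 2 2) : ℂ := ⟨(ξ 0 0 - ξ 1 1) / 2, (ξ 1 0 + ξ 0 1) / 2⟩

/-- matrix from parts -/
noncomputable def mkM (z w : ℂ) : Mat 2 2 := !![z.re + w.re, w.im - z.im; z.im + w.im, z.re - w.re]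

lemma zc_mk (z w : ℂ) : zc (mkM z w) = z := by
  apply Complex.ext <;> simp [zc, mkM] <;> ring

lemma wc_mk (z w : ℂ) : wc (mkM z w) = w := by
  apply Complex.ext <;> simp [wc, mkM] <;> ring

lemma mk_eta (ξ : Mat 2 2) : mkM (zc ξ) (wc ξ) = ξ := by
  ext i j
  fin_cases i <;> fin_cases j <;> simp [wc, zc, mkM] <;> ring

lemma det_eq (ξ : Mat 2 2) : ξ.det = Complex.normSq (zc ξ) - Complex.normSq (wc ξ) := by
  rw [Matrix.det_fin_two]
  simp [Complex.normSq_apply, zc, wc]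
  ring

lemma mk_comb (t : ℝ) (z w z' w' : ℂ) :
    t • mkM z w + (1 - t) • mkM z' w' = mkM (t * z + (1 - t) * z') (t * w + (1 - t) * w') := by
  ext i j
  fin_cases i <;> fin_cases j <;> simp [mkM] <;> ring

lemma mk_sub (z w z' w' : ℂ) : mkM z w - mkM z' w' = mkM (z - z') (w - w') := by
  ext i j
  fin_cases i <;> fin_cases j <;> simp [mkM] <;> ring

lemma zc_comb (t : ℝ) (ξ η : Mat 2 2) :
    zc (t • ξ + (1 - t) • η) = (t : ℂ) * zc ξ + ((1 - t : ℝ) : ℂ) * zc η := by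
  apply Complex.ext <;> simp [zc] <;> ring

lemma mk_rank {z w z' w' : ℂ} (h : Complex.normSq (z - z') = Complex.normSq (w - w'))
    (hne : z ≠ z') : (mkM z w - mkM z' w').rank = 1 := by
  rw [mk_sub]
  apply h_rank_one_of_det
  · rw [det_eq, zc_mk, wc_mk, h, sub_self]
  · intro h0
    have := zc_mk (z - z') (w - w')
    rw [h0] at this
    apply hne
    rw [← sub_eq_zero, ← this]
    apply Complex.ext <;> simp [zc]

lemma sv_facts (ξ : Mat 2 2) (hd : 0 < ξ.det) :
    0 ≤ singularValues ξ 0 ∧ singularValues ξ 0 ≤ singularValues ξ 1 ∧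
    singularValues ξ 0 * singularValues ξ 1 = ξ.det ∧
    singularValues ξ 0 + singularValues ξ 1 = 2 * ‖zc ξ‖ := by
  have hH := Matrix.isHermitian_mul_conjTranspose_self ξ
  have hP := Matrix.posSemidef_self_mul_conjTranspose ξ
  set e := hH.eigenvalues with he
  set σ := Tuple.sort e with hσ
  have hmono := Tuple.monotone_sort e
  have h0 : singularValues ξ 0 = Real.sqrt (e (σ 0)) := rfl
  have h1 : singularValues ξ 1 = Real.sqrt (e (σ 1)) := rfl
  have n0 : ∀ i, 0 ≤ e i := fun i => hP.eigenvalues_nonneg i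
  have hdet := hH.det_eq_prod_eigenvalues
  have htr := hH.trace_eq_sum_eigenvalues
  rw [← he] at hdet htr
  rw [← Equiv.prod_comp σ] at hdet
  rw [← Equiv.sum_comp σ] at htr
  simp only [Fin.prod_univ_two, Fin.sum_univ_two, RCLike.ofReal_real_eq_id, id] at hdet htr
  have hle : e (σ 0) ≤ e (σ 1) := hmono (by decide : (0 : Fin 2) ≤ 1)
  have hdd : (ξ * ξ.conjTranspose).det = ξ.det ^ 2 := by
    rw [Matrix.det_mul, Matrix.det_conjTranspose]; simp [sq]
  have htt : (ξ * ξ.conjTranspose).trace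
      = ξ 0 0 ^ 2 + ξ 0 1 ^ 2 + ξ 1 0 ^ 2 + ξ 1 1 ^ 2 := by
    simp [Matrix.trace, Matrix.mul_apply, Fin.sum_univ_two]; ring
  have hprod : singularValues ξ 0 * singularValues ξ 1 = ξ.det := by
    rw [h0, h1, ← Real.sqrt_mul (n0 _), ← hdet, hdd, Real.sqrt_sq hd.le]
  have s0 : 0 ≤ singularValues ξ 0 := Real.sqrt_nonneg _
  have s1 : 0 ≤ singularValues ξ 1 := Real.sqrt_nonneg _
  refine ⟨s0, ?_, hprod, ?_⟩
  · rw [h0, h1]; exact Real.sqrt_le_sqrt hle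
  · have q0 : singularValues ξ 0 ^ 2 = e (σ 0) := by rw [h0]; exact Real.sq_sqrt (n0 _)
    have q1 : singularValues ξ 1 ^ 2 = e (σ 1) := by rw [h1]; exact Real.sq_sqrt (n0 _)
    have hz : ‖zc ξ‖ ^ 2 = ((ξ 0 0 + ξ 1 1) / 2) ^ 2 + ((ξ 1 0 - ξ 0 1) / 2) ^ 2 := by
      rw [← Complex.normSq_eq_norm_sq, Complex.normSq_apply]; simp [zc]; ring
    rw [Matrix.det_fin_two] at hprod
    have : (singularValues ξ 0 + singularValues ξ 1) ^ 2 = (2 * ‖zc ξ‖) ^ 2 := by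
      rw [mul_pow, hz]
      linear_combination q0 + q1 + 2 * hprod - htr + htt
    exact (sq_eq_sq₀ (by positivity) (by positivity)).mp this

lemma sv_eq_iff (ξ : Mat 2 2) (hd : 0 < ξ.det) {x y : ℝ} (hxy : x ≤ y) :
    (singularValues ξ 0, singularValues ξ 1) = (x, y) ↔
      ξ.det = x * y ∧ 2 * ‖zc ξ‖ = x + y := by
  obtain ⟨h0, h1, h2, h3⟩ := sv_facts ξ hd
  rw [← h2, ← h3, Prod.mk.injEq]
  generalize singularValues ξ 0 = p at *
  generalize singularValues ξ 1 = q at *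
  constructor
  · rintro ⟨rfl, rfl⟩; exact ⟨rfl, rfl⟩
  · rintro ⟨h4, h5⟩
    have : (q - p) ^ 2 = (y - x) ^ 2 := by
      linear_combination (p + q + x + y) * h5 - 4 * h4
    have := (sq_eq_sq₀ (by linarith) (by linarith)).mp this
    constructor <;> linarith

lemma roc_det (k c : ℝ) : RankOneConvexFun (fun ξ : Mat 2 2 => k * ξ.det + c) := by
  intro t _ ξ η hr
  have h := h_det_of_rank_one hr
  apply le_of_eq
  simp only [Matrix.det_fin_two, Matrix.sub_apply, Matrix.add_apply, Matrix.smul_apply,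
    smul_eq_mul] at h ⊢
  linear_combination (-k * t * (1 - t)) * h

lemma roc_theta (θ c : ℝ) (hθ : 0 ≤ θ) :
    RankOneConvexFun (fun ξ : Mat 2 2 => θ * (2 * ‖zc ξ‖) + ((-1) * ξ.det + c)) := by
  intro t ht ξ η hr
  have h := roc_det (-1) c t ht ξ η hr
  have hz : ‖zc (t • ξ + (1 - t) • η)‖ ≤ t * ‖zc ξ‖ + (1 - t) * ‖zc η‖ := by
    rw [zc_comb]
    refine (norm_add_le _ _).trans (le_of_eq ?_)
    rw [norm_mul, norm_mul, Complex.norm_of_nonneg ht.1,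
      Complex.norm_of_nonneg (by linarith [ht.2])]
  have := mul_le_mul_of_nonneg_left hz (by linarith : 0 ≤ 2 * θ)
  simp only at h ⊢
  linarith

lemma f_comb {f : Mat 2 2 → ℝ} (hf : RankOneConvexFun f) {z w z' w' : ℂ} {t : ℝ}
    (ht0 : 0 ≤ t) (ht1 : t ≤ 1)
    (h : Complex.normSq (z - z') = Complex.normSq (w - w')) (hne : z ≠ z')
    (h1 : f (mkM z w) ≤ 0) (h2 : f (mkM z' w') ≤ 0) :
    f (mkM (t * z + (1 - t) * z') (t * w + (1 - t) * w')) ≤ 0 := by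
  rw [← mk_comb]
  refine (hf t ⟨ht0, ht1⟩ _ _ (mk_rank h hne)).trans ?_
  have := mul_nonneg ht0 (neg_nonneg.mpr h1)
  have := mul_nonneg (sub_nonneg.mpr ht1) (neg_nonneg.mpr h2)
  linarith

lemma unit_rot {w w0 : ℂ} (h : Complex.normSq w = Complex.normSq w0) :
    ∃ u : ℂ, Complex.normSq u = 1 ∧ w = u * w0 := by
  by_cases h0 : w0 = 0
  · subst h0
    have : w = 0 := by simpa using h
    exact ⟨1, by simp, by simp [this]⟩
  · refine ⟨w / w0, ?_, by field_simp⟩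
    rw [map_div₀, h, div_self]
    simpa using h0

/-- first lamination step -/
lemma step_one {f : Mat 2 2 → ℝ} (hf : RankOneConvexFun f) {ra rb sa sb t : ℝ}
    (hra : 0 < ra) (hrab : ra < rb) (hsa : 0 < sa) (hsb : 0 < sb)
    (h1 : sb - sa ≤ rb - ra) (h2 : sa - sb ≤ rb - ra) (h3 : rb - ra ≤ sa + sb)
    (hA : ∀ z w : ℂ, Complex.normSq z = ra ^ 2 → Complex.normSq w = sa ^ 2 → f (mkM z w) ≤ 0)
    (hB : ∀ z w : ℂ, Complex.normSq z = rb ^ 2 → Complex.normSq w = sb ^ 2 → f (mkM z w) ≤ 0)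
    (ht0 : 0 ≤ t) (ht1 : t ≤ 1) (z w : ℂ)
    (hz : Complex.normSq z = (t * ra + (1 - t) * rb) ^ 2)
    (hw : Complex.normSq w = t * sa ^ 2 + (1 - t) * sb ^ 2 - t * (1 - t) * (rb - ra) ^ 2) :
    f (mkM z w) ≤ 0 := by
  obtain ⟨k, hk⟩ : ∃ k, 2 * sa * sb * k = sa ^ 2 + sb ^ 2 - (rb - ra) ^ 2 :=
    ⟨(sa ^ 2 + sb ^ 2 - (rb - ra) ^ 2) / (2 * sa * sb), by field_simp⟩
  have hab : 0 < 2 * sa * sb := by positivity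
  have hk1 : k ≤ 1 := by nlinarith [mul_nonneg (sub_nonneg.mpr h1) (sub_nonneg.mpr h2)]
  have hk2 : -1 ≤ k := by nlinarith
  have hq : Real.sqrt (1 - k ^ 2) ^ 2 = 1 - k ^ 2 := Real.sq_sqrt (by nlinarith)
  set q := Real.sqrt (1 - k ^ 2)
  let wa : ℂ := ⟨sa, 0⟩
  let wb : ℂ := ⟨sb * k, sb * q⟩
  have nwa : Complex.normSq wa = sa ^ 2 := by simp [wa, Complex.normSq_apply]; ring
  have nwb : Complex.normSq wb = sb ^ 2 := by
    simp only [wb, Complex.normSq_apply]; linear_combination sb ^ 2 * hq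
  have nwd : Complex.normSq (wa - wb) = (rb - ra) ^ 2 := by
    simp only [wa, wb, Complex.normSq_apply, Complex.sub_re, Complex.sub_im]
    linear_combination sb ^ 2 * hq - hk
  obtain ⟨v, hv, hwv⟩ := unit_rot (w := w) (w0 := t * wa + (1 - t) * wb) (by
    rw [hw]
    simp [wa, wb, Complex.normSq_apply]
    linear_combination (-(1 - t) ^ 2 * sb ^ 2) * hq - t * (1 - t) * hk)
  obtain ⟨u, hu, hzu⟩ := unit_rot (w := z) (w0 := t * (ra : ℂ) + (1 - t) * (rb : ℂ)) (by
    rw [hz]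
    simp [Complex.normSq_apply]
    ring)
  have hu0 : u ≠ 0 := by rintro rfl; simp at hu
  have e1 : z = t * (u * ra) + (1 - t) * (u * rb) := by rw [hzu]; ring
  have e2 : w = t * (v * wa) + (1 - t) * (v * wb) := by rw [hwv]; ring
  rw [e1, e2]
  apply f_comb hf ht0 ht1
  · rw [← mul_sub, ← mul_sub, map_mul, map_mul, hu, hv, nwd]
    rw [← Complex.ofReal_sub, Complex.normSq_ofReal]; ring
  · intro h
    have := mul_left_cancel₀ hu0 h
    have : ra = rb := by exact_mod_cast this
    linarith
  · apply hA
    · rw [map_mul, hu, Complex.normSq_ofReal]; ring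
    · rw [map_mul, hv, nwa]; ring
  · apply hB
    · rw [map_mul, hu, Complex.normSq_ofReal]; ring
    · rw [map_mul, hv, nwb]; ring

/-- second lamination step -/
lemma step_two {f : Mat 2 2 → ℝ} (hf : RankOneConvexFun f) {d R : ℝ}
    (hR : ∀ z w : ℂ, Complex.normSq z = R ^ 2 → Complex.normSq z - Complex.normSq w = d →
      f (mkM z w) ≤ 0)
    (z w : ℂ) (hz : Complex.normSq z ≤ R ^ 2) (hd : Complex.normSq z - Complex.normSq w = d) :
    f (mkM z w) ≤ 0 := by
  rcases hz.eq_or_lt with h | h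
  · exact hR z w h hd
  have hτ : Real.sqrt (R ^ 2 - Complex.normSq z) ^ 2 = R ^ 2 - Complex.normSq z :=
    Real.sq_sqrt (by linarith)
  have hτ0 : 0 < Real.sqrt (R ^ 2 - Complex.normSq z) := Real.sqrt_pos.mpr (by linarith)
  set τ := Real.sqrt (R ^ 2 - Complex.normSq z)
  have hrot : ∀ y : ℂ, ∃ u : ℂ, Complex.normSq u = 1 ∧ y = u * (‖y‖ : ℝ) := fun y =>
    unit_rot (by rw [Complex.normSq_ofReal, Complex.normSq_eq_norm_sq]; ring)
  obtain ⟨u, hu, hzu⟩ := hrot z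
  obtain ⟨v, hv, hwv⟩ := hrot w
  have nz : ‖z‖ ^ 2 = Complex.normSq z := (Complex.normSq_eq_norm_sq z).symm
  have nw : ‖w‖ ^ 2 = Complex.normSq w := (Complex.normSq_eq_norm_sq w).symm
  have hu0 : u ≠ 0 := by rintro rfl; simp at hu
  have key : ∀ (y : ℂ) (r s : ℝ), Complex.normSq y = 1 →
      Complex.normSq (y * ⟨r, s⟩) = r ^ 2 + s ^ 2 := by
    intro y r s hy
    rw [map_mul, hy, Complex.normSq_mk]; ring
  have e : ∀ (y : ℂ) (r : ℝ), y * (r : ℂ) = ((1/2 : ℝ) : ℂ) * (y * (⟨r, τ⟩ : ℂ))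
      + (1 - ((1/2 : ℝ) : ℂ)) * (y * (⟨r, -τ⟩ : ℂ)) := by
    intro y r
    apply Complex.ext <;> simp <;> ring
  have hdiff : ∀ (y : ℂ) (r : ℝ), y * (⟨r, τ⟩ : ℂ) - y * (⟨r, -τ⟩ : ℂ) = y * ⟨0, 2 * τ⟩ := by
    intro y r
    apply Complex.ext <;> simp <;> ring
  rw [hzu, hwv, e u, e v]
  apply f_comb hf (by norm_num) (by norm_num)
  · rw [hdiff, hdiff, key _ _ _ hu, key _ _ _ hv]
  · intro h
    have := mul_left_cancel₀ hu0 h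
    have := congrArg Complex.im this
    simp only at this
    linarith
  · apply hR
    · rw [key _ _ _ hu]; linarith
    · rw [key _ _ _ hu, key _ _ _ hv]; linarith
  · apply hR
    · rw [key _ _ _ hu]; linarith
    · rw [key _ _ _ hu, key _ _ _ hv]; linarith

/-- algebraic description of the region -/
lemma region_iff (a₁ a₂ b₁ b₂ θ : ℝ) (ha₁ : 0 < a₁) (hab : a₁ < b₁) (hba : b₁ < a₂)
    (hb₂ : a₂ < b₂) (hθ : θ = (-(a₁*a₂) + b₁*b₂) / (b₁ + b₂ - a₁ - a₂)) (x y : ℝ)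
    (hx : 0 < x) (hxy : x ≤ y) :
    (a₁ ≤ x ∧ x ≤ y ∧ y ≤ b₂ ∧ a₁ * a₂ / x ≤ y ∧
      (a₁ ≤ x → x ≤ b₁ → y ≤ (-(a₁*a₂) + θ*(a₁+a₂) - θ*x) / (-x + θ)) ∧
      y ≤ b₁ * b₂ / x) ↔
    a₁ * a₂ ≤ x * y ∧ x * y ≤ b₁ * b₂ ∧ θ * (x + y) - x * y ≤ θ * (a₁ + a₂) - a₁ * a₂ := by
  have hD : 0 < b₁ + b₂ - a₁ - a₂ := by linarith
  have hθD : θ * (b₁ + b₂ - a₁ - a₂) = -(a₁*a₂) + b₁*b₂ := by rw [hθ]; field_simp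
  have t1 : b₁ < θ := by
    have : 0 < (θ - b₁) * (b₁ + b₂ - a₁ - a₂) := by
      nlinarith [mul_pos (sub_pos.mpr hab) (sub_pos.mpr hba)]
    linarith [pos_of_mul_pos_left this hD.le]
  have t2 : θ < a₂ := by
    have : 0 < (a₂ - θ) * (b₁ + b₂ - a₁ - a₂) := by
      nlinarith [mul_pos (sub_pos.mpr hb₂) (sub_pos.mpr hba)]
    linarith [pos_of_mul_pos_left this hD.le]
  rw [div_le_iff₀ hx, le_div_iff₀ hx]
  constructor
  · rintro ⟨h1, _, h3, h4, h5, h6⟩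
    refine ⟨by linarith, by linarith, ?_⟩
    rcases le_or_gt x b₁ with h | h
    · have := h5 h1 h
      rw [le_div_iff₀ (by linarith)] at this
      linarith
    · -- x > b₁
      have : (θ - x) * (y - θ) ≤ (θ - b₁) * (b₂ - θ) := by
        have p1 : 0 < (θ - b₁) * (b₂ - θ) := mul_pos (by linarith) (by linarith)
        rcases le_or_gt x θ with g | g
        · rcases le_or_gt y θ with g' | g'
          · nlinarith [mul_nonneg (sub_nonneg.mpr g) (sub_nonneg.mpr g')]
          · apply mul_le_mul <;> linarith
        · nlinarith [mul_pos (sub_pos.mpr g) (sub_pos.mpr (g.trans_le hxy))]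
      nlinarith
  · rintro ⟨h1, h2, h3⟩
    have h3a : (θ - x) * (y - θ) ≤ (θ - a₁) * (a₂ - θ) := by nlinarith
    have h3b : (θ - x) * (y - θ) ≤ (θ - b₁) * (b₂ - θ) := by nlinarith
    have hxa : a₁ ≤ x := by
      by_contra hlt
      push Not at hlt
      have : a₂ < y := by
        by_contra hle
        push Not at hle
        nlinarith
      have : (θ - a₁) * (a₂ - θ) < (θ - x) * (y - θ) := by
        apply mul_lt_mul'' <;> linarith
      linarith
    have hyb : y ≤ b₂ := by
      by_contra hlt
      push Not at hlt
      have : x < b₁ := by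
        by_contra hle
        push Not at hle
        nlinarith
      have : (θ - b₁) * (b₂ - θ) < (θ - x) * (y - θ) := by
        apply mul_lt_mul'' <;> linarith
      linarith
    refine ⟨hxa, hxy, hyb, by linarith, fun _ hxb => ?_, by linarith⟩
    rw [le_div_iff₀ (by linarith)]
    linarith

end Helpers

section Statements

open Metric Set

theorem stmt11 (a₁ a₂ b₁ b₂ θ : ℝ) (ha₁ : 0 < a₁) (hab : a₁ < b₁) (hba : b₁ < a₂)
    (hb₂ : a₂ < b₂) (hθ : θ = (-(a₁*a₂) + b₁*b₂) / (b₁ + b₂ - a₁ - a₂))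
    (E : Set (Mat 2 2))
    (hE : E = {ξ : Mat 2 2 | ((singularValues ξ 0, singularValues ξ 1) = (a₁, a₂) ∨
      (singularValues ξ 0, singularValues ξ 1) = (b₁, b₂)) ∧ 0 < ξ.det})
    (RΛ : Set (ℝ × ℝ))
    (hRΛ : RΛ = {p : ℝ × ℝ | a₁ ≤ p.1 ∧ p.1 ≤ p.2 ∧ p.2 ≤ b₂ ∧
      a₁ * a₂ / p.1 ≤ p.2 ∧
      (a₁ ≤ p.1 → p.1 ≤ b₁ → p.2 ≤ (-(a₁*a₂) + θ*(a₁+a₂) - θ*p.1) / (-p.1 + θ)) ∧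
      p.2 ≤ b₁ * b₂ / p.1}) :
    RcoF E = {ξ : Mat 2 2 | (singularValues ξ 0, singularValues ξ 1) ∈ RΛ ∧ 0 < ξ.det} := by
  have hD : 0 < b₁ + b₂ - a₁ - a₂ := by linarith
  have hθD : θ * (b₁ + b₂ - a₁ - a₂) = -(a₁*a₂) + b₁*b₂ := by rw [hθ]; field_simp
  have hAB : 0 < b₁ * b₂ - a₁ * a₂ := by nlinarith
  have hA0 : 0 < a₁ * a₂ := mul_pos ha₁ (by linarith)
  have hθ0 : 0 < θ := by
    by_contra h
    push Not at h
    nlinarith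
  have hreg : ∀ ξ : Mat 2 2, 0 < ξ.det → ((singularValues ξ 0, singularValues ξ 1) ∈ RΛ ↔
      a₁ * a₂ ≤ ξ.det ∧ ξ.det ≤ b₁ * b₂ ∧
        θ * (2 * ‖zc ξ‖) - ξ.det ≤ θ * (a₁ + a₂) - a₁ * a₂) := by
    intro ξ hd
    obtain ⟨h0, h1, h2, h3⟩ := sv_facts ξ hd
    have hpos : 0 < singularValues ξ 0 := by
      rcases h0.eq_or_lt with h | h
      · rw [← h, zero_mul] at h2; linarith
      · exact h
    rw [hRΛ, ← h2, ← h3]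
    exact region_iff a₁ a₂ b₁ b₂ θ ha₁ hab hba hb₂ hθ _ _ hpos h1
  have hEa : ∀ ξ : Mat 2 2, ξ ∈ E ↔ (ξ.det = a₁ * a₂ ∧ 2 * ‖zc ξ‖ = a₁ + a₂) ∨
      (ξ.det = b₁ * b₂ ∧ 2 * ‖zc ξ‖ = b₁ + b₂) := by
    intro ξ
    rw [hE]
    constructor
    · rintro ⟨h, hd⟩
      rwa [sv_eq_iff ξ hd (by linarith), sv_eq_iff ξ hd (by linarith)] at h
    · intro h
      have hd : 0 < ξ.det := by
        rcases h with h | h <;> rw [h.1] <;> linarith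
      refine ⟨?_, hd⟩
      rwa [sv_eq_iff ξ hd (by linarith), sv_eq_iff ξ hd (by linarith)]
  ext ξ
  constructor
  · intro hξ
    have g1 := hξ _ (roc_det (-1) (a₁ * a₂)) (by
      intro η hη
      rcases (hEa η).mp hη with h | h <;> simp only [h.1] <;> linarith)
    have g2 := hξ _ (roc_det 1 (-(b₁ * b₂))) (by
      intro η hη
      rcases (hEa η).mp hη with h | h <;> simp only [h.1] <;> linarith)
    have g3 := hξ _ (roc_theta θ (-(θ * (a₁ + a₂) - a₁ * a₂)) hθ0.le) (by
      intro η hη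
      rcases (hEa η).mp hη with h | h <;> simp only [h.1, h.2] <;> linarith)
    have hd : 0 < ξ.det := by linarith
    exact ⟨(hreg ξ hd).mpr ⟨by linarith, by linarith, by linarith⟩, hd⟩
  · rintro ⟨hξ, hd⟩ f hf hfE
    obtain ⟨k1, k2, k3⟩ := (hreg ξ hd).mp hξ
    have hnorm : ∀ (z : ℂ) (r : ℝ), 0 ≤ r → Complex.normSq z = r ^ 2 → ‖z‖ = r := by
      intro z r hr h
      rw [Complex.normSq_eq_norm_sq] at h
      exact (sq_eq_sq₀ (norm_nonneg _) hr).mp h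
    have fA : ∀ z w : ℂ, Complex.normSq z = ((a₁ + a₂) / 2) ^ 2 →
        Complex.normSq w = ((a₂ - a₁) / 2) ^ 2 → f (mkM z w) ≤ 0 := by
      intro z w hz hw
      apply hfE
      rw [hEa, det_eq, zc_mk, wc_mk, hnorm z _ (by linarith) hz, hz, hw]
      left; constructor <;> ring
    have fB : ∀ z w : ℂ, Complex.normSq z = ((b₁ + b₂) / 2) ^ 2 →
        Complex.normSq w = ((b₂ - b₁) / 2) ^ 2 → f (mkM z w) ≤ 0 := by
      intro z w hz hw
      apply hfE
      rw [hEa, det_eq, zc_mk, wc_mk, hnorm z _ (by linarith) hz, hz, hw]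
      right; constructor <;> ring
    obtain ⟨t, ht⟩ : ∃ t, t * (b₁ * b₂ - a₁ * a₂) = b₁ * b₂ - ξ.det :=
      ⟨(b₁ * b₂ - ξ.det) / (b₁ * b₂ - a₁ * a₂), by field_simp⟩
    have ht0 : 0 ≤ t := by
      by_contra h
      push Not at h
      nlinarith
    have ht1 : t ≤ 1 := by
      by_contra h
      push Not at h
      nlinarith
    have hθR : θ * (2 * (t * ((a₁ + a₂) / 2) + (1 - t) * ((b₁ + b₂) / 2)))
        = θ * (a₁ + a₂) - a₁ * a₂ + ξ.det := by
      linear_combination (1 - t) * hθD - ht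
    rw [← mk_eta ξ]
    refine step_two hf (d := ξ.det)
      (R := t * ((a₁ + a₂) / 2) + (1 - t) * ((b₁ + b₂) / 2)) ?_ _ _ ?_ (det_eq ξ).symm
    · intro z w hz hzw
      refine step_one hf (by linarith) (by linarith) (by linarith) (by linarith)
        (by linarith) (by linarith) (by linarith) fA fB ht0 ht1 z w hz ?_
      linear_combination hz - hzw - ht
    · rw [Complex.normSq_eq_norm_sq]
      apply pow_le_pow_left₀ (norm_nonneg _)
      have : θ * ‖zc ξ‖ ≤ θ * (t * ((a₁ + a₂) / 2) + (1 - t) * ((b₁ + b₂) / 2)) := by linarith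
      exact le_of_mul_le_mul_left this hθ0

end Statements
end
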